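/- arXiv:math/0612222 — 2 statements merged into one kernel-verified Lean document; each statement's English description precedes it below -/
import Mathlib

section
/- Improved Shenitzer theorem: let G = F₁ *_⟨t⟩ F₂ with F₁, F₂ free of finite ranks n and m and t a nontrivial element of both factors. If t is indivisible (not a proper power) in at least one of F₁, F₂, and G admits a surjection onto a free group of rank n + m − 1, then G is free (of rank n + m − 1). -/
/-- `x` is indivisible in the group `F`: whenever `x = h^k` then `k = ±1`. -/
def Indivisible {F : Type} [Group F] (x : F) : Prop :=
  ∀ (h : F) (k : ℤ), h ^ k = x → k = 1 ∨ k = -1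

/-- The amalgamated free product `F₁ *_{t₁ = t₂} F₂` of two free groups over
the cyclic subgroups generated by `t₁` and `t₂`. -/
abbrev Amalgam {n m : ℕ} (t₁ : FreeGroup (Fin n)) (t₂ : FreeGroup (Fin m)) : Type :=
  (Monoid.Coprod (FreeGroup (Fin n)) (FreeGroup (Fin m))) ⧸
    Subgroup.normalClosure {Monoid.Coprod.inl t₁ * (Monoid.Coprod.inr t₂)⁻¹}

namespace Shen

/-- the regular wreath product of `p`-groups is a `p`-group -/
theorem isPGroup_wreath {p : ℕ} {D Q : Type} [Group D] [Group Q]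
    (hD : IsPGroup p D) (hDf : Finite D) (hp : p.Prime)
    [Finite Q] (hQ : IsPGroup p Q) : IsPGroup p (D ≀ᵣ Q) := by
  haveI := Fact.mk hp
  obtain ⟨a, ha⟩ := IsPGroup.iff_card.1 hD
  obtain ⟨b, hb⟩ := IsPGroup.iff_card.1 hQ
  refine IsPGroup.of_card (n := a * p ^ b + b) ?_
  rw [RegularWreathProduct.card, ha, hb, pow_add, pow_mul]

theorem isPGroup_zmod (p : ℕ) [Fact p.Prime] : IsPGroup p (Multiplicative (ZMod p)) :=
  IsPGroup.of_card (n := 1) (by simp)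

abbrev Wr (p : ℕ) (P : Type) := (Multiplicative (ZMod p)) ≀ᵣ P

theorem isPGroup_Wr {p : ℕ} [Fact p.Prime] {P : Type} [Group P] [Finite P] (hP : IsPGroup p P) :
    IsPGroup p (Wr p P) :=
  isPGroup_wreath (isPGroup_zmod p) inferInstance Fact.out hP

open Classical in
/-- Lift of `f : FreeGroup X → P` to the wreath product, marking the edge at `1` labelled `x₀`. -/
noncomputable def edgeHom (p : ℕ) {X P : Type} [Group P] (f : FreeGroup X →* P) (x₀ : X) :
    FreeGroup X →* Wr p P :=
  FreeGroup.lift fun x =>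
    ⟨fun g => if x = x₀ ∧ g = 1 then Multiplicative.ofAdd 1 else 1, f (FreeGroup.of x)⟩

theorem edgeHom_right (p : ℕ) {X P : Type} [Group P] (f : FreeGroup X →* P) (x₀ : X)
    (g : FreeGroup X) : (edgeHom p f x₀ g).right = f g := by
  have : (RegularWreathProduct.rightHom).comp (edgeHom p f x₀) = f := by
    ext x
    simp [edgeHom]
  exact DFunLike.congr_fun this g

/-- sum of the function component over a right coset of `H` -/
noncomputable def cosetSum {p : ℕ} {P : Type} [Group P] [Finite P] (H : Subgroup P) (g₀ : P)
    (w : Wr p P) : ZMod p :=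
  haveI := Fintype.ofFinite H
  ∑ h : H, Multiplicative.toAdd (w.left (h * g₀))

theorem cosetSum_mul {p : ℕ} {P : Type} [Group P] [Finite P] (H : Subgroup P) (g₀ : P)
    (a b : Wr p P) :
    cosetSum H g₀ (a * b) = cosetSum H g₀ a + haveI := Fintype.ofFinite H
      ∑ h : H, Multiplicative.toAdd (b.left (a.right⁻¹ * (h * g₀))) := by
  simp [cosetSum, Finset.sum_add_distrib]

theorem cosetSum_mul_of_mem {p : ℕ} {P : Type} [Group P] [Finite P] (H : Subgroup P) (g₀ : P)
    (a b : Wr p P) (ha : a.right ∈ H) :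
    cosetSum H g₀ (a * b) = cosetSum H g₀ a + cosetSum H g₀ b := by
  rw [cosetSum_mul]
  congr 1
  unfold cosetSum
  letI := Fintype.ofFinite H
  refine Fintype.sum_equiv (Equiv.mulLeft (⟨a.right, ha⟩⁻¹ : H)) _ _ ?_
  intro h
  simp [mul_assoc]

theorem cosetSum_one {p : ℕ} {P : Type} [Group P] [Finite P] (H : Subgroup P) (g₀ : P) :
    cosetSum H g₀ (1 : Wr p P) = 0 := by
  simp [cosetSum]

theorem cosetSum_pow {p : ℕ} {P : Type} [Group P] [Finite P] (H : Subgroup P) (g₀ : P)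
    (a : Wr p P) (ha : a.right ∈ H) (k : ℕ) :
    cosetSum H g₀ (a ^ k) = k * cosetSum H g₀ a := by
  induction k with
  | zero => simp [cosetSum_one]
  | succ k ih =>
    rw [pow_succ', cosetSum_mul_of_mem H g₀ a _ ha, ih]
    push_cast; ring

open Classical in
theorem sum_ind {p : ℕ} {P : Type} [Group P] (H : Subgroup P) [Fintype H] (v g₀ : P) :
    (∑ h : H, if v⁻¹ * (h * g₀) = 1 then (1 : ZMod p) else 0) = if v * g₀⁻¹ ∈ H then 1 else 0 := by
  split_ifs with hv
  · rw [Finset.sum_eq_single (⟨v * g₀⁻¹, hv⟩ : H)]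
    · simp
    · intro b _ hb
      rw [if_neg]
      intro h
      apply hb
      ext
      simp only
      rw [inv_mul_eq_one.1 h]; group
    · simp
  · apply Finset.sum_eq_zero
    intro h _
    rw [if_neg]
    intro h'
    apply hv
    rw [inv_mul_eq_one.1 h']
    simp

open Classical in
/-- contribution of a letter -/
theorem cosetSum_letter (p : ℕ) {X P : Type} [Group P] [Finite P] (f : FreeGroup X →* P) (x₀ : X)
    (H : Subgroup P) (g₀ : P) (v : FreeGroup X) (x : X) (b : Bool) :
    cosetSum H g₀ (edgeHom p f x₀ (v * FreeGroup.mk [(x, b)])) =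
      cosetSum H g₀ (edgeHom p f x₀ v) +
      (if b = true then (if x = x₀ ∧ f v * g₀⁻¹ ∈ H then 1 else 0)
       else (if x = x₀ ∧ f (v * FreeGroup.mk [(x, b)]) * g₀⁻¹ ∈ H then -1 else 0)) := by
  classical
  letI := Fintype.ofFinite H
  rw [map_mul, cosetSum_mul, edgeHom_right]
  congr 1
  cases b
  · have : (FreeGroup.mk [(x, false)] : FreeGroup X) = (FreeGroup.of x)⁻¹ := rfl
    rw [this, map_inv]
    by_cases hx : x = x₀
    · have h2 := sum_ind (p := p) H (f v * (f (FreeGroup.of x))⁻¹) g₀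
      simp only [mul_inv_rev, inv_inv] at h2
      simp only [edgeHom, RegularWreathProduct.inv_left, FreeGroup.lift_apply_of, hx, true_and,
        Pi.inv_apply, toAdd_inv, Finset.sum_neg_distrib, map_mul, map_inv]
      simp only [hx, mul_assoc] at h2
      simp only [apply_ite Multiplicative.toAdd, toAdd_ofAdd, toAdd_one]
      rw [h2]
      simp [mul_assoc]
      split_ifs <;> simp
    · simp [edgeHom, hx]
  · have : (FreeGroup.mk [(x, true)] : FreeGroup X) = (FreeGroup.of x) := rfl
    rw [this]
    by_cases hx : x = x₀
    · have h2 := sum_ind (p := p) H (f v) g₀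
      simp only [edgeHom, FreeGroup.lift_apply_of, hx, true_and,
        apply_ite Multiplicative.toAdd, toAdd_ofAdd, toAdd_one]
      rw [h2]
      simp
    · simp [edgeHom, hx]

/-- A simple closed reduced path crosses its first edge exactly once. -/
theorem edge_lemma (p : ℕ) [Fact p.Prime] {X P : Type} [Group P] [Finite P]
    (f : FreeGroup X →* P)
    (H : Subgroup P) (x : X) (b : Bool) (L : List (X × Bool))
    (hred : FreeGroup.IsReduced ((x, b) :: L))
    (hsimple : ∀ i j, i < j → j < ((x, b) :: L).length →
      f (FreeGroup.mk (((x, b) :: L).take i)) * (f (FreeGroup.mk (((x, b) :: L).take j)))⁻¹ ∉ H)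
    (hclosed : f (FreeGroup.mk ((x, b) :: L)) ∈ H) :
    ∃ g₀, cosetSum H g₀ (edgeHom p f x (FreeGroup.mk ((x, b) :: L))) ≠ 0 := by
  classical
  set W := (x, b) :: L with hW
  set v : ℕ → P := fun i => f (FreeGroup.mk (W.take i)) with hv
  refine ⟨if b = true then 1 else v 1, ?_⟩
  set g₀ : P := if b = true then 1 else v 1 with hg₀
  have hstep : ∀ i, (hi : i < W.length) → FreeGroup.mk (W.take (i+1)) =
      FreeGroup.mk (W.take i) * FreeGroup.mk [((W[i]).1, (W[i]).2)] := by
    intro i hi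
    rw [FreeGroup.mul_mk, List.take_succ_eq_append_getElem hi]
  have hne : (1 : ZMod p) ≠ 0 := one_ne_zero
  -- E(i) constant for i ≥ 1
  have key : ∀ i, 1 ≤ i → i ≤ W.length →
      cosetSum H g₀ (edgeHom p f x (FreeGroup.mk (W.take i))) = if b = true then 1 else -1 := by
    intro i hi1
    induction i, hi1 using Nat.le_induction with
    | base =>
      intro _
      have h1 : FreeGroup.mk (W.take 1) = 1 * FreeGroup.mk [(x, b)] := by simp [hW]
      have h3 : v 1 = f (FreeGroup.mk [(x, b)]) := by simp [hv, hW]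
      rw [h1, cosetSum_letter]
      simp only [map_one, cosetSum_one, zero_add, one_mul, true_and]
      cases b
      · simp [hg₀, h3, H.one_mem]
      · simp [hg₀, H.one_mem]
    | succ i hi1 ih =>
      intro hi2
      have hi : i < W.length := hi2
      rw [hstep i hi, cosetSum_letter, ih hi.le]
      rw [← hstep i hi]
      -- reducedness
      have hredi : ∀ (j : ℕ) (hj : j + 1 < W.length), (W[j]).1 = (W[j+1]).1 → (W[j]).2 = (W[j+1]).2 := by
        intro j hj
        have := List.isChain_iff_getElem.1 hred j hj
        exact this
      have hW0 : W[0]'(by simp [hW]) = (x, b) := by simp [hW]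
      have hvl : v W.length ∈ H := by simpa [hv] using hclosed
      have hs : ∀ i j, i < j → j < W.length → v i * (v j)⁻¹ ∉ H := hsimple
      have hv0 : v 0 = 1 := by
        have : FreeGroup.mk ([] : List (X × Bool)) = 1 := rfl
        simp [hv, this]
      have hstepv : ∀ i, (hi : i < W.length) → v (i+1) = v i * f (FreeGroup.mk [((W[i]).1, (W[i]).2)]) := by
        intro i hi
        simp only [hv]
        rw [hstep i hi, map_mul]
      have hsym : ∀ i j, i < j → j < W.length → v j * (v i)⁻¹ ∉ H := by
        intro i j hij hj hm
        apply hs i j hij hj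
        simpa using H.inv_mem hm
      change (_ + if _ then if _ ∧ v i * g₀⁻¹ ∈ H then _ else _ else if _ ∧ v (i+1) * g₀⁻¹ ∈ H then _ else _) = _
      have hzero : (if (W[i]).2 = true then if (W[i]).1 = x ∧ v i * g₀⁻¹ ∈ H then (1 : ZMod p) else 0
        else if (W[i]).1 = x ∧ v (i+1) * g₀⁻¹ ∈ H then -1 else 0) = 0 := by
        by_cases hb : b = true
        · have hg : g₀ = 1 := by simp [hg₀, hb]
          rw [hg]
          have h10 : v i ∉ H := by
            have := hsym 0 i (by omega) hi
            simpa [hv0] using this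
          simp only [inv_one, mul_one]
          by_cases hbi : (W[i]).2 = true
          · simp [hbi, h10]
          · simp only [hbi, h10]
            by_cases hxi : (W[i]).1 = x
            · have : v (i+1) ∉ H := by
                intro hm
                -- then v i ∈ H v 1
                have e1 := hstepv i hi
                have e2 := hstepv 0 (by omega)
                simp only [hW0, hv0, one_mul] at e2
                simp only [Bool.not_eq_true] at hbi
                rw [hxi, hbi] at e1
                have e3 : f (FreeGroup.mk [(x, false)]) = (v 1)⁻¹ := by
                  simp only [zero_add] at e2
                  rw [e2, hb, ← map_inv]; rfl
                rw [e3] at e1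
                rw [e1] at hm
                by_cases hi1' : i = 1
                · subst hi1'
                  have := hredi 0 hi (by simp [hW0, hxi])
                  simp [hW0, hb, hbi] at this
                · exact hsym 1 i (by omega) hi hm
              simp [this]
            · simp [hxi]
        · have hg : g₀ = v 1 := by simp [hg₀, hb]
          rw [hg]
          have hlast : v (i+1) * (v 1)⁻¹ ∉ H := by
            rcases Nat.lt_or_ge (i+1) W.length with h | h
            · exact hsym 1 (i+1) (by omega) h
            · have : i + 1 = W.length := by omega
              rw [this]
              intro hm
              have := hs 0 1 (by omega) (by omega)
              rw [hv0] at this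
              apply this
              have := H.mul_mem (H.inv_mem hvl) hm
              simpa using this
          simp only [hlast]
          by_cases hbi : (W[i]).2 = true
          · by_cases hxi : (W[i]).1 = x
            · have : v i * (v 1)⁻¹ ∉ H := by
                by_cases hi1' : i = 1
                · subst hi1'
                  have := hredi 0 hi (by simp [hW0, hxi])
                  simp only [hW0, hbi] at this
                  exact absurd this hb
                · exact hsym 1 i (by omega) hi
              simp [this]
            · simp [hxi]
          · simp [hbi]
      rw [hzero, add_zero]
  have h := key W.length (by simp [hW]) le_rfl
  rw [List.take_length] at h
  rw [h]
  split_ifs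
  · exact hne
  · exact neg_ne_zero.2 hne

/-- Free groups are residually finite-`p`. -/
theorem resP (p : ℕ) [Fact p.Prime] {X : Type} (g : FreeGroup X) (hg : g ≠ 1) :
    ∃ (P : Type) (_ : Group P) (_ : Finite P) (_ : IsPGroup p P) (f : FreeGroup X →* P),
      f g ≠ 1 := by
  classical
  set W := g.toWord with hW
  have hred : FreeGroup.IsReduced W := FreeGroup.isReduced_toWord
  have hlen : 0 < W.length := by
    rw [List.length_pos_iff]
    intro h
    exact hg (FreeGroup.toWord_eq_nil_iff.1 h)
  have hmk : FreeGroup.mk W = g := FreeGroup.mk_toWord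
  by_contra hcon
  push Not at hcon
  let K : ∀ (P : Type) [Group P] (f : FreeGroup X →* P), Finset (ℕ × ℕ) := fun P _ f =>
    ((Finset.range (W.length + 1)) ×ˢ (Finset.range (W.length + 1))).filter fun ij =>
      ij.1 < ij.2 ∧ f (FreeGroup.mk (W.take ij.1)) = f (FreeGroup.mk (W.take ij.2))
  have hK : ∀ (P : Type) [Group P] (f : FreeGroup X →* P) (i j : ℕ), (i, j) ∈ K P f ↔
      i < j ∧ j ≤ W.length ∧ f (FreeGroup.mk (W.take i)) = f (FreeGroup.mk (W.take j)) := by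
    intro P _ f i j
    simp only [K, Finset.mem_filter, Finset.mem_product, Finset.mem_range]
    constructor
    · rintro ⟨⟨_, h2⟩, h3, h4⟩; exact ⟨h3, by omega, h4⟩
    · rintro ⟨h3, h2, h4⟩; exact ⟨⟨by omega, by omega⟩, h3, h4⟩
  have main : ∀ N : ℕ, ∀ (P : Type) [Group P] [Finite P] (_ : IsPGroup p P) (f : FreeGroup X →* P),
      (K P f).card = N → False := by
    intro N
    induction N using Nat.strong_induction_on with
    | _ N ih =>
    intro P _ _ hP f hN
    have h0 : (0, W.length) ∈ K P f := by
      rw [hK]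
      refine ⟨hlen, le_rfl, ?_⟩
      rw [List.take_length, hmk, hcon P _ inferInstance hP f]
      exact map_one f
    -- minimal coincidence
    have hex : ∃ d, ∃ i, (i, i + d) ∈ K P f := ⟨W.length, 0, by simpa using h0⟩
    obtain ⟨i, hi⟩ := Nat.find_spec hex
    set d := Nat.find hex with hd
    have hmin : ∀ d' < d, ∀ i, (i, i + d') ∉ K P f := by
      intro d' hd' i' hi'
      exact Nat.find_min hex hd' ⟨i', hi'⟩
    have hi' := (hK P f i (i+d)).1 hi
    have hdpos : 0 < d := by omega
    -- subword
    set V := (W.drop i).take d with hV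
    have hVlen : V.length = d := by simp [hV]; omega
    have htake : ∀ k ≤ d, FreeGroup.mk (W.take (i + k)) = FreeGroup.mk (W.take i) * FreeGroup.mk (V.take k) := by
      intro k hk
      rw [FreeGroup.mul_mk, hV, List.take_take, min_eq_left hk, List.take_add]
    have hVred : FreeGroup.IsReduced V := List.IsChain.take (List.IsChain.drop hred i) d
    obtain ⟨⟨x, b⟩, L, hVL⟩ : ∃ a L, V = a :: L := by
      cases hVc : V with
      | nil => rw [hVc] at hVlen; simp at hVlen; omega
      | cons a L => exact ⟨a, L, rfl⟩
    have hcl : f (FreeGroup.mk V) = 1 := by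
      have := htake d le_rfl
      have h2 := hi'.2.2
      rw [this, map_mul] at h2
      have h3 : V.take d = V := by rw [← hVlen, List.take_length]
      rw [h3] at h2
      simpa using h2
    have hsim : ∀ a b, a < b → b < V.length →
      f (FreeGroup.mk (V.take a)) * (f (FreeGroup.mk (V.take b)))⁻¹ ∉ (⊥ : Subgroup P) := by
      intro a b hab hb hm
      rw [Subgroup.mem_bot, mul_inv_eq_one] at hm
      apply hmin (b - a) (by omega) (i + a)
      rw [hK]
      refine ⟨by omega, by omega, ?_⟩
      have : i + a + (b - a) = i + b := by omega
      rw [this, htake a (by omega), htake b (by omega), map_mul, map_mul, hm]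
    rw [hVL] at hVred hsim hcl
    obtain ⟨g₀, hg₀⟩ := edge_lemma p f ⊥ x b L hVred hsim (by rw [hcl]; exact Subgroup.one_mem _)
    have hsub : K _ (edgeHom p f x) ⊂ K P f := by
      rw [Finset.ssubset_iff_of_subset]
      · refine ⟨(i, i+d), hi, ?_⟩
        rw [hK]
        rintro ⟨_, _, h⟩
        rw [htake d le_rfl, map_mul] at h
        have h3 : V.take d = V := by rw [← hVlen, List.take_length]
        rw [h3, left_eq_mul, hVL] at h
        rw [h] at hg₀
        exact hg₀ (cosetSum_one _ _)
      · rintro ⟨a, b⟩ hab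
        rw [hK] at hab ⊢
        refine ⟨hab.1, hab.2.1, ?_⟩
        have := congrArg RegularWreathProduct.right hab.2.2
        simpa only [edgeHom_right] using this
    exact ih _ (hN ▸ Finset.card_lt_card hsub) _ (isPGroup_Wr hP) _ rfl
  exact main _ PUnit (IsPGroup.of_subsingleton _ _) 1 rfl

end Shen

namespace Shen

def PDense (p : ℕ) {F : Type} [Group F] (S : Set F) : Prop :=
  ∀ χ : F →* Multiplicative (ZMod p), (∀ s ∈ S, χ s = 1) → χ = 1

theorem exists_char {p : ℕ} [Fact p.Prime] {D : Type} [Group D] [Finite D] (hD : IsPGroup p D)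
    (K : Subgroup D) (hK : K ≠ ⊤) :
    ∃ χ : D →* Multiplicative (ZMod p), (∀ s ∈ K, χ s = 1) ∧ χ ≠ 1 := by
  obtain ⟨M, hM, hKM⟩ := (eq_top_or_exists_le_coatom K).resolve_left hK
  have hnil : Group.IsNilpotent D := hD.isNilpotent
  have hN : M.Normal := Subgroup.NormalizerCondition.normal_of_coatom M (Group.normalizerCondition_of_isNilpotent) hM
  have hQ : IsPGroup p (D ⧸ M) := hD.to_quotient M
  have hnt : Nontrivial (D ⧸ M) := by
    rw [← not_subsingleton_iff_nontrivial]
    intro h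
    exact hM.1 (QuotientGroup.subgroup_eq_top_of_subsingleton M h)
  have hdvd : p ∣ Nat.card (D ⧸ M) := by
    obtain ⟨k, hk⟩ := IsPGroup.iff_card.1 hQ
    rw [hk]
    refine dvd_pow_self p ?_
    rintro rfl
    rw [pow_zero] at hk
    have := Finite.one_lt_card (α := D ⧸ M)
    omega
  obtain ⟨q, hq⟩ := exists_prime_orderOf_dvd_card' p hdvd
  have htop : Subgroup.zpowers q = ⊤ := by
    have h1 : M < (Subgroup.zpowers q).comap (QuotientGroup.mk' M) := by
      obtain ⟨d, hd⟩ := QuotientGroup.mk'_surjective M q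
      refine lt_of_le_of_ne ?_ ?_
      · intro x hx
        have : (QuotientGroup.mk' M) x = 1 := by simpa using hx
        rw [Subgroup.mem_comap, this]
        exact Subgroup.one_mem _
      · intro h
        have hd' : d ∈ M := by
          rw [h, Subgroup.mem_comap, hd]; exact Subgroup.mem_zpowers q
        have : (QuotientGroup.mk' M) d = 1 := by simpa using hd'
        rw [hd] at this
        rw [this, orderOf_one] at hq
        exact (Fact.out : p.Prime).one_lt.ne hq
    have h2 := hM.2 _ h1
    rw [eq_top_iff]
    intro x _
    obtain ⟨d, rfl⟩ := QuotientGroup.mk'_surjective M x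
    have : d ∈ (⊤ : Subgroup D) := trivial
    rw [← h2] at this
    exact this
  have hcard : Nat.card (D ⧸ M) = p := by
    rw [← hq, ← Nat.card_zpowers, htop]; simp
  let e : (D ⧸ M) ≃* Multiplicative (ZMod p) :=
    mulEquivOfPrimeCardEq (p := p) hcard (by simp)
  refine ⟨e.toMonoidHom.comp (QuotientGroup.mk' M), ?_, ?_⟩
  · intro s hs
    have : (QuotientGroup.mk' M) s = 1 := by simpa using hKM hs
    simp only [MonoidHom.comp_apply, this, map_one]
  · intro h
    apply hM.1
    rw [eq_top_iff]
    intro x _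
    have h1 := DFunLike.congr_fun h x
    simp only [MonoidHom.comp_apply, MonoidHom.one_apply] at h1
    have h2 : (QuotientGroup.mk' M) x = 1 := e.injective (by rw [map_one]; exact h1)
    simpa using h2

theorem PDense.ext {p : ℕ} [Fact p.Prime] {F : Type} [Group F] {S : Set F} (hS : PDense p S)
    {P : Type} [Group P] [Finite P] (hP : IsPGroup p P) (f g : F →* P)
    (hfg : ∀ s ∈ S, f s = g s) : f = g := by
  have hPP : IsPGroup p (P × P) := by
    obtain ⟨a, ha⟩ := IsPGroup.iff_card.1 hP
    exact IsPGroup.of_card (n := a + a) (by rw [Nat.card_prod, ha, pow_add])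
  let φ : F →* P × P := f.prod g
  have hD : IsPGroup p φ.range := hPP.to_subgroup _
  let E : Subgroup φ.range := MonoidHom.eqLocus ((MonoidHom.fst P P).comp φ.range.subtype)
    ((MonoidHom.snd P P).comp φ.range.subtype)
  by_cases hE : E = ⊤
  · ext x
    have : (⟨φ x, ⟨x, rfl⟩⟩ : φ.range) ∈ E := by rw [hE]; trivial
    exact this
  · obtain ⟨χ, h1, h2⟩ := exists_char hD E hE
    exfalso
    have := hS (χ.comp φ.rangeRestrict) (by
      intro s hs
      exact h1 _ (hfg s hs))
    apply h2
    ext ⟨x, y, rfl⟩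
    exact congrArg Multiplicative.toAdd (DFunLike.congr_fun this y)

instance finite_hom {X P : Type} [Finite X] [Group P] [Finite P] : Finite (FreeGroup X →* P) :=
  Finite.of_equiv (X → P) FreeGroup.lift

theorem card_hom (X P : Type) [Fintype X] [Group P] [Finite P] :
    Nat.card (FreeGroup X →* P) = Nat.card P ^ Fintype.card X := by
  rw [← Nat.card_congr (FreeGroup.lift (α := X) (β := P)), Nat.card_fun, Nat.card_eq_fintype_card (α := X)]

theorem card_pos' (P : Type) [Group P] [Finite P] : 0 < Nat.card P := Nat.card_pos

theorem lemmaE {p : ℕ} [Fact p.Prime] {Z ι : Type} [Fintype Z] [Fintype ι] (z : ι → FreeGroup Z)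
    (hcard : Fintype.card ι = Fintype.card Z) (hz : PDense p (Set.range z))
    {P : Type} [Group P] [Finite P] (hP : IsPGroup p P) (v : ι → P) :
    ∃ f : FreeGroup Z →* P, ∀ i, f (z i) = v i := by
  have hinj : Function.Injective (fun (f : FreeGroup Z →* P) (i : ι) => f (z i)) := by
    intro f g h
    refine hz.ext hP f g ?_
    rintro _ ⟨i, rfl⟩
    exact congrFun h i
  have := hinj.bijective_of_nat_card_le (by
    rw [card_hom, Nat.card_fun, Nat.card_eq_fintype_card (α := ι), hcard])
  obtain ⟨f, hf⟩ := this.2 v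
  exact ⟨f, fun i => congrFun hf i⟩

theorem removal {p : ℕ} [Fact p.Prime] {Z ι : Type} [Fintype Z] [Fintype ι] (z : ι → FreeGroup Z)
    (hcard : Fintype.card ι = Fintype.card Z + 1) (hz : PDense p (Set.range z)) :
    ∃ i, PDense p {g | ∃ j, j ≠ i ∧ z j = g} := by
  classical
  by_contra hcon
  have h : ∀ i, ∃ χ : FreeGroup Z →* Multiplicative (ZMod p), (∀ j, j ≠ i → χ (z j) = 1) ∧ χ ≠ 1 := by
    intro i
    by_contra h
    apply hcon
    refine ⟨i, ?_⟩
    intro χ hχ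
    by_contra h1
    exact h ⟨χ, fun j hj => hχ _ ⟨j, hj, rfl⟩, h1⟩
  choose χ hχ hχ1 using h
  have hne : ∀ i, χ i (z i) ≠ 1 := by
    intro i hi
    apply hχ1 i
    apply hz
    rintro _ ⟨j, rfl⟩
    by_cases hj : j = i
    · rw [hj, hi]
    · exact hχ i j hj
  have hord : ∀ i, orderOf (χ i (z i)) = p := by
    intro i
    refine orderOf_eq_prime ?_ (hne i)
    have := pow_card_eq_one' (x := χ i (z i))
    rwa [Nat.card_eq_fintype_card, Fintype.card_multiplicative, ZMod.card] at this
  let Θ : (ι → Fin p) → (FreeGroup Z →* Multiplicative (ZMod p)) := fun c => ∏ i, χ i ^ (c i).val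
  have hinj : Function.Injective Θ := by
    intro c d hcd
    funext i
    have h1 : ∀ c, Θ c (z i) = χ i (z i) ^ (c i).val := by
      intro c
      simp only [Θ, MonoidHom.finsetProd_apply]
      rw [Finset.prod_eq_single i]
      · rfl
      · intro b _ hb
        change (χ b (z i)) ^ _ = 1
        rw [hχ b i (Ne.symm hb), one_pow]
      · simp
    have h2 : χ i (z i) ^ (c i).val = χ i (z i) ^ (d i).val := by rw [← h1, ← h1, hcd]
    have := pow_injOn_Iio_orderOf (by simp [hord]) (by simp [hord]) h2
    exact Fin.ext this
  have := Nat.card_le_card_of_injective Θ hinj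
  rw [card_hom, Nat.card_fun, Nat.card_eq_fintype_card (α := ι), hcard] at this
  simp only [Nat.card_eq_fintype_card, Fintype.card_fin, Fintype.card_multiplicative, ZMod.card] at this
  have h2 := (Nat.pow_le_pow_iff_right (Fact.out : p.Prime).one_lt).1 this
  omega

theorem removalE {p : ℕ} [Fact p.Prime] {Z ι : Type} [Fintype Z] [Fintype ι] (z : ι → FreeGroup Z)
    (hcard : Fintype.card ι = Fintype.card Z + 1) (i : ι) (hi : PDense p {g | ∃ j, j ≠ i ∧ z j = g})
    {P : Type} [Group P] [Finite P] (hP : IsPGroup p P) (v : ι → P) :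
    ∃ f : FreeGroup Z →* P, ∀ j, j ≠ i → f (z j) = v j := by
  classical
  obtain ⟨f, hf⟩ := lemmaE (p := p) (ι := {j // j ≠ i}) (fun j => z j) (by
    rw [Fintype.card_subtype_compl, hcard]; simp) (by
    convert hi using 1
    ext g; simp) hP (fun j => v j)
  exact ⟨f, fun j hj => hf ⟨j, hj⟩⟩

theorem PDense.of_closure (p : ℕ) {F : Type} [Group F] {S : Set F} (h : Subgroup.closure S = ⊤) :
    PDense p S := by
  intro χ hχ
  exact MonoidHom.eq_of_eqOn_dense h hχ

theorem PDense.mono {p : ℕ} {F : Type} [Group F] {S T : Set F} (hS : PDense p S) (h : ∀ s ∈ S, s ∈ T) :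
    PDense p T := fun χ hχ => hS χ fun s hs => hχ s (h s hs)

/-- rank of the image -/
theorem rkLemma {X Z : Type} [Fintype X] (φ : FreeGroup X →* FreeGroup Z) :
    ∃ (a : ℕ) (_ : FreeGroup (Fin a) ≃* φ.range), a ≤ Fintype.card X ∧
      (a = Fintype.card X → Function.Injective φ) := by
  classical
  haveI : Fact (Nat.Prime 2) := ⟨Nat.prime_two⟩
  haveI hfree : IsFreeGroup φ.range := inferInstance
  let Γ := IsFreeGroup.Generators φ.range
  let e : FreeGroup Γ ≃* φ.range := IsFreeGroup.mulEquiv φ.range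
  have hpre : ∀ (P : Type) [Group P], Function.Injective
      (fun (f : FreeGroup Γ →* P) => (f.comp (e.symm.toMonoidHom.comp φ.rangeRestrict) : FreeGroup X →* P)) := by
    intro P _ f g h
    have hs : Function.Surjective (e.symm.toMonoidHom.comp φ.rangeRestrict) :=
      e.symm.surjective.comp φ.rangeRestrict_surjective
    exact (MonoidHom.cancel_right hs).1 h
  have hfin : Finite Γ := by
    have : Finite (FreeGroup Γ →* Multiplicative (ZMod 2)) :=
      Finite.of_injective _ (hpre _)
    have h2 : Finite (Γ → Multiplicative (ZMod 2)) := Finite.of_equiv _ (FreeGroup.lift (α := Γ)).symm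
    refine Finite.of_injective (fun (x : Γ) (y : Γ) => if x = y then Multiplicative.ofAdd (1 : ZMod 2) else 1) ?_
    intro x y h
    by_contra hxy
    have := congrFun h x
    simp [Ne.symm hxy] at this
  letI := Fintype.ofFinite Γ
  let e2 : FreeGroup (Fin (Fintype.card Γ)) ≃* φ.range :=
    (FreeGroup.freeGroupCongr (Fintype.equivFin Γ).symm).trans e
  refine ⟨Fintype.card Γ, e2, ?_, ?_⟩
  · have := Nat.card_le_card_of_injective _ (hpre (Multiplicative (ZMod 2)))
    rw [card_hom, card_hom] at this
    exact (Nat.pow_le_pow_iff_right (by simp)).1 this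
  · intro hcard
    rw [injective_iff_map_eq_one]
    intro g hg
    by_contra hg1
    obtain ⟨P, _, _, hP, f, hf⟩ := resP 2 g hg1
    have hb := (hpre P).bijective_of_nat_card_le (by rw [card_hom, card_hom, hcard])
    obtain ⟨f', hf'⟩ := hb.2 f
    apply hf
    rw [← hf']
    have : φ.rangeRestrict g = 1 := Subtype.ext hg
    simp [this]

end Shen

namespace Shen
open scoped commutatorElement

theorem isPGroup_prod {p : ℕ} [Fact p.Prime] {P Q : Type} [Group P] [Group Q] [Finite P] [Finite Q]
    (hP : IsPGroup p P) (hQ : IsPGroup p Q) : IsPGroup p (P × Q) := by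
  obtain ⟨a, ha⟩ := IsPGroup.iff_card.1 hP
  obtain ⟨b, hb⟩ := IsPGroup.iff_card.1 hQ
  exact IsPGroup.of_card (n := a + b) (by rw [Nat.card_prod, ha, hb, pow_add])

theorem resP_list (p : ℕ) [Fact p.Prime] {X : Type} (s : List (FreeGroup X)) (hs : ∀ g ∈ s, g ≠ 1) :
    ∃ (P : Type) (_ : Group P) (_ : Finite P) (_ : IsPGroup p P) (f : FreeGroup X →* P),
      ∀ g ∈ s, f g ≠ 1 := by
  induction s with
  | nil => exact ⟨PUnit, inferInstance, inferInstance, IsPGroup.of_subsingleton _ _, 1, by simp⟩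
  | cons a s ih =>
    obtain ⟨P, _, _, hP, f, hf⟩ := ih (fun g hg => hs g (List.mem_cons_of_mem _ hg))
    obtain ⟨Q, _, _, hQ, f', hf'⟩ := resP p a (hs a List.mem_cons_self)
    refine ⟨P × Q, inferInstance, inferInstance, isPGroup_prod hP hQ, f.prod f', ?_⟩
    intro g hg
    rcases List.mem_cons.1 hg with rfl | hg
    · intro h; exact hf' (congrArg Prod.snd h)
    · intro h; exact hf g hg (congrArg Prod.fst h)

/-- two central-ish letters -/
theorem center_aux {X : Type} (z : FreeGroup X) (hz : z ≠ 1)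
    (hc : ∀ x, FreeGroup.of x * z = z * FreeGroup.of x) : Subsingleton X := by
  classical
  cases hW : z.toWord with
  | nil => exact absurd (FreeGroup.toWord_eq_nil_iff.1 hW) hz
  | cons a L =>
    have key : ∀ y, y = a.1 := by
      intro y
      by_contra hy
      have hred : FreeGroup.IsReduced ((y, true) :: a :: L) := by
        have h1 : FreeGroup.IsReduced (a :: L) := hW ▸ FreeGroup.isReduced_toWord
        rw [FreeGroup.IsReduced, List.isChain_cons_cons]
        exact ⟨fun h => absurd h hy, h1⟩
      have h1 : (FreeGroup.of y * z).toWord = (y, true) :: a :: L := by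
        have : FreeGroup.of y * z = FreeGroup.mk ((y, true) :: a :: L) := by
          rw [← FreeGroup.mk_toWord (x := z), hW]; rfl
        rw [this, FreeGroup.toWord_mk, hred.reduce_eq]
      have h2 := FreeGroup.toWord_mul_sublist z (FreeGroup.of y)
      rw [← hc y, h1, hW, FreeGroup.toWord_of] at h2
      have h3 := h2.eq_of_length (by simp)
      simp only [List.cons_append, List.cons.injEq] at h3
      exact hy (congrArg Prod.fst h3.1)
    exact ⟨fun x y => by rw [key x, key y]⟩

/-- centralizers in free groups are cyclic -/
theorem exists_root {X : Type} (t : FreeGroup X) (ht : t ≠ 1) :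
    ∃ t₀ : FreeGroup X, ∀ a, Commute a t → a ∈ Subgroup.zpowers t₀ := by
  classical
  let C : Subgroup (FreeGroup X) := Subgroup.centralizer {t}
  let Γ := IsFreeGroup.Generators C
  let e : FreeGroup Γ ≃* C := IsFreeGroup.mulEquiv C
  have htC : t ∈ C := by simp [C, Subgroup.mem_centralizer_singleton_iff]
  have hsub : Subsingleton Γ := by
    refine center_aux (e.symm ⟨t, htC⟩) ?_ ?_
    · intro h
      have : (⟨t, htC⟩ : C) = 1 := e.symm.injective (by rw [h, map_one])
      exact ht (congrArg Subtype.val this)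
    · intro x
      apply e.injective
      rw [map_mul, map_mul, e.apply_symm_apply]
      apply Subtype.ext
      have := (e (FreeGroup.of x)).2
      exact (Subgroup.mem_centralizer_singleton_iff.1 this)
  have hne : Nonempty Γ := by
    by_contra h
    rw [not_nonempty_iff] at h
    have : (⟨t, htC⟩ : C) = 1 := e.symm.injective (Subsingleton.elim _ _)
    exact ht (congrArg Subtype.val this)
  obtain ⟨x⟩ := hne
  refine ⟨e (FreeGroup.of x), ?_⟩
  intro a ha
  have haC : a ∈ C := Subgroup.mem_centralizer_singleton_iff.2 ha
  have htop : (⊤ : Subgroup (FreeGroup Γ)) ≤ Subgroup.zpowers (FreeGroup.of x) := by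
    rw [← FreeGroup.closure_range_of, Subgroup.closure_le]
    rintro _ ⟨y, rfl⟩
    rw [Subsingleton.elim y x]
    exact Subgroup.mem_zpowers _
  obtain ⟨k, hk⟩ := htop (Subgroup.mem_top (e.symm ⟨a, haC⟩))
  refine ⟨k, ?_⟩
  have := congrArg (fun w => ((e w : C) : FreeGroup X)) hk
  simpa using this

theorem zpow_inj_free {X : Type} {t : FreeGroup X} (ht : t ≠ 1) {a b : ℤ} (h : t ^ a = t ^ b) :
    a = b :=
  injective_zpow_iff_not_isOfFinOrder.2 (not_isOfFinOrder_of_isMulTorsionFree ht) h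

theorem ne_one_of_indiv {X : Type} {t : FreeGroup X} (h : Indivisible t) : t ≠ 1 := by
  intro ht
  have := h 1 0 (by simp [ht])
  omega

theorem mem_zpowers_of_commute {X : Type} {t a : FreeGroup X} (h : Indivisible t)
    (ha : Commute a t) : a ∈ Subgroup.zpowers t := by
  obtain ⟨t₀, ht₀⟩ := exists_root t (ne_one_of_indiv h)
  obtain ⟨k, hk⟩ := ht₀ t (Commute.refl t)
  have hk' : t₀ ^ k = t := hk
  have h2 := ht₀ a ha
  rcases h t₀ k hk' with rfl | rfl
  · rw [zpow_one] at hk'; rwa [hk'] at h2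
  · rw [zpow_neg, zpow_one] at hk'
    rw [← hk', Subgroup.zpowers_inv]; exact h2

theorem exists_indiv_root {X : Type} (t : FreeGroup X) (ht : t ≠ 1) :
    ∃ (t₀ : FreeGroup X) (k : ℕ), 0 < k ∧ Indivisible t₀ ∧ t₀ ^ k = t := by
  obtain ⟨t₀, ht₀⟩ := exists_root t ht
  have hind : Indivisible t₀ := by
    intro h k hk
    obtain ⟨j, hj⟩ := ht₀ t (Commute.refl t)
    have hj' : t₀ ^ j = t := hj
    have hc : Commute h t := by
      rw [← hj', ← hk]
      exact ((Commute.refl h).zpow_right k).zpow_right j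
    obtain ⟨i, hi⟩ := ht₀ h hc
    have hi' : t₀ ^ i = h := hi
    rw [← hi', ← zpow_mul] at hk
    have h1 : t₀ ≠ 1 := by
      rintro rfl
      simp at hj'
      exact ht hj'.symm
    have h2 : t₀ ^ (i * k) = t₀ ^ (1 : ℤ) := by rw [hk, zpow_one]
    have h3 : i * k = 1 := zpow_inj_free h1 h2
    rw [mul_comm] at h3
    exact Int.eq_one_or_neg_one_of_mul_eq_one h3
  obtain ⟨j, hj⟩ := ht₀ t (Commute.refl t)
  have hj' : t₀ ^ j = t := hj
  have hj0 : j ≠ 0 := by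
    rintro rfl
    simp at hj'
    exact ht hj'.symm
  rcases lt_or_gt_of_ne hj0 with h | h
  · refine ⟨t₀⁻¹, j.natAbs, by omega, ?_, ?_⟩
    · intro h k hk
      have := hind h (-k) (by rw [zpow_neg, hk, inv_inv])
      omega
    · rw [← hj', ← zpow_natCast, inv_zpow', Int.ofNat_natAbs_of_nonpos h.le, neg_neg]
  · refine ⟨t₀, j.natAbs, by omega, hind, ?_⟩
    rw [← hj', ← zpow_natCast, Int.natAbs_of_nonneg h.le]

theorem mk_pow {X : Type} (W : List (X × Bool)) (c : ℕ) :
    FreeGroup.mk W ^ c = FreeGroup.mk (List.replicate c W).flatten := by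
  induction c with
  | zero => rfl
  | succ c ih => rw [pow_succ', ih, FreeGroup.mul_mk, List.replicate_succ, List.flatten_cons]

theorem cyc_len {X : Type} (W : List (X × Bool)) (hW : FreeGroup.IsCyclicallyReduced W)
    (c i j : ℕ) (hi : i < W.length) (hj : j < W.length)
    (h : FreeGroup.mk W ^ c * FreeGroup.mk (W.take j) = FreeGroup.mk (W.take i)) : i = j ∧ c = 0 := by
  classical
  rw [mk_pow, FreeGroup.mul_mk] at h
  have hr1 : FreeGroup.IsReduced ((List.replicate c W).flatten ++ W.take j) := by
    have h0 : FreeGroup.IsReduced (List.replicate (c+1) W).flatten :=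
      (hW.flatten_replicate (c+1)).isReduced
    rw [List.replicate_succ', List.flatten_concat, ← List.take_append_drop j W,
      ← List.append_assoc, List.take_append_drop j W] at h0
    exact List.IsChain.left_of_append h0
  have hr2 : FreeGroup.IsReduced (W.take i) := List.IsChain.take hW.isReduced i
  have := congrArg (fun g => g.toWord.length) h
  simp only [FreeGroup.toWord_mk, hr1.reduce_eq, hr2.reduce_eq] at this
  simp only [List.length_append, List.length_flatten, List.map_replicate, List.sum_replicate,
    List.length_take, smul_eq_mul] at this
  rw [min_eq_left hi.le, min_eq_left hj.le] at this
  have hc : c = 0 := by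
    rcases Nat.eq_zero_or_pos c with h | h
    · exact h
    · nlinarith
  subst hc
  omega

theorem lprime_cyc (p : ℕ) [Fact p.Prime] {X : Type} (W : List (X × Bool))
    (hW : FreeGroup.IsCyclicallyReduced W) (ht : Indivisible (FreeGroup.mk W)) :
    ∃ (P : Type) (_ : Group P) (_ : Finite P) (_ : IsPGroup p P) (f : FreeGroup X →* P),
      ∀ ρ, ρ ^ p ≠ f (FreeGroup.mk W) := by
  classical
  set t := FreeGroup.mk W with htW
  let u : ℕ → FreeGroup X := fun i => FreeGroup.mk (W.take i)
  have hsep : ∀ i j, i < j → j < W.length → ¬ Commute (u i * (u j)⁻¹) t := by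
    intro i j hij hj hc
    obtain ⟨c, hc⟩ := mem_zpowers_of_commute ht hc
    have hc' : t ^ c = u i * (u j)⁻¹ := hc
    rcases le_total 0 c with h0 | h0
    · lift c to ℕ using h0
      have := cyc_len W hW c i j (by omega) hj (by
        rw [← htW, ← zpow_natCast, hc']; exact inv_mul_cancel_right _ _)
      omega
    · obtain ⟨d, rfl⟩ : ∃ d : ℕ, c = -(d:ℤ) := ⟨(-c).toNat, by omega⟩
      have := cyc_len W hW d j i (by omega) (by omega) (by
        rw [zpow_neg, inv_eq_iff_eq_inv, zpow_natCast] at hc'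
        rw [← htW, hc', mul_inv_rev, inv_inv]; exact inv_mul_cancel_right _ _)
      omega
  let S : List (FreeGroup X) := ((List.range W.length ×ˢ List.range W.length).filter
    fun ij => ij.1 < ij.2).map fun ij => ⁅u ij.1 * (u ij.2)⁻¹, t⁆
  obtain ⟨P, _, _, hP, f, hf⟩ := resP_list p S (by
    intro g hg
    simp only [S, List.mem_map, List.mem_filter, List.mem_product, List.mem_range, decide_eq_true_eq, Prod.exists] at hg
    obtain ⟨i, j, ⟨⟨_, hj⟩, hij⟩, rfl⟩ := hg
    intro h
    exact hsep i j hij hj (commutatorElement_eq_one_iff_commute.1 h))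
  have hf' : ∀ i j, i < j → j < W.length → ¬ Commute (f (u i) * (f (u j))⁻¹) (f t) := by
    intro i j hij hj hc
    refine hf ⁅u i * (u j)⁻¹, t⁆ ?_ ?_
    · simp only [S, List.mem_map, List.mem_filter, List.mem_product, List.mem_range, decide_eq_true_eq, Prod.exists]
      exact ⟨i, j, ⟨⟨by omega, hj⟩, hij⟩, rfl⟩
    · rw [map_commutatorElement, commutatorElement_eq_one_iff_commute, map_mul, map_inv]
      exact hc
  obtain ⟨⟨x, b⟩, L, hWL⟩ : ∃ a L, W = a :: L := by
    cases hW' : W with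
    | nil =>
      exfalso
      apply ne_one_of_indiv ht
      rw [htW, hW']; rfl
    | cons a L => exact ⟨a, L, rfl⟩
  refine ⟨Wr p P, inferInstance, inferInstance, isPGroup_Wr hP, edgeHom p f x, ?_⟩
  intro ρ hρ
  have hr : ρ.right ^ p = f t := by
    have := congrArg (RegularWreathProduct.rightHom) hρ
    rw [map_pow] at this
    simpa [edgeHom_right] using this
  obtain ⟨g₀, hg₀⟩ := edge_lemma p f (Subgroup.zpowers ρ.right) x b L (hWL ▸ hW.isReduced) (by
    rw [← hWL]
    intro i j hij hj hm
    apply hf' i j hij hj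
    obtain ⟨k, hk⟩ := hm
    change Commute (f (FreeGroup.mk (W.take i)) * (f (FreeGroup.mk (W.take j)))⁻¹) (f t)
    rw [← hk, ← hr]
    exact ((Commute.refl ρ.right).zpow_left k).pow_right p) (by
    rw [← hWL, ← htW, ← hr]
    exact Subgroup.pow_mem _ (Subgroup.mem_zpowers _) _)
  apply hg₀
  rw [← hWL, ← htW, ← hρ, cosetSum_pow _ _ _ (Subgroup.mem_zpowers _)]
  simp

/-- An indivisible element is not a `p`-th power in some finite `p`-quotient. -/
theorem lprime (p : ℕ) [Fact p.Prime] {X : Type} (t : FreeGroup X) (ht : Indivisible t) :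
    ∃ (P : Type) (_ : Group P) (_ : Finite P) (_ : IsPGroup p P) (f : FreeGroup X →* P),
      ∀ ρ, ρ ^ p ≠ f t := by
  classical
  let c := FreeGroup.mk (FreeGroup.reduceCyclically.conjugator t.toWord)
  let R := FreeGroup.reduceCyclically t.toWord
  have h : c * FreeGroup.mk R * c⁻¹ = t := by
    have := FreeGroup.reduceCyclically.conj_conjugator_reduceCyclically t.toWord
    conv_rhs => rw [← FreeGroup.mk_toWord (x := t), ← this]
    simp only [c, R, FreeGroup.inv_mk, FreeGroup.mul_mk]
  have hR : Indivisible (FreeGroup.mk R) := by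
    intro g k hk
    apply ht (c * g * c⁻¹) k
    rw [conj_zpow, hk, h]
  obtain ⟨P, i1, i2, hP, f, hf⟩ := lprime_cyc p R
    (FreeGroup.reduceCyclically.isCyclicallyReduced FreeGroup.isReduced_toWord) hR
  refine ⟨P, i1, i2, hP, f, ?_⟩
  intro ρ hρ
  apply hf ((f c)⁻¹ * ρ * f c)
  have := conj_pow (i := p) (a := (f c)⁻¹) (b := ρ)
  rw [inv_inv] at this
  rw [this, hρ, ← h]
  simp only [map_mul, map_inv]; group

end Shen

namespace Shen

structure Setup {X Y Z : Type} [Fintype X] [Fintype Y] [Fintype Z]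
    (α : FreeGroup X →* FreeGroup Z) (β : FreeGroup Y →* FreeGroup Z)
    (t₁ : FreeGroup X) (t₂ : FreeGroup Y) : Prop where
  card : Fintype.card Z + 1 = Fintype.card X + Fintype.card Y
  eq : α t₁ = β t₂
  ne1 : t₁ ≠ 1
  ne2 : t₂ ≠ 1
  gen : α.range ⊔ β.range = ⊤

def Push {A B F : Type} [Group A] [Group B] [Group F] (α : A →* F) (β : B →* F)
    (t₁ : A) (t₂ : B) : Prop :=
  ∀ (H : Type) [Group H] (g₁ : A →* H) (g₂ : B →* H), g₁ t₁ = g₂ t₂ →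
    ∃ h : F →* H, h.comp α = g₁ ∧ h.comp β = g₂

def ExtP (p : ℕ) {A B F : Type} [Group A] [Group B] [Group F] (α : A →* F) (β : B →* F)
    (t₁ : A) (t₂ : B) : Prop :=
  ∀ (H : Type) [Group H] [Finite H] (_ : IsPGroup p H) (g₁ : A →* H) (g₂ : B →* H), g₁ t₁ = g₂ t₂ →
    ∃ h : F →* H, h.comp α = g₁ ∧ h.comp β = g₂

theorem Push.swap {A B F : Type} [Group A] [Group B] [Group F] {α : A →* F} {β : B →* F}
    {t₁ : A} {t₂ : B} (h : Push α β t₁ t₂) : Push β α t₂ t₁ := by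
  intro H _ g₁ g₂ hg
  obtain ⟨h, h1, h2⟩ := h H g₂ g₁ hg.symm
  exact ⟨h, h2, h1⟩

theorem ExtP.swap {p : ℕ} {A B F : Type} [Group A] [Group B] [Group F] {α : A →* F} {β : B →* F}
    {t₁ : A} {t₂ : B} (h : ExtP p α β t₁ t₂) : ExtP p β α t₂ t₁ := by
  intro H _ _ hH g₁ g₂ hg
  obtain ⟨h, h1, h2⟩ := h H hH g₂ g₁ hg.symm
  exact ⟨h, h2, h1⟩

theorem hom_ext_of_gen {A B F H : Type} [Group A] [Group B] [Group F] [Group H]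
    {α : A →* F} {β : B →* F} (hgen : α.range ⊔ β.range = ⊤) {f g : F →* H}
    (h1 : f.comp α = g.comp α) (h2 : f.comp β = g.comp β) : f = g := by
  have : (⊤ : Subgroup F) ≤ f.eqLocus g := by
    rw [← hgen, sup_le_iff]
    constructor
    · rintro _ ⟨a, rfl⟩; exact DFunLike.congr_fun h1 a
    · rintro _ ⟨a, rfl⟩; exact DFunLike.congr_fun h2 a
  ext x
  exact this (Subgroup.mem_top x)

section
variable {X Y Z : Type} [Fintype X] [Fintype Y] [Fintype Z]
    {α : FreeGroup X →* FreeGroup Z} {β : FreeGroup Y →* FreeGroup Z}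
    {t₁ : FreeGroup X} {t₂ : FreeGroup Y}

theorem Setup.swap (h : Setup α β t₁ t₂) : Setup β α t₂ t₁ :=
  ⟨by rw [h.card, add_comm], h.eq.symm, h.ne2, h.ne1, by rw [sup_comm, h.gen]⟩

theorem Setup.inj2 (h : Setup α β t₁ t₂) : Function.Injective β := by
  obtain ⟨b, e, hb, hinj⟩ := rkLemma β
  by_cases hb' : b = Fintype.card Y
  · exact hinj hb'
  exfalso
  haveI : Fact (Nat.Prime 2) := ⟨Nat.prime_two⟩
  obtain ⟨P, _, _, hP, f1, hf1⟩ := resP 2 t₁ h.ne1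
  let Φ : (FreeGroup Z →* P) → (FreeGroup X →* P) × (FreeGroup (Fin b) →* P) := fun f =>
    (f.comp α, f.comp (β.range.subtype.comp e.toMonoidHom))
  have hΦ : Function.Injective Φ := by
    intro f g hfg
    refine hom_ext_of_gen h.gen (congrArg Prod.fst hfg) ?_
    have h2 := congrArg Prod.snd hfg
    ext y
    have := DFunLike.congr_fun h2 (e.symm (β.rangeRestrict (FreeGroup.of y)))
    simpa [Φ] using this
  have hc := h.card
  have hbij := hΦ.bijective_of_nat_card_le (by
    rw [Nat.card_prod, card_hom, card_hom, card_hom, ← pow_add, Fintype.card_fin]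
    exact Nat.pow_le_pow_right (card_pos' P) (by omega))
  obtain ⟨f, hf⟩ := hbij.2 (f1, 1)
  apply hf1
  have h1 : f.comp α = f1 := congrArg Prod.fst hf
  have h2 := DFunLike.congr_fun (congrArg Prod.snd hf) (e.symm (β.rangeRestrict t₂))
  rw [← h1, MonoidHom.comp_apply, h.eq]
  simpa [Φ] using h2

theorem Setup.inj1 (h : Setup α β t₁ t₂) : Function.Injective α := h.swap.inj2

end

open Classical in
/-- exponent sum -/
noncomputable def expo {X : Type} (i : X) (g : FreeGroup X) : ℤ :=
  Multiplicative.toAdd (FreeGroup.lift (fun j => if j = i then Multiplicative.ofAdd (1 : ℤ) else 1) g)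

theorem expo_spec {X G : Type} [Group G] (i : X) (f : FreeGroup X →* G)
    (hf : ∀ j, j ≠ i → f (FreeGroup.of j) = 1) (g : FreeGroup X) :
    f g = f (FreeGroup.of i) ^ expo i g := by
  classical
  have : f = (zpowersHom G (f (FreeGroup.of i))).comp
      (FreeGroup.lift (fun j => if j = i then Multiplicative.ofAdd (1 : ℤ) else 1)) := by
    ext j
    by_cases hj : j = i
    · simp [hj, zpowersHom_apply]
    · simp [hj, hf j hj]
  conv_lhs => rw [this]
  simp only [MonoidHom.comp_apply, zpowersHom_apply]
  unfold expo
  congr!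

section
variable {X Y Z : Type} [Fintype X] [Fintype Y] [Fintype Z]
    {α : FreeGroup X →* FreeGroup Z} {β : FreeGroup Y →* FreeGroup Z}
    {t₁ : FreeGroup X} {t₂ : FreeGroup Y}

/-- all generators -/
def gens (α : FreeGroup X →* FreeGroup Z) (β : FreeGroup Y →* FreeGroup Z) : X ⊕ Y → FreeGroup Z :=
  Sum.elim (fun x => α (FreeGroup.of x)) (fun y => β (FreeGroup.of y))

theorem Setup.removable (h : Setup α β t₁ t₂) (p : ℕ) [Fact p.Prime] :
    ∃ i : X ⊕ Y, PDense p {g | ∃ j, j ≠ i ∧ gens α β j = g} := by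
  refine removal (gens α β) (by rw [Fintype.card_sum, h.card]) ?_
  intro χ hχ
  refine hom_ext_of_gen h.gen ?_ ?_
  · ext x
    exact congrArg Multiplicative.toAdd (hχ _ ⟨Sum.inl x, rfl⟩)
  · ext x
    exact congrArg Multiplicative.toAdd (hχ _ ⟨Sum.inr x, rfl⟩)

theorem Setup.removeE (h : Setup α β t₁ t₂) {p : ℕ} [Fact p.Prime] {i : X ⊕ Y}
    (hi : PDense p {g | ∃ j, j ≠ i ∧ gens α β j = g})
    {P : Type} [Group P] [Finite P] (hP : IsPGroup p P) (v : X ⊕ Y → P) :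
    ∃ f : FreeGroup Z →* P, ∀ j, j ≠ i → f (gens α β j) = v j :=
  removalE (gens α β) (by rw [Fintype.card_sum, h.card]) i hi hP v

theorem Setup.removeR (h : Setup α β t₁ t₂) {p : ℕ} [Fact p.Prime] {y : Y}
    (hi : PDense p {g | ∃ j, j ≠ Sum.inr y ∧ gens α β j = g})
    {P : Type} [Group P] [Finite P] (hP : IsPGroup p P) (f1 : FreeGroup X →* P) :
    ∃ f : FreeGroup Z →* P, f.comp α = f1 ∧ f1 t₁ = f (β (FreeGroup.of y)) ^ expo y t₂ := by
  obtain ⟨f, hf⟩ := h.removeE hi hP (Sum.elim (fun x => f1 (FreeGroup.of x)) 1)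
  have h1 : f.comp α = f1 := by
    ext x
    exact hf (Sum.inl x) (by simp)
  refine ⟨f, h1, ?_⟩
  rw [← h1, MonoidHom.comp_apply, h.eq]
  refine expo_spec y (f.comp β) ?_ t₂
  intro j hj
  exact hf (Sum.inr j) (by simpa using hj)

theorem Setup.expo_aux (h : Setup α β t₁ t₂) {p : ℕ} [Fact p.Prime] {y : Y}
    (hi : PDense p {g | ∃ j, j ≠ Sum.inr y ∧ gens α β j = g}) : expo y t₂ ≠ 0 := by
  intro h0
  obtain ⟨P, _, _, hP, f1, hf1⟩ := resP p t₁ h.ne1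
  obtain ⟨f, _, h2⟩ := h.removeR hi hP f1
  rw [h0, zpow_zero] at h2
  exact hf1 h2

theorem gens_swap {p : ℕ} {x : X}
    (hi : PDense p {g | ∃ j, j ≠ Sum.inl x ∧ gens α β j = g}) :
    PDense p {g | ∃ j, j ≠ Sum.inr x ∧ gens β α j = g} := by
  refine hi.mono ?_
  rintro g ⟨j, hj, rfl⟩
  refine ⟨j.swap, ?_, ?_⟩
  · intro h
    apply hj
    have := congrArg Sum.swap h
    simpa using this
  · cases j <;> rfl

theorem Setup.exists_expo (h : Setup α β t₁ t₂) :
    (∃ x, expo x t₁ ≠ 0) ∨ (∃ y, expo y t₂ ≠ 0) := by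
  haveI : Fact (Nat.Prime 2) := ⟨Nat.prime_two⟩
  obtain ⟨i, hi⟩ := h.removable 2
  cases i with
  | inl x => exact Or.inl ⟨x, h.swap.expo_aux (gens_swap hi)⟩
  | inr y => exact Or.inr ⟨y, h.expo_aux hi⟩

theorem eq_one_of_zpow_char {p : ℕ} [hp : Fact p.Prime] (a : Multiplicative (ZMod p)) (c : ℤ)
    (hc : ¬ (p : ℤ) ∣ c) (h : a ^ c = 1) : a = 1 := by
  have h1 : (c : ZMod p) * a.toAdd = 0 := by
    have := congrArg Multiplicative.toAdd h
    rw [toAdd_zpow] at this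
    simpa using this
  rcases mul_eq_zero.1 h1 with h2 | h2
  · exact absurd ((ZMod.intCast_zmod_eq_zero_iff_dvd c p).1 h2) hc
  · exact congrArg Multiplicative.ofAdd h2

theorem Setup.ext1 (h : Setup α β t₁ t₂) (p : ℕ) [Fact p.Prime] (x₀ : X)
    (hx : ¬ (p : ℤ) ∣ expo x₀ t₁) : ExtP p α β t₁ t₂ := by
  classical
  have hd : PDense p (insert t₁ {g | ∃ j, j ≠ x₀ ∧ FreeGroup.of j = g}) := by
    intro χ hχ
    have h1 : ∀ j, j ≠ x₀ → χ (FreeGroup.of j) = 1 := fun j hj => hχ _ (Or.inr ⟨j, hj, rfl⟩)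
    have h2 := expo_spec x₀ χ h1 t₁
    rw [hχ t₁ (Or.inl rfl)] at h2
    have h3 := eq_one_of_zpow_char _ _ hx h2.symm
    ext j
    by_cases hj : j = x₀
    · rw [hj, h3]; rfl
    · rw [h1 j hj]; rfl
  intro P _ _ hP g1 g2 hg
  let T := {q : (FreeGroup X →* P) × (FreeGroup Y →* P) // q.1 t₁ = q.2 t₂}
  let Ψ : T → ({i : X // i ≠ x₀} → P) × (FreeGroup Y →* P) := fun q =>
    (fun i => q.1.1 (FreeGroup.of i), q.1.2)
  have hΨ : Function.Injective Ψ := by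
    rintro ⟨⟨a1, a2⟩, ha⟩ ⟨⟨b1, b2⟩, hb⟩ hab
    have e2 : a2 = b2 := congrArg Prod.snd hab
    have e1 := congrArg Prod.fst hab
    subst e2
    have : a1 = b1 := by
      refine hd.ext hP a1 b1 ?_
      rintro s (rfl | ⟨j, hj, rfl⟩)
      · exact ha.trans hb.symm
      · exact congrFun e1 ⟨j, hj⟩
    subst this
    rfl
  let Φ : (FreeGroup Z →* P) → T := fun f => ⟨(f.comp α, f.comp β), by
    simp [h.eq]⟩
  have hΦ : Function.Injective Φ := by
    intro f g hfg
    have := congrArg Subtype.val hfg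
    exact hom_ext_of_gen h.gen (congrArg Prod.fst this) (congrArg Prod.snd this)
  have hc := h.card
  have hpos : 0 < Fintype.card X := Fintype.card_pos_iff.2 ⟨x₀⟩
  have hbij := hΦ.bijective_of_nat_card_le (by
    refine (Nat.card_le_card_of_injective Ψ hΨ).trans ?_
    rw [Nat.card_prod, card_hom, card_hom, Nat.card_fun, ← pow_add, Nat.card_eq_fintype_card (α := {i // i ≠ x₀}),
      Fintype.card_subtype_compl]
    refine Nat.pow_le_pow_right (card_pos' P) ?_
    simp; omega)
  obtain ⟨f, hf⟩ := hbij.2 ⟨(g1, g2), hg⟩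
  have := congrArg Subtype.val hf
  exact ⟨f, congrArg Prod.fst this, congrArg Prod.snd this⟩

theorem exists_prime_not_dvd (c : ℤ) (hc : c ≠ 0) : ∃ p : ℕ, p.Prime ∧ ¬ (p : ℤ) ∣ c := by
  obtain ⟨p, hp, hpp⟩ := Nat.exists_infinite_primes (c.natAbs + 1)
  refine ⟨p, hpp, ?_⟩
  intro h
  have := Nat.le_of_dvd (Int.natAbs_pos.2 hc) (Int.natCast_dvd.1 h)
  omega

theorem Setup.exists_ext (h : Setup α β t₁ t₂) : ∃ p : ℕ, p.Prime ∧ ExtP p α β t₁ t₂ := by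
  rcases h.exists_expo with ⟨x, hx⟩ | ⟨x, hx⟩
  · obtain ⟨p, hp, hpx⟩ := exists_prime_not_dvd _ hx
    haveI := Fact.mk hp
    exact ⟨p, hp, h.ext1 p x hpx⟩
  · obtain ⟨p, hp, hpx⟩ := exists_prime_not_dvd _ hx
    haveI := Fact.mk hp
    exact ⟨p, hp, (h.swap.ext1 p x hpx).swap⟩

end
end Shen

namespace Shen

section
variable {A B F : Type} [Group A] [Group B] [Group F]

abbrev val {H : Type} [Group H] (α : A →* H) (β : B →* H) : A ⊕ B → H := Sum.elim α β

def Good (t₁ : A) (t₂ : B) : A ⊕ B → Prop :=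
  Sum.elim (fun a => a ∉ Subgroup.zpowers t₁) (fun b => b ∉ Subgroup.zpowers t₂)

def SepP (p : ℕ) (α : A →* F) (t₁ : A) : Prop :=
  ∀ a, a ∉ Subgroup.zpowers t₁ → ∃ (P : Type) (_ : Group P) (_ : Finite P) (_ : IsPGroup p P)
    (f : F →* P), f (α a) ∉ Subgroup.zpowers (f (α t₁))

theorem sep_list (p : ℕ) [Fact p.Prime] (t : F) (s : List F)
    (hs : ∀ g ∈ s, ∃ (P : Type) (_ : Group P) (_ : Finite P) (_ : IsPGroup p P)
      (f : F →* P), f g ∉ Subgroup.zpowers (f t)) :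
    ∃ (P : Type) (_ : Group P) (_ : Finite P) (_ : IsPGroup p P) (f : F →* P),
      ∀ g ∈ s, f g ∉ Subgroup.zpowers (f t) := by
  induction s with
  | nil => exact ⟨PUnit, inferInstance, inferInstance, IsPGroup.of_subsingleton _ _, 1, by simp⟩
  | cons a s ih =>
    obtain ⟨P, _, _, hP, f, hf⟩ := ih (fun g hg => hs g (List.mem_cons_of_mem _ hg))
    obtain ⟨Q, _, _, hQ, f', hf'⟩ := hs a List.mem_cons_self
    refine ⟨P × Q, inferInstance, inferInstance, isPGroup_prod hP hQ, f.prod f', ?_⟩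
    intro g hg
    rcases List.mem_cons.1 hg with rfl | hg
    · rintro ⟨k, h⟩
      exact hf' ⟨k, congrArg Prod.snd h⟩
    · rintro ⟨k, h⟩
      exact hf g hg ⟨k, congrArg Prod.fst h⟩

open Classical in
/-- marking function -/
noncomputable def mark (p : ℕ) {P : Type} [Group P] (τ : P) (x : P) : Multiplicative (ZMod p) :=
  if x ∈ Subgroup.zpowers τ then Multiplicative.ofAdd 1 else 1

noncomputable def markHom (p : ℕ) {P : Type} [Group P] (τ : P) : P →* Wr p P :=
  (MulAut.conj (⟨mark p τ, 1⟩ : Wr p P)).toMonoidHom.comp RegularWreathProduct.inl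

theorem markHom_right (p : ℕ) {P : Type} [Group P] (τ : P) (g : P) : (markHom p τ g).right = g := by
  simp [markHom]

theorem markHom_left (p : ℕ) {P : Type} [Group P] (τ : P) (g x : P) :
    (markHom p τ g).left x = mark p τ x * (mark p τ (g⁻¹ * x))⁻¹ := by
  simp [markHom]

theorem mark_tau (p : ℕ) {P : Type} [Group P] (τ x : P) : mark p τ (τ⁻¹ * x) = mark p τ x := by
  unfold mark
  congr 1
  rw [Subgroup.mul_mem_cancel_left]
  exact Subgroup.inv_mem _ (Subgroup.mem_zpowers τ)

theorem markHom_tau (p : ℕ) {P : Type} [Group P] (τ : P) :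
    markHom p τ τ = RegularWreathProduct.inl τ := by
  ext x
  · rw [markHom_left, mark_tau]; simp
  · rw [markHom_right]; rfl

theorem exists_mark {p : ℕ} [Fact p.Prime] {α : A →* F} {β : B →* F} {t₁ : A} {t₂ : B}
    (hE : ExtP p α β t₁ t₂) (heq : α t₁ = β t₂) (hgen : α.range ⊔ β.range = ⊤)
    {P : Type} [Group P] [Finite P] (hP : IsPGroup p P) (f : F →* P) :
    ∃ f' : F →* Wr p P, (∀ w, (f' w).right = f w) ∧
      (∀ a x, (f' (α a)).left x = mark p (f (α t₁)) x * (mark p (f (α t₁)) ((f (α a))⁻¹ * x))⁻¹) ∧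
      (∀ b x, (f' (β b)).left x = 1) := by
  obtain ⟨f', h1, h2⟩ := hE (Wr p P) (isPGroup_Wr hP) ((markHom p (f (α t₁))).comp (f.comp α))
    (RegularWreathProduct.inl.comp (f.comp β)) (by
      simp only [MonoidHom.comp_apply]
      rw [markHom_tau, heq])
  refine ⟨f', ?_, ?_, ?_⟩
  · have : RegularWreathProduct.rightHom.comp f' = f := by
      refine hom_ext_of_gen hgen ?_ ?_
      · rw [MonoidHom.comp_assoc, h1]
        refine MonoidHom.ext fun x => ?_
        simp only [MonoidHom.comp_apply]
        exact markHom_right _ _ _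
      · rw [MonoidHom.comp_assoc, h2]
        refine MonoidHom.ext fun x => ?_
        rfl
    exact fun w => DFunLike.congr_fun this w
  · intro a x
    have := DFunLike.congr_fun h1 a
    simp only [MonoidHom.comp_apply] at this
    rw [this, markHom_left]
  · intro b x
    have := DFunLike.congr_fun h2 b
    simp only [MonoidHom.comp_apply] at this
    rw [this]
    rfl

theorem nfLemma {p : ℕ} [Fact p.Prime] {α : A →* F} {β : B →* F} {t₁ : A} {t₂ : B}
    (hE : ExtP p α β t₁ t₂) (heq : α t₁ = β t₂) (hgen : α.range ⊔ β.range = ⊤)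
    (hA : SepP p α t₁) (hB : SepP p β t₂) (L : List (A ⊕ B)) (hL : L ≠ [])
    (hgood : ∀ c ∈ L, Good t₁ t₂ c) (halt : L.IsChain fun x y => x.isLeft ≠ y.isLeft) :
    (L.map (val α β)).prod ≠ 1 := by
  classical
  intro hprod
  set t := α t₁ with ht
  let u : ℕ → F := fun i => ((L.take i).map (val α β)).prod
  have hu : ∀ i (hi : i < L.length), u (i+1) = u i * val α β L[i] := by
    intro i hi
    simp only [u]
    rw [List.take_succ_eq_append_getElem hi, List.map_append, List.prod_append, List.map_singleton,
      List.prod_singleton]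
  have hlen : 0 < L.length := List.length_pos_iff.2 hL
  let K : ∀ (P : Type) [Group P] (f : F →* P), Finset (ℕ × ℕ) := fun P _ f =>
    ((Finset.range (L.length + 1)) ×ˢ (Finset.range (L.length + 1))).filter fun ij =>
      ij.1 < ij.2 ∧ (f (u ij.1))⁻¹ * f (u ij.2) ∈ Subgroup.zpowers (f t)
  have hK : ∀ (P : Type) [Group P] (f : F →* P) (i j : ℕ), (i, j) ∈ K P f ↔
      i < j ∧ j ≤ L.length ∧ (f (u i))⁻¹ * f (u j) ∈ Subgroup.zpowers (f t) := by
    intro P _ f i j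
    simp only [K, Finset.mem_filter, Finset.mem_product, Finset.mem_range]
    constructor
    · rintro ⟨⟨_, h2⟩, h3, h4⟩; exact ⟨h3, by omega, h4⟩
    · rintro ⟨h3, h2, h4⟩; exact ⟨⟨by omega, by omega⟩, h3, h4⟩
  have main : ∀ N : ℕ, ∀ (P : Type) [Group P] [Finite P] (_ : IsPGroup p P) (f : F →* P)
      (_ : ∀ g ∈ L.map (val α β), f g ∉ Subgroup.zpowers (f t)),
      (K P f).card = N → False := by
    intro N
    induction N using Nat.strong_induction_on with
    | _ N ih =>
    intro P _ _ hP f hsep hN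
    have h0 : (0, L.length) ∈ K P f := by
      rw [hK]
      refine ⟨hlen, le_rfl, ?_⟩
      simp only [u, List.take_length, hprod]
      simp [Subgroup.one_mem]
    have hex : ∃ d, ∃ i, (i, i + d) ∈ K P f := ⟨L.length, 0, by simpa using h0⟩
    obtain ⟨i, hi⟩ := Nat.find_spec hex
    set d := Nat.find hex with hd
    have hmin : ∀ d' < d, ∀ i, (i, i + d') ∉ K P f := by
      intro d' hd' i' hi'
      exact Nat.find_min hex hd' ⟨i', hi'⟩
    have hi' := (hK P f i (i+d)).1 hi
    have hone : ∀ i, i < L.length → (f (u i))⁻¹ * f (u (i+1)) ∉ Subgroup.zpowers (f t) := by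
      intro i hi
      rw [hu i hi, map_mul, inv_mul_cancel_left]
      exact hsep _ (List.mem_map.2 ⟨_, List.getElem_mem hi, rfl⟩)
    have hd2 : 2 ≤ d := by
      by_contra hlt
      have : d = 1 := by omega
      rw [this] at hi'
      exact hone i (by omega) hi'.2.2
    obtain ⟨f', hr, hfa, hfb⟩ := exists_mark hE heq hgen hP f
    -- base point
    let q : P := (f (u i))⁻¹ * f (u (i+1))
    let w : ℕ → F := fun r => (u i)⁻¹ * u (i + r)
    let e : ℕ → Multiplicative (ZMod p) := fun r => mark p (f t) ((f (w r))⁻¹ * q)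
    let T : ℕ → Multiplicative (ZMod p) := fun r => (f' (w r)).left q
    have he1 : e 1 = Multiplicative.ofAdd 1 := by
      simp only [e, w, q, mark]
      rw [if_pos]
      simp [Subgroup.one_mem]
    have he : ∀ r, r ≠ 1 → r ≤ d → e r = 1 := by
      intro r hr1 hrd
      simp only [e, mark]
      rw [if_neg]
      intro hm
      rcases Nat.eq_zero_or_pos r with h | h
      · subst h
        apply hone i (by omega)
        simpa [w, q] using hm
      · apply hmin (r - 1) (by omega) (i + 1)
        rw [hK]
        refine ⟨by omega, by omega, ?_⟩
        have e1 : i + 1 + (r - 1) = i + r := by omega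
        rw [e1]
        have := Subgroup.inv_mem _ hm
        simpa [w, q, mul_assoc] using this
    have hw : ∀ r (hr : i + r < L.length), w (r+1) = w r * val α β L[i+r] := by
      intro r hr
      simp only [w]
      rw [← add_assoc, hu _ hr, mul_assoc]
    have hTA : ∀ r (hr : i + r < L.length), L[i+r].isLeft = true → T (r+1) = T r * (e r * (e (r+1))⁻¹) := by
      intro r hrl hl
      obtain ⟨a, ha⟩ := Sum.isLeft_iff.1 hl
      have h1 := hw r hrl
      rw [ha] at h1
      simp only [Sum.elim_inl] at h1
      simp only [T]
      have ew : e (r+1) = mark p (f t) ((f (α a))⁻¹ * ((f (w r))⁻¹ * q)) := by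
        simp only [e]
        rw [h1, map_mul, mul_inv_rev, mul_assoc]
      rw [ew, h1, map_mul, RegularWreathProduct.mul_left, Pi.mul_apply, hr, hfa]
    have hTB : ∀ r (hr : i + r < L.length), L[i+r].isLeft = false → T (r+1) = T r := by
      intro r hrl hl
      obtain ⟨a, ha⟩ := Sum.isRight_iff.1 (Sum.isLeft_eq_false.1 hl)
      have h1 := hw r hrl
      rw [ha] at h1
      simp only [Sum.elim_inr] at h1
      simp only [T]
      rw [h1, map_mul, RegularWreathProduct.mul_left, Pi.mul_apply, hr, hfb, mul_one]
    have hT0 : T 0 = 1 := by simp [T, w]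
    have hne : (Multiplicative.ofAdd (1 : ZMod p)) ≠ 1 := by
      intro h
      have h2 : (1 : ZMod p) = 0 := congrArg Multiplicative.toAdd h
      exact one_ne_zero h2
    have hT2 : T 2 ≠ 1 := by
      have hch : L[i+0].isLeft ≠ L[i+1].isLeft := List.isChain_iff_getElem.1 halt i (by omega)
      have e0 := he 0 (by omega) (by omega)
      have e2 := he 2 (by omega) (by omega)
      cases hl : L[i+0].isLeft with
      | true =>
        have hl1 : L[i+1].isLeft = false := by
          cases h : L[i+1].isLeft
          · rfl
          · rw [hl, h] at hch; exact absurd rfl hch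
        rw [hTB 1 (by omega) hl1, hTA 0 (by omega) hl, hT0, e0, zero_add, he1]
        simpa using hne
      | false =>
        have hl1 : L[i+1].isLeft = true := by
          cases h : L[i+1].isLeft
          · rw [hl, h] at hch; exact absurd rfl hch
          · rfl
        rw [hTA 1 (by omega) hl1, hTB 0 (by omega) hl, hT0, e2, he1]
        simpa using hne
    have hTr : ∀ r, 2 ≤ r → r ≤ d → T r = T 2 := by
      intro r hr2
      induction r, hr2 using Nat.le_induction with
      | base => intro _; rfl
      | succ r hr2 ihr =>
        intro hrd
        rw [← ihr (by omega)]
        cases hl : (L[i+r]'(by omega)).isLeft with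
        | true =>
          rw [hTA r (by omega) hl, he r (by omega) (by omega), he (r+1) (by omega) (by omega)]
          simp
        | false => exact hTB r (by omega) hl
    have hproj : ∀ g, f' g ∈ Subgroup.zpowers (f' t) → f g ∈ Subgroup.zpowers (f t) := by
      rintro g ⟨k, hk⟩
      refine ⟨k, ?_⟩
      have := congrArg RegularWreathProduct.rightHom hk
      simp only [map_zpow] at this
      simpa [RegularWreathProduct.rightHom, hr] using this
    have hsub : K _ f' ⊂ K P f := by
      rw [Finset.ssubset_iff_of_subset]
      · refine ⟨(i, i+d), hi, ?_⟩
        rw [hK]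
        rintro ⟨_, _, k, hk⟩
        apply hT2
        rw [← hTr d hd2 le_rfl]
        have h1 : f' (w d) = f' (β (t₂ ^ k)) := by
          simp only [w]
          rw [map_mul, map_inv, ← hk, map_zpow, map_zpow, ← heq]
        simp only [T]
        rw [h1, hfb]
      · rintro ⟨a, b⟩ hab
        rw [hK] at hab ⊢
        refine ⟨hab.1, hab.2.1, ?_⟩
        have := hproj ((u a)⁻¹ * u b) (by rw [map_mul, map_inv]; exact hab.2.2)
        rwa [map_mul, map_inv] at this
    exact ih _ (hN ▸ Finset.card_lt_card hsub) _ (isPGroup_Wr hP) f'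
      (fun g hg hm => hsep g hg (hproj g hm)) rfl
  obtain ⟨P, _, _, hP, f, hf⟩ := sep_list p t (L.map (val α β)) (by
    intro g hg
    obtain ⟨c, hc, rfl⟩ := List.mem_map.1 hg
    cases c with
    | inl a => exact hA a (hgood _ hc)
    | inr b =>
      rw [heq]
      exact hB b (hgood _ hc))
  exact main _ P hP f hf rfl

theorem not_chain {T : Type} {R : T → T → Prop} (L : List T) (h : ¬ L.IsChain R) :
    ∃ L1 x y L2, L = L1 ++ x :: y :: L2 ∧ ¬ R x y := by
  induction L with
  | nil => exact absurd List.IsChain.nil h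
  | cons a L ih =>
    cases L with
    | nil => exact absurd (List.IsChain.singleton a) h
    | cons b L =>
      rw [List.isChain_cons_cons] at h
      by_cases hab : R a b
      · obtain ⟨L1, x, y, L2, h1, h2⟩ := ih (fun h' => h ⟨hab, h'⟩)
        exact ⟨a :: L1, x, y, L2, by rw [h1]; rfl, h2⟩
      · exact ⟨[], a, b, L, rfl, hab⟩

theorem push_of_nf {p : ℕ} [Fact p.Prime] {α : A →* F} {β : B →* F} {t₁ : A} {t₂ : B}
    (hE : ExtP p α β t₁ t₂) (heq : α t₁ = β t₂) (hgen : α.range ⊔ β.range = ⊤)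
    (hA : SepP p α t₁) (hB : SepP p β t₂) (hiA : Function.Injective α) (hiB : Function.Injective β) :
    Push α β t₁ t₂ := by
  classical
  intro H _ g₁ g₂ hg
  have key : ∀ (N : ℕ) (L : List (A ⊕ B)), L.length = N → (L.map (val α β)).prod = 1 →
      (L.map (val g₁ g₂)).prod = 1 := by
    intro N
    induction N using Nat.strong_induction_on with
    | _ N ih =>
    -- merging
    have hmerge : ∀ L : List (A ⊕ B), L.length = N → (¬ L.IsChain fun x y => x.isLeft ≠ y.isLeft) →
        (L.map (val α β)).prod = 1 → (L.map (val g₁ g₂)).prod = 1 := by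
      intro L hLN hch hp
      obtain ⟨L1, x, y, L2, rfl, hxy⟩ := not_chain L hch
      obtain ⟨z, hz1, hz2⟩ : ∃ z : A ⊕ B, val α β z = val α β x * val α β y ∧
          val g₁ g₂ z = val g₁ g₂ x * val g₁ g₂ y := by
        rcases x with a | a <;> rcases y with b | b
        · exact ⟨Sum.inl (a * b), by simp, by simp⟩
        · simp at hxy
        · simp at hxy
        · exact ⟨Sum.inr (a * b), by simp, by simp⟩
      have := ih (L1 ++ z :: L2).length (by rw [← hLN]; simp) (L1 ++ z :: L2) rfl (by
        rw [← hp]; simp only [List.map_append, List.map_cons, List.prod_append, List.prod_cons, hz1, mul_assoc])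
      rw [← this]; simp only [List.map_append, List.map_cons, List.prod_append, List.prod_cons, hz2, mul_assoc]
    intro L hLN hp
    by_cases hch : L.IsChain fun x y => x.isLeft ≠ y.isLeft
    swap
    · exact hmerge L hLN hch hp
    rcases L with _ | ⟨c, L⟩
    · simp
    rcases L with _ | ⟨c', L⟩
    · cases c with
      | inl a =>
        simp only [List.map_cons, List.map_nil, List.prod_cons, List.prod_nil, mul_one, Sum.elim_inl] at hp ⊢
        rw [hiA (hp.trans (map_one α).symm), map_one]
      | inr a =>
        simp only [List.map_cons, List.map_nil, List.prod_cons, List.prod_nil, mul_one, Sum.elim_inr] at hp ⊢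
        rw [hiB (hp.trans (map_one β).symm), map_one]
    by_cases hgood : ∀ d ∈ c :: c' :: L, Good t₁ t₂ d
    · exact absurd hp (nfLemma hE heq hgen hA hB _ (by simp) hgood hch)
    push Not at hgood
    obtain ⟨x, hx, hbad⟩ := hgood
    obtain ⟨z, hz1, hz2, hz3⟩ : ∃ z : A ⊕ B, val α β z = val α β x ∧
          val g₁ g₂ z = val g₁ g₂ x ∧ z.isLeft ≠ x.isLeft := by
      cases x with
      | inl a =>
        simp only [Good, Sum.elim_inl, not_not] at hbad
        obtain ⟨k, rfl⟩ := hbad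
        exact ⟨Sum.inr (t₂ ^ k), by simp [heq], by simp [hg], by simp⟩
      | inr a =>
        simp only [Good, Sum.elim_inr, not_not] at hbad
        obtain ⟨k, rfl⟩ := hbad
        exact ⟨Sum.inl (t₁ ^ k), by simp [heq], by simp [hg], by simp⟩
    obtain ⟨L1, L2, hL⟩ := List.append_of_mem hx
    have hlen : 2 ≤ (L1 ++ x :: L2).length := by rw [← hL]; simp
    rw [hL] at hch hp hLN ⊢
    have := hmerge (L1 ++ z :: L2) (by rw [← hLN]; simp) (by
      intro hch'
      rcases L2 with _ | ⟨y, L2⟩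
      · rcases List.eq_nil_or_concat' L1 with rfl | ⟨L1', y, rfl⟩
        · simp at hlen
        · rw [List.append_assoc] at hch hch'
          have h1 := (List.isChain_append.1 hch).2.1
          have h2 := (List.isChain_append.1 hch').2.1
          simp only [List.cons_append, List.nil_append, List.isChain_cons_cons] at h1 h2
          have h1 := h1.1
          have h2 := h2.1
          revert h1 h2 hz3
          cases x.isLeft <;> cases y.isLeft <;> cases z.isLeft <;> simp
      · have h1 := (List.isChain_append.1 hch).2.1
        have h2 := (List.isChain_append.1 hch').2.1
        simp only [List.isChain_cons_cons] at h1 h2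
        have h1 := h1.1
        have h2 := h2.1
        revert h1 h2 hz3
        cases x.isLeft <;> cases y.isLeft <;> cases z.isLeft <;> simp) (by
      rw [← hp]; simp only [List.map_append, List.map_cons, List.prod_append, List.prod_cons, hz1])
    rw [← this]
    simp only [List.map_append, List.map_cons, List.prod_append, List.prod_cons, hz2]
  -- every element of the coproduct is a word
  let π : Monoid.Coprod A B →* F := Monoid.Coprod.lift α β
  let γ : Monoid.Coprod A B →* H := Monoid.Coprod.lift g₁ g₂
  have hword : ∀ w : Monoid.Coprod A B, ∃ L : List (A ⊕ B),
      w = (L.map (val Monoid.Coprod.inl Monoid.Coprod.inr)).prod := by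
    intro w
    induction w using Monoid.Coprod.induction_on with
    | inl a => exact ⟨[Sum.inl a], by simp⟩
    | inr a => exact ⟨[Sum.inr a], by simp⟩
    | mul x y hx hy =>
      obtain ⟨L1, rfl⟩ := hx
      obtain ⟨L2, rfl⟩ := hy
      exact ⟨L1 ++ L2, by simp⟩
  have hker : π.ker ≤ γ.ker := by
    intro w hw
    obtain ⟨L, rfl⟩ := hword w
    rw [MonoidHom.mem_ker] at hw ⊢
    rw [map_list_prod, List.map_map] at hw ⊢
    have e1 : (⇑π ∘ val Monoid.Coprod.inl Monoid.Coprod.inr) = val α β := by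
      funext c; cases c <;> simp [π]
    have e2 : (⇑γ ∘ val Monoid.Coprod.inl Monoid.Coprod.inr) = val g₁ g₂ := by
      funext c; cases c <;> simp [γ]
    rw [e1] at hw
    rw [e2]
    exact key _ L rfl hw
  have hsurj : Function.Surjective π := by
    rw [← MonoidHom.range_eq_top, eq_top_iff, ← hgen, sup_le_iff]
    constructor
    · rintro _ ⟨a, rfl⟩; exact ⟨Monoid.Coprod.inl a, by simp [π]⟩
    · rintro _ ⟨a, rfl⟩; exact ⟨Monoid.Coprod.inr a, by simp [π]⟩
  let h : F →* H := π.liftOfSurjective hsurj ⟨γ, hker⟩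
  have hh : ∀ w, h (π w) = γ w := fun w =>
    MonoidHom.liftOfRightInverse_comp_apply π _ (Function.rightInverse_surjInv hsurj) ⟨γ, hker⟩ w
  refine ⟨h, ?_, ?_⟩
  · refine MonoidHom.ext fun a => ?_
    have := hh (Monoid.Coprod.inl a)
    simpa [π, γ] using this
  · refine MonoidHom.ext fun a => ?_
    have := hh (Monoid.Coprod.inr a)
    simpa [π, γ] using this

end
end Shen

namespace Shen
open scoped commutatorElement

section
variable {X Y Z : Type} [Fintype X] [Fintype Y] [Fintype Z]
    {α : FreeGroup X →* FreeGroup Z} {β : FreeGroup Y →* FreeGroup Z}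
    {t₁ : FreeGroup X} {t₂ : FreeGroup Y}

theorem Setup.sep1 (h : Setup α β t₁ t₂) (hind : Indivisible t₁) (p : ℕ) [Fact p.Prime] :
    SepP p α t₁ := by
  intro a ha
  have h1 : ⁅a, t₁⁆ ≠ 1 := by
    intro hc
    exact ha (mem_zpowers_of_commute hind (commutatorElement_eq_one_iff_commute.1 hc))
  have h2 : α ⁅a, t₁⁆ ≠ 1 := by
    intro hc
    exact h1 (h.inj1 (hc.trans (map_one α).symm))
  obtain ⟨P, i1, i2, hP, f, hf⟩ := resP p _ h2
  refine ⟨P, i1, i2, hP, f, ?_⟩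
  rintro ⟨k, hk⟩
  apply hf
  rw [map_commutatorElement, map_commutatorElement, commutatorElement_eq_one_iff_commute, ← hk]
  exact (Commute.refl _).zpow_left k

theorem Setup.base (h : Setup α β t₁ t₂) (h1 : Indivisible t₁) (h2 : Indivisible t₂) :
    Push α β t₁ t₂ := by
  obtain ⟨p, hp, hE⟩ := h.exists_ext
  haveI := Fact.mk hp
  exact push_of_nf hE h.eq h.gen (h.sep1 h1 p) (h.swap.sep1 h2 p) h.inj1 h.inj2

/-- adjoin the root `β s` to the image of `α` -/
theorem Setup.split {s : FreeGroup Y} {p : ℕ} (hp : p ≠ 0) (h : Setup α β t₁ (s ^ p)) :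
    ∃ (a : ℕ) (κ : FreeGroup (Fin a) →* FreeGroup Z) (α' : FreeGroup X →* FreeGroup (Fin a))
      (y : FreeGroup (Fin a)), κ.comp α' = α ∧ κ y = β s ∧
      Setup α' (FreeGroup.lift fun _ : Unit => y) t₁ (FreeGroup.of () ^ p) ∧ Setup κ β y s := by
  classical
  have hs1 : s ≠ 1 := by
    rintro rfl
    exact h.ne2 (one_pow p)
  let φ : FreeGroup (X ⊕ Unit) →* FreeGroup Z :=
    FreeGroup.lift (Sum.elim (fun x => α (FreeGroup.of x)) (fun _ => β s))
  have hφα : φ.comp (FreeGroup.map Sum.inl) = α := by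
    ext x; simp [φ]
  have hφs : φ (FreeGroup.of (Sum.inr ())) = β s := by simp [φ]
  obtain ⟨a, e, ha, hinj⟩ := rkLemma φ
  let κ : FreeGroup (Fin a) →* FreeGroup Z := φ.range.subtype.comp e.toMonoidHom
  have hκi : Function.Injective κ := φ.range.subtype_injective.comp e.injective
  have hκe : ∀ w, κ (e.symm (φ.rangeRestrict w)) = φ w := by intro w; simp [κ]
  let θ : FreeGroup (X ⊕ Unit) →* FreeGroup (Fin a) := e.symm.toMonoidHom.comp φ.rangeRestrict
  have hκθ : ∀ w, κ (θ w) = φ w := hκe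
  have hθ : Function.Surjective θ := e.symm.surjective.comp φ.rangeRestrict_surjective
  let α' : FreeGroup X →* FreeGroup (Fin a) := θ.comp (FreeGroup.map Sum.inl)
  let y := θ (FreeGroup.of (Sum.inr ()))
  have hκα : κ.comp α' = α := by
    rw [← hφα]
    exact MonoidHom.ext fun x => hκθ _
  have hκy : κ y = β s := (hκθ _).trans hφs
  have hrel : α' t₁ = y ^ p := by
    apply hκi
    rw [map_pow, hκy, ← map_pow, ← h.eq]
    exact DFunLike.congr_fun hκα t₁
  have hgen' : κ.range ⊔ β.range = ⊤ := by
    rw [eq_top_iff, ← h.gen]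
    refine sup_le_sup_right ?_ _
    rintro _ ⟨x, rfl⟩
    exact ⟨α' x, DFunLike.congr_fun hκα x⟩
  have hc := h.card
  have ha1 : a ≠ Fintype.card X + 1 := by
    intro ha1
    have hi := hinj (by rw [ha1]; simp)
    have e1 : FreeGroup.map Sum.inl t₁ = (FreeGroup.of (Sum.inr ()) : FreeGroup (X ⊕ Unit)) ^ p := by
      apply hi
      rw [map_pow, hφs, ← map_pow, ← h.eq]
      exact DFunLike.congr_fun hφα t₁
    let ρ : FreeGroup (X ⊕ Unit) →* FreeGroup X := FreeGroup.lift (Sum.elim FreeGroup.of 1)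
    have hρ : ρ.comp (FreeGroup.map Sum.inl) = MonoidHom.id _ := by
      ext x; simp [ρ]
    have e2 := congrArg ρ e1
    apply h.ne1
    rw [← MonoidHom.comp_apply, hρ] at e2
    simpa [ρ] using e2
  have ha2 : ¬ a < Fintype.card X := by
    intro hlt
    haveI : Fact (Nat.Prime 2) := ⟨Nat.prime_two⟩
    obtain ⟨P, _, _, hP, f2, hf2⟩ := resP 2 s hs1
    let Φ : (FreeGroup Z →* P) → (FreeGroup (Fin a) →* P) × (FreeGroup Y →* P) := fun f =>
      (f.comp κ, f.comp β)
    have hΦ : Function.Injective Φ := by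
      intro f g hfg
      exact hom_ext_of_gen hgen' (congrArg Prod.fst hfg) (congrArg Prod.snd hfg)
    have hbij := hΦ.bijective_of_nat_card_le (by
      rw [Nat.card_prod, card_hom, card_hom, card_hom, ← pow_add, Fintype.card_fin]
      exact Nat.pow_le_pow_right (card_pos' P) (by omega))
    obtain ⟨f, hf⟩ := hbij.2 (1, f2)
    apply hf2
    have h1 := DFunLike.congr_fun (congrArg Prod.fst hf) y
    have h2 : f.comp β = f2 := congrArg Prod.snd hf
    rw [← h2, MonoidHom.comp_apply, ← hκy]
    exact h1
  have ha3 : a = Fintype.card X := by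
    simp only [Fintype.card_sum, Fintype.card_unit] at ha
    omega
  have hy1 : y ≠ 1 := by
    intro hy
    rw [hy, map_one] at hκy
    exact hs1 (h.inj2 (hκy.symm.trans (map_one β).symm))
  refine ⟨a, κ, α', y, hκα, hκy, ⟨?_, ?_, h.ne1, ?_, ?_⟩, ⟨?_, hκy, hy1, hs1, hgen'⟩⟩
  · simp [ha3]
  · rw [hrel, map_pow, FreeGroup.lift_apply_of]
  · intro h0
    have := (pow_eq_one_iff.1 h0).resolve_right hp
    exact FreeGroup.of_ne_one _ this
  · rw [eq_top_iff]
    intro w _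
    obtain ⟨v, rfl⟩ := hθ w
    have : (⊤ : Subgroup (FreeGroup (X ⊕ Unit))) ≤
        (α'.range ⊔ (FreeGroup.lift fun _ : Unit => y).range).comap θ := by
      rw [← FreeGroup.closure_range_of, Subgroup.closure_le]
      rintro _ ⟨c, rfl⟩
      rw [SetLike.mem_coe, Subgroup.mem_comap]
      rcases c with x | ⟨⟩
      · refine Subgroup.mem_sup_left ⟨FreeGroup.of x, ?_⟩
        simp [α']
      · refine Subgroup.mem_sup_right ⟨FreeGroup.of (), ?_⟩
        simp [y]
    exact this (Subgroup.mem_top v)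
  · rw [ha3.symm] at hc
    simpa using hc

end

section
variable {X Z : Type} [Fintype X] [Fintype Z]
    {α : FreeGroup X →* FreeGroup Z} {y : FreeGroup Z} {t₁ : FreeGroup X} {p : ℕ} [Fact p.Prime]

theorem Setup.not_removable
    (h : Setup α (FreeGroup.lift fun _ : Unit => y) t₁ (FreeGroup.of () ^ p)) (hind : Indivisible t₁) :
    ¬ PDense p {g | ∃ j, j ≠ Sum.inr () ∧ gens α (FreeGroup.lift fun _ : Unit => y) j = g} := by
  intro hd
  obtain ⟨P, _, _, hP, f1, hf1⟩ := lprime p t₁ hind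
  obtain ⟨f, _, h2⟩ := h.removeR hd hP f1
  apply hf1 (f y)
  rw [h2]
  have : expo () (FreeGroup.of () ^ p) = p := by
    simp [expo]
  rw [this, FreeGroup.lift_apply_of, zpow_natCast]

theorem Setup.exists_expo_p
    (h : Setup α (FreeGroup.lift fun _ : Unit => y) t₁ (FreeGroup.of () ^ p)) (hind : Indivisible t₁) :
    ∃ x, ¬ (p : ℤ) ∣ expo x t₁ := by
  have hp : p.Prime := Fact.out
  obtain ⟨i, hi⟩ := h.removable p
  cases i with
  | inr u => exact absurd hi (h.not_removable hind)
  | inl x₀ =>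
    refine ⟨x₀, ?_⟩
    rintro ⟨k, hk⟩
    have hnr := h.not_removable hind
    unfold PDense at hnr
    push Not at hnr
    obtain ⟨χ, hχ, hχ1⟩ := hnr
    have hχα : ∀ x, χ (α (FreeGroup.of x)) = 1 := fun x => hχ _ ⟨Sum.inl x, by simp, rfl⟩
    have hχy : χ y ≠ 1 := by
      intro hy
      apply hχ1
      refine hom_ext_of_gen h.gen ?_ ?_
      · exact FreeGroup.ext_hom _ _ fun x => hχα x
      · refine FreeGroup.ext_hom _ _ fun x => ?_
        simpa using hy
    haveI : NeZero (p ^ 2) := ⟨pow_ne_zero 2 hp.ne_zero⟩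
    have hP : IsPGroup p (Multiplicative (ZMod (p ^ 2))) := IsPGroup.of_card (n := 2) (by simp)
    obtain ⟨f, hf⟩ := h.removeE hi hP (Sum.elim 1 (fun _ => Multiplicative.ofAdd 1))
    have hfx : ∀ x, x ≠ x₀ → f (α (FreeGroup.of x)) = 1 := by
      intro x hx
      exact hf (Sum.inl x) (by simpa using hx)
    have hfy : f y = Multiplicative.ofAdd 1 := by
      have := hf (Sum.inr ()) (by simp)
      simpa [gens] using this
    let r : ZMod (p ^ 2) →+* ZMod p := ZMod.castHom (dvd_pow_self p two_ne_zero) (ZMod p)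
    let r' : Multiplicative (ZMod (p ^ 2)) →* Multiplicative (ZMod p) := AddMonoidHom.toMultiplicative r.toAddMonoidHom
    let c : ZMod p := (χ y).toAdd
    have hc0 : c ≠ 0 := hχy
    have hχf : χ = (r'.comp f) ^ c.val := by
      refine hi.ext (isPGroup_zmod p) _ _ ?_
      rintro _ ⟨j, hj, rfl⟩
      rcases j with x | ⟨⟩
      · change χ (α (FreeGroup.of x)) = r' (f (α (FreeGroup.of x))) ^ c.val
        rw [hχα, hfx x (by simpa using hj), map_one, one_pow]
      · change χ (FreeGroup.lift (fun _ : Unit => y) (FreeGroup.of ())) = r' (f (FreeGroup.lift (fun _ : Unit => y) (FreeGroup.of ()))) ^ c.val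
        rw [FreeGroup.lift_apply_of, hfy]
        apply Multiplicative.toAdd.injective
        rw [toAdd_pow]
        change c = c.val • r 1
        rw [map_one]
        simp
    let b : ZMod (p ^ 2) := (f (α (FreeGroup.of x₀))).toAdd
    have hrb : r b = 0 := by
      have h1 := DFunLike.congr_fun hχf (α (FreeGroup.of x₀))
      rw [hχα] at h1
      have h2 := congrArg Multiplicative.toAdd h1
      change (0 : ZMod p) = Multiplicative.toAdd (r' (f (α (FreeGroup.of x₀))) ^ c.val) at h2
      rw [toAdd_pow] at h2
      change (0 : ZMod p) = c.val • r b at h2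
      rw [nsmul_eq_mul, ZMod.natCast_val, ZMod.cast_id] at h2
      exact (mul_eq_zero.1 h2.symm).resolve_left hc0
    obtain ⟨m, hm⟩ : p ∣ b.val := by
      rw [← ZMod.natCast_eq_zero_iff, ← map_natCast r, ZMod.natCast_val, ZMod.cast_id]
      exact hrb
    have hb : b = (p : ZMod (p ^ 2)) * m := by
      have : b = ((b.val : ℕ) : ZMod (p ^ 2)) := by simp
      rw [this, hm]; push_cast; rfl
    have e1 := expo_spec x₀ (f.comp α) hfx t₁
    rw [MonoidHom.comp_apply, h.eq, map_pow, FreeGroup.lift_apply_of, map_pow, hfy, hk] at e1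
    have e2 := congrArg Multiplicative.toAdd e1
    rw [toAdd_pow, toAdd_zpow, toAdd_ofAdd] at e2
    change p • (1 : ZMod (p ^ 2)) = ((p : ℤ) * k) • b at e2
    have hpp : (p : ZMod (p ^ 2)) * p = 0 := by
      have := ZMod.natCast_self (p ^ 2)
      rw [pow_two] at this
      push_cast at this
      rw [pow_two]; exact this
    have e3 : (p : ZMod (p ^ 2)) = 0 := by
      rw [hb, nsmul_eq_mul, mul_one, zsmul_eq_mul] at e2
      push_cast at e2
      rw [e2]
      linear_combination (k * m : ZMod (p^2)) * hpp
    rw [ZMod.natCast_eq_zero_iff] at e3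
    have := Nat.le_of_dvd hp.pos e3
    have := hp.one_lt
    nlinarith

theorem Setup.push_sub
    (h : Setup α (FreeGroup.lift fun _ : Unit => y) t₁ (FreeGroup.of () ^ p)) (hind : Indivisible t₁) :
    Push α (FreeGroup.lift fun _ : Unit => y) t₁ (FreeGroup.of () ^ p) := by
  have hp : p.Prime := Fact.out
  obtain ⟨x, hx⟩ := h.exists_expo_p hind
  refine push_of_nf (h.ext1 p x hx) h.eq h.gen (h.sep1 hind p) ?_ h.inj1 h.inj2
  intro b hb
  have hy : y ≠ 1 := by
    intro hy
    have := h.inj2 (a₁ := FreeGroup.of ()) (a₂ := 1) (by simp [hy])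
    exact FreeGroup.of_ne_one _ this
  have hbe : b = FreeGroup.of () ^ expo () b :=
    expo_spec () (MonoidHom.id _) (fun j hj => absurd rfl hj) b
  obtain ⟨P, i1, i2, hP, f, hf⟩ := resP p y hy
  refine ⟨P, i1, i2, hP, f, ?_⟩
  rintro ⟨k, hk⟩
  set j := expo () b with hj
  rw [hbe] at hk
  simp only [map_pow, map_zpow, FreeGroup.lift_apply_of] at hk
  apply hb
  by_cases hdvd : (p : ℤ) ∣ j
  · obtain ⟨i, hi⟩ := hdvd
    refine ⟨i, ?_⟩
    change (FreeGroup.of () ^ p) ^ i = b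
    rw [hbe, hi, zpow_mul, zpow_natCast]
  · exfalso
    apply hf
    have h1 : f y ^ (j - p * k) = 1 := by
      rw [zpow_sub, ← hk, zpow_mul, zpow_natCast, mul_inv_cancel]
    obtain ⟨n, hn⟩ := IsPGroup.iff_orderOf.1 hP (f y)
    have h2 := orderOf_dvd_iff_zpow_eq_one.2 h1
    rw [hn] at h2
    rcases Nat.eq_zero_or_pos n with hn0 | hn0
    · rw [hn0, pow_zero, orderOf_eq_one_iff] at hn
      exact hn
    · exfalso
      apply hdvd
      have h3 : (p : ℤ) ∣ j - p * k := by
        refine dvd_trans ?_ h2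
        exact_mod_cast dvd_pow_self p hn0.ne'
      have := dvd_add h3 (Dvd.intro k rfl)
      simpa using this

theorem Setup.root_indiv
    (h : Setup α (FreeGroup.lift fun _ : Unit => y) t₁ (FreeGroup.of () ^ p)) (hind : Indivisible t₁) :
    Indivisible y := by
  have hp : p.Prime := Fact.out
  have hpush := h.push_sub hind
  intro u k hk
  by_contra hcon
  have hk1 : k.natAbs ≠ 1 := by omega
  obtain ⟨q, hq, d, hd⟩ := Nat.exists_prime_and_dvd hk1
  obtain ⟨w, hw⟩ : ∃ w, w ^ q = y := by
    obtain ⟨d', hd'⟩ : (q : ℤ) ∣ k := Int.natCast_dvd.2 ⟨d, hd⟩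
    refine ⟨u ^ d', ?_⟩
    rw [← hk, hd', mul_comm, zpow_mul, zpow_natCast]
  by_cases hqp : q = p
  · subst hqp
    obtain ⟨g, h1, h2⟩ := hpush (Multiplicative (ZMod q)) 1
      (FreeGroup.lift fun _ => Multiplicative.ofAdd 1) (by
        rw [map_pow, FreeGroup.lift_apply_of, MonoidHom.one_apply, ← ofAdd_nsmul]
        simp)
    have h3 := DFunLike.congr_fun h2 (FreeGroup.of ())
    simp only [MonoidHom.comp_apply, FreeGroup.lift_apply_of] at h3
    rw [← hw, map_pow] at h3
    have h4 := congrArg Multiplicative.toAdd h3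
    rw [toAdd_pow, toAdd_ofAdd] at h4
    simp at h4
  · haveI := Fact.mk hq
    obtain ⟨Q, _, _, hQ, f1, hf1⟩ := lprime q t₁ hind
    have hcop : q.Coprime p := (Nat.coprime_primes hq hp).2 hqp
    obtain ⟨r, hr⟩ := (hQ.powEquiv hcop).surjective (f1 t₁)
    have hr' : r ^ p = f1 t₁ := hr
    obtain ⟨g, h1, h2⟩ := hpush Q f1 (FreeGroup.lift fun _ => r) (by
        rw [map_pow, FreeGroup.lift_apply_of, hr'])
    have h3 := DFunLike.congr_fun h2 (FreeGroup.of ())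
    simp only [MonoidHom.comp_apply, FreeGroup.lift_apply_of] at h3
    apply hf1 (g w ^ p)
    rw [← hr', ← h3, ← hw, map_pow, ← pow_mul, ← pow_mul, mul_comm]

end

theorem main_push (k : ℕ) (hk : 0 < k) : ∀ {X Y Z : Type} [Fintype X] [Fintype Y] [Fintype Z]
    {α : FreeGroup X →* FreeGroup Z} {β : FreeGroup Y →* FreeGroup Z}
    {t₁ : FreeGroup X} {t₀ : FreeGroup Y}, Setup α β t₁ (t₀ ^ k) → Indivisible t₁ → Indivisible t₀ →
    Push α β t₁ (t₀ ^ k) := by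
  induction k using Nat.strong_induction_on with
  | _ k ih =>
  intro X Y Z _ _ _ α β t₁ t₀ h h1 h0
  by_cases hk1 : k = 1
  · subst hk1
    rw [pow_one] at h ⊢
    exact h.base h1 h0
  obtain ⟨p, hp, d, rfl⟩ := Nat.exists_prime_and_dvd hk1
  haveI := Fact.mk hp
  have hd : 0 < d := Nat.pos_of_mul_pos_left hk
  have hlt : d < p * d := by nlinarith [hp.one_lt]
  rw [mul_comm, pow_mul] at h ⊢
  obtain ⟨a, κ, α', y, hκα, hκy, hs1, hs2⟩ := h.split hp.ne_zero
  have hp1 := hs1.push_sub h1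
  have hp2 := ih d hlt hd hs2 (hs1.root_indiv h1) h0
  intro H _ g₁ g₂ hg
  obtain ⟨f1, hf1, hf2⟩ := hp1 H g₁ (FreeGroup.lift fun _ => g₂ (t₀ ^ d)) (by
    rw [hg, map_pow g₂ (t₀ ^ d) p, map_pow (FreeGroup.lift _), FreeGroup.lift_apply_of])
  have hf3 := DFunLike.congr_fun hf2 (FreeGroup.of ())
  simp only [MonoidHom.comp_apply, FreeGroup.lift_apply_of] at hf3
  obtain ⟨f, e1, e2⟩ := hp2 H f1 g₂ hf3
  refine ⟨f, ?_, e2⟩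
  rw [← hκα, ← MonoidHom.comp_assoc, e1, hf1]

theorem Setup.push {X Y Z : Type} [Fintype X] [Fintype Y] [Fintype Z]
    {α : FreeGroup X →* FreeGroup Z} {β : FreeGroup Y →* FreeGroup Z}
    {t₁ : FreeGroup X} {t₂ : FreeGroup Y} (h : Setup α β t₁ t₂)
    (hind : Indivisible t₁ ∨ Indivisible t₂) : Push α β t₁ t₂ := by
  rcases hind with h1 | h1
  · obtain ⟨t₀, k, hk, h0, rfl⟩ := exists_indiv_root t₂ h.ne2
    exact main_push k hk h h1 h0
  · obtain ⟨t₀, k, hk, h0, rfl⟩ := exists_indiv_root t₁ h.ne1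
    exact (main_push k hk h.swap h1 h0).swap

end Shen

/-- Improved Shenitzer theorem: let `G = F₁ *_⟨t⟩ F₂` with `F₁, F₂` free of
ranks `n` and `m` and `t` a nontrivial element of both factors.  If `t` is
indivisible in at least one of the factors and `G` surjects onto a free group
of rank `n + m − 1`, then `G` is free of rank `n + m − 1`. -/
theorem improved_shenitzer (n m : ℕ)
    (t₁ : FreeGroup (Fin n)) (t₂ : FreeGroup (Fin m))
    (h₁ : t₁ ≠ 1) (h₂ : t₂ ≠ 1)
    (hind : Indivisible t₁ ∨ Indivisible t₂)
    (hcorank : ∃ ψ : Amalgam t₁ t₂ →* FreeGroup (Fin (n + m - 1)),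
      Function.Surjective ψ) :
    Nonempty (Amalgam t₁ t₂ ≃* FreeGroup (Fin (n + m - 1))) := by
  classical
  obtain ⟨ψ, hψ⟩ := hcorank
  have hn : 0 < n := by
    rcases Nat.eq_zero_or_pos n with rfl | h
    · exact absurd (Subsingleton.elim _ _) h₁
    · exact h
  have hm : 0 < m := by
    rcases Nat.eq_zero_or_pos m with rfl | h
    · exact absurd (Subsingleton.elim _ _) h₂
    · exact h
  let π : Monoid.Coprod (FreeGroup (Fin n)) (FreeGroup (Fin m)) →* Amalgam t₁ t₂ :=
    QuotientGroup.mk' _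
  have hπs : Function.Surjective π := QuotientGroup.mk'_surjective _
  have hπ : π (Monoid.Coprod.inl t₁) = π (Monoid.Coprod.inr t₂) := by
    have h0 : π (Monoid.Coprod.inl t₁ * (Monoid.Coprod.inr t₂)⁻¹) = 1 :=
      (QuotientGroup.eq_one_iff _).2 (Subgroup.subset_normalClosure rfl)
    rw [map_mul, map_inv] at h0
    exact mul_inv_eq_one.1 h0
  have hs : Shen.Setup ((ψ.comp π).comp Monoid.Coprod.inl) ((ψ.comp π).comp Monoid.Coprod.inr)
      t₁ t₂ := by
    refine ⟨?_, ?_, h₁, h₂, ?_⟩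
    · simp only [Fintype.card_fin]
      omega
    · simp only [MonoidHom.comp_apply, hπ]
    · rw [← Monoid.Coprod.range_eq]
      exact MonoidHom.range_eq_top.2 (hψ.comp hπs)
  obtain ⟨h, e1, e2⟩ := hs.push hind (Amalgam t₁ t₂) (π.comp Monoid.Coprod.inl)
    (π.comp Monoid.Coprod.inr) hπ
  have key : (h.comp ψ).comp π = π := Monoid.Coprod.hom_ext e1 e2
  have hinj : Function.Injective ψ := by
    refine Function.LeftInverse.injective (g := h) fun x => ?_
    obtain ⟨y, rfl⟩ := hπs x
    exact DFunLike.congr_fun key y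
  exact ⟨MulEquiv.ofBijective ψ ⟨hinj, hψ⟩⟩
end

section
/- In a free group F, an element γ is conjugate into a proper free factor of a splitting F = F₁ * ⟨α⟩ with α primitive if and only if γ either is conjugate to a power of α or conjugate into F₁; consequently, if G = F * ⟨s | s^k = γ⟩ with γ indivisible and G is free, then γ is a basis element of F. -/
/-- `x` is a basis (primitive) element of the group `F`. -/
def IsBasisElem {F : Type} [Group F] (x : F) : Prop :=
  ∃ s : Set F, x ∈ s ∧ Function.Bijective ⇑(FreeGroup.lift (Subtype.val : s → F))

/-- `F` decomposes as the internal free product `F₁ * ⟨α⟩`: the natural map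
from the abstract free product of the subgroups `F₁` and `⟨α⟩` to `F` is an
isomorphism. -/
def IsFreeDecomp {F : Type} [Group F] (F₁ : Subgroup F) (α : F) : Prop :=
  Function.Bijective
    ⇑(Monoid.Coprod.lift F₁.subtype (Subgroup.zpowers α).subtype)

/-- The group `⟨F, s | s^k = γ⟩`. -/
abbrev RootAdj {n : ℕ} (γ : FreeGroup (Fin n)) (k : ℕ) : Type :=
  (Monoid.Coprod (FreeGroup (Fin n)) (FreeGroup Unit)) ⧸
    Subgroup.normalClosure
      {(Monoid.Coprod.inr (FreeGroup.of ())) ^ k * (Monoid.Coprod.inl γ)⁻¹}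


/-- filter of a range -/
noncomputable def fil (l : ℕ) (p : ℕ → Prop) : Finset ℕ :=
  @Finset.filter _ p (Classical.decPred _) (Finset.range l)

@[simp] theorem mem_fil {l : ℕ} {p : ℕ → Prop} {j : ℕ} : j ∈ fil l p ↔ j < l ∧ p j := by
  simp [fil]

theorem fil_or (l : ℕ) (p q : ℕ → Prop) : fil l (fun j => p j ∨ q j) = fil l p ∪ fil l q := by
  ext j
  simp only [mem_fil, Finset.mem_union]
  tauto

theorem fil_disj {l : ℕ} {p q : ℕ → Prop} :
    Disjoint (fil l p) (fil l q) ↔ ∀ j < l, p j → ¬ q j := by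
  rw [Finset.disjoint_left]
  simp only [mem_fil]
  constructor
  · intro h j hj hp hq
    exact h ⟨hj, hp⟩ ⟨hj, hq⟩
  · rintro h j ⟨hj, hp⟩ ⟨_, hq⟩
    exact h j hj hp hq

open Classical in
theorem shift_card {Λ : Type} (y : ℕ → Λ) (l : ℕ) (hy : y l = y 0) (p : Λ → Prop) :
    (fil l (fun j => p (y (j+1)))).card
      = (fil l (fun j => p (y j))).card := by
  rw [fil, fil, Finset.card_filter, Finset.card_filter]
  have h1 := Finset.sum_range_succ (fun j => if p (y j) then 1 else 0) l
  have h2 := Finset.sum_range_succ' (fun j => if p (y j) then 1 else 0) l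
  rw [hy] at h1
  omega

/-- inverse letter -/
def linv {α : Type} (a : α × Bool) : α × Bool := (a.1, !a.2)

theorem linv_linv {α : Type} (a : α × Bool) : linv (linv a) = a := by
  simp [linv]

theorem linv_ne {α : Type} (a : α × Bool) : linv a ≠ a := by
  rcases a with ⟨a, b⟩
  simp [linv]

theorem linv_eq_iff {α : Type} (a b : α × Bool) : linv a = b ↔ a = linv b := by
  constructor
  · rintro rfl; rw [linv_linv]
  · rintro rfl; rw [linv_linv]

theorem linv_inj {α : Type} {a b : α × Bool} (h : linv a = linv b) : a = b := by
  rw [← linv_linv a, h, linv_linv]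

/-- number of occurrences of `a` and its inverse in the cyclic word -/
noncomputable def degW {α : Type} (y : ℕ → α × Bool) (l : ℕ) (a : α × Bool) : ℕ :=
  (fil l (fun j => y j = a ∨ y j = linv a)).card

/-- number of edges of the Whitehead graph leaving `A` -/
noncomputable def cutW {α : Type} (y : ℕ → α × Bool) (l : ℕ) (A : Set (α × Bool)) : ℕ :=
  (fil l (fun j => ¬ (linv (y j) ∈ A ↔ y (j+1) ∈ A))).card

/-- the minimality condition -/
def WMin {α : Type} (y : ℕ → α × Bool) (l : ℕ) : Prop :=
  ∀ (A : Set (α × Bool)) (a : α × Bool), a ∈ A → linv a ∉ A → degW y l a ≤ cutW y l A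

open Classical in
theorem degW_eq {α : Type} (y : ℕ → α × Bool) (l : ℕ) (hy : y l = y 0) (a : α × Bool) :
    degW y l a = (fil l (fun j => y j = linv a)).card
      + (fil l (fun j => y (j+1) = a)).card := by
  rw [shift_card y l hy (fun b => b = a), degW, fil_or, Finset.card_union_of_disjoint,
    add_comm]
  rw [fil_disj]
  intro j _ h1 h2
  exact linv_ne a (h2.symm.trans h1)

theorem per_all {α : Type} (y : ℕ → α) (l : ℕ) (_hl : 0 < l) (hp : ∀ j, y (j + l) = y j) (j : ℕ) :
    y j = y (j % l) := by
  have : ∀ q r, y (r + q * l) = y r := by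
    intro q
    induction q with
    | zero => simp
    | succ q ih =>
      intro r
      rw [add_mul, one_mul, ← add_assoc, hp, ih]
  conv_lhs => rw [← Nat.mod_add_div j l, mul_comm]
  exact this _ _

open Classical in
theorem WMin.red {α : Type} {y : ℕ → α × Bool} {l : ℕ} (hl : 0 < l) (hp : ∀ j, y (j + l) = y j)
    (hW : WMin y l) (j : ℕ) : y (j+1) ≠ linv (y j) := by
  intro hj
  have hy : y l = y 0 := by simpa using hp 0
  set a := y j with ha
  have h1 := hW {b | b ≠ linv a} a (fun h => linv_ne a h.symm) (by simp)
  rw [degW_eq y l hy, shift_card y l hy (fun b => b = a)] at h1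
  rw [← shift_card y l hy (fun b => b = linv a)] at h1
  have h2 : cutW y l {b | b ≠ linv a} <
    (fil l (fun j => y (j+1) = linv a)).card
      + (fil l (fun j => y j = a)).card := by
    have hsub : fil l (fun i => ¬ (linv (y i) ∈ {b | b ≠ linv a} ↔ y (i+1) ∈ {b | b ≠ linv a}))
       ⊆ (fil l (fun j => y (j+1) = linv a) ∪
        fil l (fun j => y j = a)).erase (j % l) := by
      intro i hi
      simp only [mem_fil, Set.mem_ofPred_eq, Finset.mem_erase,
        Finset.mem_union] at hi ⊢
      obtain ⟨hi1, hi2⟩ := hi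
      have e1 : linv (y i) = linv a ↔ y i = a := ⟨linv_inj, fun h => by rw [h]⟩
      refine ⟨?_, ?_⟩
      · rintro rfl
        apply hi2
        have e2 : y (j % l) = a := by rw [← per_all y l hl hp, ← ha]
        have e3 : y (j % l + 1) = linv a := by
          rw [← hj, per_all y l hl hp, per_all y l hl hp (j+1)]
          simp
        simp [e2, e3]
      · by_contra hcon
        apply hi2
        rw [ne_eq, e1]
        tauto
    have hmem : j % l ∈ (fil l (fun j => y (j+1) = linv a) ∪
        fil l (fun j => y j = a)) := by
      simp only [mem_fil, Finset.mem_union]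
      right
      exact ⟨Nat.mod_lt _ hl, by rw [← per_all y l hl hp, ← ha]⟩
    calc cutW y l {b | b ≠ linv a} ≤ _ := Finset.card_le_card hsub
      _ < _ := Finset.card_erase_lt_of_mem hmem
      _ ≤ _ := Finset.card_union_le _ _
  omega

open Classical in
theorem WMin.once {α : Type} {y : ℕ → α × Bool} {l : ℕ} (hl : 0 < l) (hp : ∀ j, y (j + l) = y j)
    (hW : WMin y l) (j : ℕ) (hj : j < l) (hd : degW y l (y j) ≤ 1) : l = 1 := by
  by_contra hne
  have hl2 : 2 ≤ l := by omega
  have hy : y l = y 0 := by simpa using hp 0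
  have huniq : ∀ i < l, (y i = y j ∨ y i = linv (y j)) → i = j := by
    intro i hi h
    rw [degW, Finset.card_le_one] at hd
    exact hd i (by simp [hi, h]) j (by simp [hj])
  have huniq' : ∀ i, (y i = y j ∨ y i = linv (y j)) → i % l = j := by
    intro i h
    apply huniq _ (Nat.mod_lt _ hl)
    rwa [← per_all y l hl hp]
  have hj1 : (j + 1) % l ≠ j := by
    intro h
    rcases Nat.lt_or_ge (j+1) l with h1 | h1
    · rw [Nat.mod_eq_of_lt h1] at h; omega
    · have : j + 1 = l := by omega
      rw [this, Nat.mod_self] at h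
      omega
  set a := y (j+1) with ha
  have ha1 : a ≠ y j := fun h => hj1 (huniq' _ (Or.inl h))
  have ha2 : a ≠ linv (y j) := fun h => hj1 (huniq' _ (Or.inr h))
  have h1 := hW {a, linv (y j)} a (by simp) (by
    simp only [Set.mem_insert_iff, Set.mem_singleton_iff, not_or]
    exact ⟨linv_ne a, fun h => ha1 (linv_inj h)⟩)
  rw [degW_eq y l hy] at h1
  have h2 : cutW y l {a, linv (y j)} <
    (fil l (fun j => y j = linv a)).card
      + (fil l (fun j => y (j+1) = a)).card := by
    have hsub : fil l (fun i => ¬ (linv (y i) ∈ ({a, linv (y j)} : Set _) ↔ y (i+1) ∈ ({a, linv (y j)} : Set _)))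
       ⊆ (fil l (fun j => y j = linv a) ∪
        fil l (fun j => y (j+1) = a)).erase j := by
      intro i hi
      simp only [mem_fil, Set.mem_insert_iff, Set.mem_singleton_iff, Finset.mem_erase,
        Finset.mem_union] at hi ⊢
      obtain ⟨hi1, hi2⟩ := hi
      have hij : i ≠ j := by
        rintro rfl
        apply hi2
        simp [← ha]
      refine ⟨hij, ?_⟩
      have e1 : linv (y i) ≠ linv (y j) := fun h => hij (huniq i hi1 (Or.inl (linv_inj h)))
      have e2 : y (i+1) ≠ linv (y j) := by
        intro h
        have h3 := huniq' (i+1) (Or.inr h)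
        have h4 := hW.red hl hp i
        -- y (i+1) is y j since i+1 ≡ j
        have h5 : y (i+1) = y j := by rw [per_all y l hl hp, h3]
        rw [h5] at h
        exact linv_ne _ h.symm
      have e3 := linv_eq_iff (y i) a
      by_contra hcon
      apply hi2
      tauto
    have hmem : j ∈ (fil l (fun j => y j = linv a) ∪
        fil l (fun j => y (j+1) = a)) := by
      simp only [mem_fil, Finset.mem_union]
      right
      exact ⟨hj, ha.symm⟩
    calc cutW y l {a, linv (y j)} ≤ _ := Finset.card_le_card hsub
      _ < _ := Finset.card_erase_lt_of_mem hmem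
      _ ≤ _ := Finset.card_union_le _ _
  omega

open Classical in
/-- Core case 1: a set with exactly one cut edge. -/
theorem WMin.case_one {α : Type} {y : ℕ → α × Bool} {l : ℕ} (hl : 0 < l)
    (hp : ∀ j, y (j + l) = y j)
    (hW : WMin y l) (C : Set (α × Bool)) (h0 : y 0 ∈ C) (hlast : linv (y (l-1)) ∉ C)
    (hC : ∀ j, j + 1 < l → (linv (y j) ∈ C ↔ y (j+1) ∈ C)) : l = 1 := by
  have hcut : cutW y l C ≤ 1 := by
    rw [cutW, Finset.card_le_one]
    have : ∀ i ∈ fil l (fun j => ¬ (linv (y j) ∈ C ↔ y (j+1) ∈ C)), i = l - 1 := by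
      intro i hi
      simp only [mem_fil] at hi
      by_contra hne
      exact hi.2 (hC i (by omega))
    intro a ha b hb
    rw [this a ha, this b hb]
  by_contra hne
  have key : ∀ j < l, (y j ∈ C ↔ linv (y j) ∈ C) := by
    intro j hj
    by_contra hcon
    apply hne
    apply hW.once hl hp j hj
    by_cases h : y j ∈ C
    · have h' : linv (y j) ∉ C := by tauto
      exact (hW C _ h h').trans hcut
    · have h' : linv (y j) ∈ C := by tauto
      have := (hW C _ h' (by rwa [linv_linv])).trans hcut
      rw [degW] at this ⊢
      rw [linv_linv] at this
      simpa only [or_comm] using this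
  have : ∀ j < l, y j ∈ C := by
    intro j
    induction j with
    | zero => intro _; exact h0
    | succ j ih =>
      intro hj
      rw [← hC j hj, ← key j (by omega)]
      exact ih (by omega)
  exact hlast ((key (l-1) (by omega)).1 (this _ (by omega)))

open Classical in
/-- Core case 2: a cut vertex. -/
theorem WMin.case_two {α : Type} {y : ℕ → α × Bool} {l : ℕ} (hl : 0 < l)
    (hp : ∀ j, y (j + l) = y j)
    (hW : WMin y l) (C : Set (α × Bool)) (p : α × Bool) (hpS : ∃ j, p = y j ∨ p = linv (y j))
    (hCS : ∃ c ∈ C, ∃ j, c = y j ∨ c = linv (y j))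
    (hpC : p ∉ C) (hpC' : linv p ∉ C)
    (hC : ∀ j < l, linv (y j) ≠ p → y (j+1) ≠ p → (linv (y j) ∈ C ↔ y (j+1) ∈ C)) : False := by
  have hy : y l = y 0 := by simpa using hp 0
  have h1 := hW (insert p C) p (by simp) (by
    simp only [Set.mem_insert_iff, not_or]; exact ⟨linv_ne p, hpC'⟩)
  have hred := hW.red hl hp
  have hdeg : degW y l p = (fil l (fun j => linv (y j) = p ∨ y (j+1) = p)).card := by
    rw [degW_eq y l hy, fil_or, Finset.card_union_of_disjoint]
    · simp only [linv_eq_iff]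
    · rw [fil_disj]
      intro j _ h1 h2
      exact hred j (h2.trans h1.symm)
  have hsub : fil l (fun j => ¬ (linv (y j) ∈ insert p C ↔ y (j+1) ∈ insert p C))
      ⊆ fil l (fun j => linv (y j) = p ∨ y (j+1) = p) := by
    intro i hi
    simp only [mem_fil, Set.mem_insert_iff] at hi ⊢
    refine ⟨hi.1, ?_⟩
    by_contra hcon
    push Not at hcon
    have := hC i hi.1 hcon.1 hcon.2
    tauto
  have heq := Finset.eq_of_subset_of_card_le hsub (by rw [← hdeg]; exact h1)
  have hall' : ∀ j < l, (linv (y j) ∈ C ↔ y (j+1) ∈ C) := by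
    intro j hj
    by_cases h : linv (y j) = p ∨ y (j+1) = p
    · have hm : j ∈ fil l (fun j => linv (y j) = p ∨ y (j+1) = p) := by
        simp [hj, h]
      rw [← heq] at hm
      simp only [mem_fil, Set.mem_insert_iff] at hm
      have := hm.2
      rcases h with h | h
      · rw [h] at this ⊢; tauto
      · rw [h] at this ⊢; tauto
    · push Not at h
      exact hC j hj h.1 h.2
  have hcut : cutW y l C = 0 := by
    rw [cutW, Finset.card_eq_zero, Finset.eq_empty_iff_forall_notMem]
    intro j hj
    rw [mem_fil] at hj
    exact hj.2 (hall' j hj.1)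
  have hall : ∀ j, (linv (y j) ∈ C ↔ y (j+1) ∈ C) := by
    intro j
    have := hall' (j % l) (Nat.mod_lt _ hl)
    rw [← per_all y l hl hp j] at this
    rw [this, per_all y l hl hp (j+1), per_all y l hl hp (j % l + 1)]
    simp
  have hdpos : ∀ j, 0 < degW y l (y j) ∧ 0 < degW y l (linv (y j)) := by
    intro j
    constructor
    · rw [degW, Finset.card_pos]
      refine ⟨j % l, ?_⟩
      simp [Nat.mod_lt _ hl, ← per_all y l hl hp j]
    · rw [degW, Finset.card_pos]
      refine ⟨j % l, ?_⟩
      simp [Nat.mod_lt _ hl, ← per_all y l hl hp j, linv_linv]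
  have key : ∀ j, (y j ∈ C ↔ linv (y j) ∈ C) := by
    intro j
    constructor
    · intro h
      by_contra h'
      have := hW C _ h h'
      have := (hdpos j).1
      omega
    · intro h
      by_contra h'
      have := hW C _ h (by rwa [linv_linv])
      have := (hdpos j).2
      omega
  have hst : ∀ j, (y j ∈ C ↔ y 0 ∈ C) := by
    intro j
    induction j with
    | zero => rfl
    | succ j ih => rw [← hall, ← key, ih]
  have hst' : ∀ c, (∃ j, c = y j ∨ c = linv (y j)) → (c ∈ C ↔ y 0 ∈ C) := by
    rintro c ⟨j, rfl | rfl⟩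
    · exact hst j
    · rw [← key, hst]
  obtain ⟨c, hcC, hc⟩ := hCS
  exact hpC ((hst' p hpS).2 ((hst' c hc).1 hcC))

open Classical in
/-- indicator -/
noncomputable def indA {Λ : Type} (A : Set Λ) (b : Λ) : ℤ := if b ∈ A then 1 else 0

/-- letter as an element -/
def lt {α : Type} (a : α × Bool) : FreeGroup α := FreeGroup.mk [a]

theorem lt_linv {α : Type} (a : α × Bool) : lt (linv a) = (lt a)⁻¹ := by
  simp [lt, linv, FreeGroup.inv_mk, FreeGroup.invRev]

theorem lt_true {α : Type} (x : α) : lt (x, true) = FreeGroup.of x := rfl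

theorem lt_false {α : Type} (x : α) : lt (x, false) = (FreeGroup.of x)⁻¹ := by
  rw [← lt_true, ← lt_linv]; rfl

open Classical in
/-- Whitehead endomorphism -/
noncomputable def wh {α : Type} (A : Set (α × Bool)) (a : α × Bool) (t : ℤ) :
    FreeGroup α →* FreeGroup α :=
  FreeGroup.lift (fun x => if x = a.1 then FreeGroup.of x else
    (lt a) ^ (t * indA A (x, true)) * FreeGroup.of x * (lt a) ^ (-t * indA A (x, false)))

theorem wh_lt {α : Type} (A : Set (α × Bool)) (a : α × Bool) (t : ℤ) :
    wh A a t (lt a) = lt a := by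
  rcases a with ⟨x, b⟩
  cases b
  · simp [lt_false, wh]
  · simp [lt_true, wh]

theorem wh_comp {α : Type} (A : Set (α × Bool)) (a : α × Bool) (t : ℤ) :
    (wh A a t).comp (wh A a (-t)) = MonoidHom.id _ := by
  ext x
  by_cases h : x = a.1
  · subst h; simp [wh]
  · have e : wh A a (-t) (FreeGroup.of x) = (lt a) ^ (-t * indA A (x, true)) * FreeGroup.of x * (lt a) ^ (t * indA A (x, false)) := by
      simp [wh, h]
    have e' : wh A a t (FreeGroup.of x) = (lt a) ^ (t * indA A (x, true)) * FreeGroup.of x * (lt a) ^ (-t * indA A (x, false)) := by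
      simp [wh, h]
    rw [MonoidHom.comp_apply, e, map_mul, map_mul, map_zpow, map_zpow, wh_lt, e', MonoidHom.id_apply]
    simp only [mul_assoc, neg_mul, zpow_neg, inv_mul_cancel_left, inv_mul_cancel, mul_one]

/-- Whitehead automorphism -/
noncomputable def whE {α : Type} (A : Set (α × Bool)) (a : α × Bool) :
    FreeGroup α ≃* FreeGroup α :=
  MonoidHom.toMulEquiv (wh A a 1) (wh A a (-1))
    (by simpa using wh_comp A a (-1)) (wh_comp A a 1)

open Classical in
/-- letter with a deleted -/
noncomputable def lt' {α : Type} (a b : α × Bool) : FreeGroup α :=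
  if b = a ∨ b = linv a then 1 else lt b

theorem whE_lt {α : Type} (A : Set (α × Bool)) (a : α × Bool) (ha : a ∈ A) (ha' : linv a ∉ A)
    (b : α × Bool) :
    whE A a (lt b) = (lt a) ^ (indA A b) * lt' a b * (lt a) ^ (-indA A (linv b)) := by
  have hdef : whE A a (lt b) = wh A a 1 (lt b) := rfl
  rw [hdef]
  by_cases h : b = a
  · subst h
    simp [wh_lt, lt', indA, ha, ha']
  by_cases h2 : b = linv a
  · subst h2
    rw [lt_linv, map_inv, wh_lt]
    simp [lt', indA, ha, ha', linv_linv]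
  rw [lt', if_neg (by tauto)]
  have hx : b.1 ≠ a.1 := by
    intro hx
    rcases a with ⟨x, s⟩
    rcases b with ⟨x', s'⟩
    simp only [linv, Prod.mk.injEq] at *
    subst hx
    cases s <;> cases s' <;> simp_all
  rcases b with ⟨x, s⟩
  simp only at hx
  have e' : wh A a 1 (FreeGroup.of x) = (lt a) ^ (indA A (x, true)) * FreeGroup.of x * (lt a) ^ (- indA A (x, false)) := by
      simp [wh, hx]
  cases s
  · rw [lt_false, map_inv, e']
    simp [linv, mul_assoc]
  · rw [lt_true, e']
    simp [linv]

theorem wh_prod {α : Type} (A : Set (α × Bool)) (a : α × Bool) (ha : a ∈ A) (ha' : linv a ∉ A)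
    (y : ℕ → α × Bool) (m : ℕ) :
    whE A a (((List.range m).map (fun j => lt (y j))).prod) =
      (lt a) ^ (indA A (y 0)) *
        ((List.range m).map (fun j => lt' a (y j) *
          (lt a) ^ (indA A (y (j+1)) - indA A (linv (y j))))).prod * (lt a) ^ (- indA A (y m)) := by
  induction m with
  | zero => simp
  | succ m ih =>
    rw [List.range_succ, List.map_append, List.prod_append, map_mul, ih]
    simp only [List.map_cons, List.map_nil, List.prod_cons, List.prod_nil, mul_one,
      List.map_append, List.prod_append, whE_lt A a ha ha']
    simp only [zpow_sub, zpow_neg]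
    group

theorem fg_norm_prod_le {α : Type} [DecidableEq α] (f : ℕ → FreeGroup α) (m : ℕ) :
    (((List.range m).map f).prod).norm ≤ ∑ j ∈ Finset.range m, (f j).norm := by
  induction m with
  | zero => simp
  | succ m ih =>
    rw [List.range_succ, List.map_append, List.prod_append, Finset.sum_range_succ]
    refine (FreeGroup.norm_mul_le _ _).trans ?_
    simpa using ih

theorem norm_lt_le {α : Type} [DecidableEq α] (a : α × Bool) : (lt a).norm ≤ 1 :=
  FreeGroup.norm_mk_le

/-- minimal norm in the automorphism orbit implies the Whitehead inequality -/
theorem wmin_of_min {α : Type} [DecidableEq α] (y : ℕ → α × Bool) (l : ℕ) (hy : y l = y 0)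
    (hmin : ∀ ψ : FreeGroup α ≃* FreeGroup α,
      l ≤ (ψ (((List.range l).map (fun j => lt (y j))).prod)).norm) : WMin y l := by
  classical
  intro A a ha ha'
  set g := ((List.range l).map (fun j => lt (y j))).prod with hg
  have h1 := hmin ((whE A a).trans (MulAut.conj ((lt a) ^ (-indA A (y 0)))))
  have h2 : ((whE A a).trans (MulAut.conj ((lt a) ^ (-indA A (y 0))))) g =
    ((List.range l).map (fun j => lt' a (y j) *
          (lt a) ^ (indA A (y (j+1)) - indA A (linv (y j))))).prod := by
    rw [MulEquiv.trans_apply, MulAut.conj_apply, hg, wh_prod A a ha ha', hy]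
    group
  rw [h2] at h1
  have h3 := h1.trans (fg_norm_prod_le _ l)
  have h4 : ∀ j, (lt' a (y j) * (lt a) ^ (indA A (y (j+1)) - indA A (linv (y j)))).norm
     + (if y j = a ∨ y j = linv a then 1 else 0) ≤ 1 + (if ¬ (linv (y j) ∈ A ↔ y (j+1) ∈ A) then 1 else 0) := by
    intro j
    have e1 : (lt' a (y j)).norm + (if y j = a ∨ y j = linv a then 1 else 0) ≤ 1 := by
      rw [lt']
      split_ifs
      · simp
      · simpa using norm_lt_le _
    have e2 : ((lt a) ^ (indA A (y (j+1)) - indA A (linv (y j)))).norm ≤ (if ¬ (linv (y j) ∈ A ↔ y (j+1) ∈ A) then 1 else 0) := by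
      have := norm_lt_le a
      by_cases c1 : linv (y j) ∈ A <;> by_cases c2 : y (j+1) ∈ A <;> simp [indA, c1, c2, this]
    have := FreeGroup.norm_mul_le (lt' a (y j)) ((lt a) ^ (indA A (y (j+1)) - indA A (linv (y j))))
    omega
  have h5 := Finset.sum_le_sum (fun j (_ : j ∈ Finset.range l) => h4 j)
  rw [Finset.sum_add_distrib, Finset.sum_add_distrib] at h5
  have h6 : degW y l a = ∑ j ∈ Finset.range l, (if y j = a ∨ y j = linv a then 1 else 0) := by
    rw [degW, ← Finset.card_filter]
    congr 1; ext j; simp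
  have h7 : cutW y l A = ∑ j ∈ Finset.range l, (if ¬ (linv (y j) ∈ A ↔ y (j+1) ∈ A) then 1 else 0) := by
    rw [cutW, ← Finset.card_filter]
    congr 1; ext j; simp
  rw [h6, h7]
  simp only [Finset.sum_const, Finset.card_range, smul_eq_mul, mul_one] at h5
  omega

/-- segment of an infinite word -/
def seg {Λ : Type} (y : ℕ → Λ) : ℕ → ℕ → List Λ
  | _, 0 => []
  | i, m + 1 => y i :: seg y (i + 1) m

theorem seg_add {Λ : Type} (y : ℕ → Λ) (i m m' : ℕ) :
    seg y i (m + m') = seg y i m ++ seg y (i + m) m' := by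
  induction m generalizing i with
  | zero => simp [seg]
  | succ m ih =>
    have : m + 1 + m' = (m + m') + 1 := by omega
    rw [this, seg, seg, ih]
    simp [add_assoc, add_comm 1 m]

theorem seg_succ {Λ : Type} (y : ℕ → Λ) (i m : ℕ) :
    seg y i (m + 1) = seg y i m ++ [y (i + m)] := by
  rw [seg_add]; rfl

theorem seg_len {Λ : Type} (y : ℕ → Λ) (i m : ℕ) : (seg y i m).length = m := by
  induction m generalizing i with
  | zero => rfl
  | succ m ih => simp [seg, ih]

theorem mem_seg {Λ : Type} (y : ℕ → Λ) (i m : ℕ) (b : Λ) (h : b ∈ seg y i m) : ∃ j, b = y j := by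
  induction m generalizing i with
  | zero => simp [seg] at h
  | succ m ih =>
    rw [seg, List.mem_cons] at h
    rcases h with h | h
    · exact ⟨_, h⟩
    · exact ih _ h

theorem seg_per {Λ : Type} (y : ℕ → Λ) (l : ℕ) (hp : ∀ j, y (j + l) = y j) (q i m : ℕ) :
    seg y (i + q * l) m = seg y i m := by
  have hq : ∀ i, y (i + q * l) = y i := by
    induction q with
    | zero => simp
    | succ q ih => intro i; rw [add_mul, one_mul, ← add_assoc, hp, ih]
  induction m generalizing i with
  | zero => rfl
  | succ m ih =>
    rw [seg, seg, hq]
    have : i + q * l + 1 = i + 1 + q * l := by omega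
    rw [this, ih]

theorem red_iff {α : Type} (a b : α × Bool) : (a.1 = b.1 → a.2 = b.2) ↔ b ≠ linv a := by
  rcases a with ⟨x, s⟩
  rcases b with ⟨x', s'⟩
  simp only [linv, ne_eq, Prod.mk.injEq, not_and]
  cases s <;> cases s' <;> simp [eq_comm]

theorem seg_red {α : Type} (y : ℕ → α × Bool) (hred : ∀ j, y (j+1) ≠ linv (y j)) (i m : ℕ) :
    FreeGroup.IsReduced (seg y i m) := by
  induction m generalizing i with
  | zero => exact FreeGroup.IsReduced.nil
  | succ m ih =>
    cases m with
    | zero => exact FreeGroup.IsReduced.singleton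
    | succ m =>
      rw [seg, seg, FreeGroup.isReduced_cons_cons]
      exact ⟨(red_iff _ _).2 (hred i), ih (i+1)⟩

theorem invRev_red {α : Type} {u : List (α × Bool)} (h : FreeGroup.IsReduced u) :
    FreeGroup.IsReduced (FreeGroup.invRev u) := by
  classical
  rw [FreeGroup.isReduced_iff_reduce_eq] at h ⊢
  rw [FreeGroup.reduce_invRev, h]

theorem eq_of_mk {α : Type} {u v : List (α × Bool)} (hu : FreeGroup.IsReduced u)
    (hv : FreeGroup.IsReduced v) (h : FreeGroup.mk u = FreeGroup.mk v) : u = v := by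
  classical
  have := FreeGroup.reduce.sound h
  rwa [hu.reduce_eq, hv.reduce_eq] at this

/-- letters occurring -/
def Occ {α : Type} (y : ℕ → α × Bool) (b : α × Bool) : Prop := ∃ j, b = y j ∨ b = linv (y j)

/-- reduced words in the occurring letters -/
def SW {α : Type} (y : ℕ → α × Bool) (u : List (α × Bool)) : Prop :=
  FreeGroup.IsReduced u ∧ ∀ b ∈ u, Occ y b

/-- eventual constancy -/
def Good {α : Type} (y : ℕ → α × Bool) (B : FreeGroup α → ℤ) (w : List (α × Bool)) (c : ℤ) : Prop :=
  ∃ M : ℕ, ∀ u, SW y u → w <+: u → M ≤ u.length → B (FreeGroup.mk u) = c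

theorem gpow_seg {α : Type} (y : ℕ → α × Bool) (l : ℕ) (hp : ∀ j, y (j + l) = y j) (m : ℕ) :
    FreeGroup.mk (seg y 0 l) ^ m = FreeGroup.mk (seg y 0 (m * l)) := by
  induction m with
  | zero => simp [seg]; rfl
  | succ m ih =>
    rw [pow_succ, ih, add_mul, one_mul, seg_add, FreeGroup.mul_mk]
    congr 2
    exact (seg_per y l hp m 0 l).symm

theorem SW_ext {α : Type} {y : ℕ → α × Bool} {v : List (α × Bool)} {b : α × Bool}
    {t : List (α × Bool)} (h1 : SW y (v ++ [b])) (h2 : SW y (b :: t)) : SW y (v ++ b :: t) := by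
  refine ⟨?_, ?_⟩
  · unfold FreeGroup.IsReduced
    rw [List.isChain_split]
    exact ⟨h1.1, h2.1⟩
  · intro c hc
    rw [List.mem_append] at hc
    rcases hc with hc | hc
    · exact h1.2 c (by simp [hc])
    · exact h2.2 c hc

theorem SW_seg {α : Type} {y : ℕ → α × Bool} (hred : ∀ j, y (j+1) ≠ linv (y j)) (i m : ℕ) :
    SW y (seg y i m) := by
  refine ⟨seg_red y hred i m, fun b hb => ?_⟩
  obtain ⟨j, hj⟩ := mem_seg y i m b hb
  exact ⟨j, Or.inl hj⟩

theorem SW_inv {α : Type} {y : ℕ → α × Bool} {u : List (α × Bool)} (h : SW y u) :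
    SW y (FreeGroup.invRev u) := by
  refine ⟨invRev_red h.1, fun b hb => ?_⟩
  simp only [FreeGroup.invRev, List.mem_reverse, List.mem_map] at hb
  obtain ⟨c, hc, rfl⟩ := hb
  obtain ⟨j, hj | hj⟩ := h.2 c hc
  · exact ⟨j, Or.inr (by rw [hj]; rfl)⟩
  · refine ⟨j, Or.inl ?_⟩
    rw [← linv_linv (y j), ← hj]; rfl

theorem int_const (f : ℤ → ℤ) (a : ℤ) (h : ∀ t, a ≤ t → f (t+1) = f t) (t : ℤ) (ht : a ≤ t) :
    f t = f a := by
  induction t, ht using Int.leInduction with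
  | base => rfl
  | succ t ht ih => rw [h t ht, ih]

theorem int_const' (f : ℤ → ℤ) (a : ℤ) (h : ∀ t, t < a → f (t+1) = f t) (t : ℤ) (ht : t ≤ a) :
    f t = f a := by
  have := int_const (fun s => f (-s)) (-a) (fun s hs => by
    have := h (-(s+1)) (by omega)
    rw [← this]; congr 1; omega) (-t) (by omega)
  simpa using this

section
variable {α : Type} {y : ℕ → α × Bool} {l : ℕ} {B : FreeGroup α → ℤ}

theorem line_lemma (hl : 0 < l) (hp : ∀ j, y (j + l) = y j)
    (hred : ∀ j, y (j+1) ≠ linv (y j))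
    (hB1 : ∀ x : FreeGroup α, {h | B (h * x) ≠ B h}.Finite)
    (hB2 : ∀ h, (h = 1 → B (h * FreeGroup.mk (seg y 0 l)) = B h + 1) ∧
      (h ≠ 1 → B (h * FreeGroup.mk (seg y 0 l)) = B h))
    (v : List (α × Bool)) (j : ℕ) (ca cb : ℤ)
    (hva : SW y (v ++ [linv (y j)])) (hvb : SW y (v ++ [y (j+1)]))
    (hca : Good y B (v ++ [linv (y j)]) ca) (hcb : Good y B (v ++ [y (j+1)]) cb) :
    ca ≠ cb ↔ FreeGroup.mk v * (FreeGroup.mk (seg y 0 (j+1)))⁻¹ ∈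
      Subgroup.zpowers (FreeGroup.mk (seg y 0 l)) := by
  classical
  set g := FreeGroup.mk (seg y 0 l) with hg
  set p := FreeGroup.mk (seg y 0 (j+1)) with hpp
  set h := FreeGroup.mk v * p⁻¹ with hh
  have hg1 : g ≠ 1 := by
    intro h1
    have := eq_of_mk (seg_red y hred 0 l) FreeGroup.IsReduced.nil h1
    have h2 := seg_len y 0 l
    rw [this] at h2
    simp at h2
    omega
  have hinj : Function.Injective (fun t : ℤ => g ^ t) := by
    rw [injective_zpow_iff_not_isOfFinOrder]
    exact not_isOfFinOrder_of_isMulTorsionFree hg1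
  -- powers
  have hpow : ∀ m : ℕ, FreeGroup.mk (seg y (j+1) (m * l)) = p⁻¹ * g ^ m * p := by
    intro m
    have e1 : p * FreeGroup.mk (seg y (j+1) (m*l)) = g ^ m * p := by
      rw [hpp, FreeGroup.mul_mk, hg, gpow_seg y l hp, FreeGroup.mul_mk]
      have a1 := seg_add y 0 (j+1) (m*l)
      have a2 := seg_add y 0 (m*l) (j+1)
      rw [seg_per y l hp m 0] at a2
      rw [zero_add] at a1
      rw [← a1, ← a2, add_comm]
    rw [mul_assoc, ← e1]; group
  have hfwd : ∀ m : ℕ, 0 < m → SW y (v ++ seg y (j+1) (m*l)) ∧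
      (v ++ [y (j+1)]) <+: (v ++ seg y (j+1) (m*l)) := by
    intro m hm
    obtain ⟨k, hk⟩ : ∃ k, m * l = k + 1 := ⟨m*l - 1, by have := Nat.mul_pos hm hl; omega⟩
    rw [hk]
    have := SW_seg hred (j+1) (k+1)
    rw [seg] at this ⊢
    refine ⟨SW_ext hvb this, ?_⟩
    exact ⟨seg y (j+1+1) k, by simp⟩
  have hbwd : ∀ m : ℕ, 0 < m → SW y (v ++ FreeGroup.invRev (seg y (j+1) (m*l))) ∧
      (v ++ [linv (y j)]) <+: (v ++ FreeGroup.invRev (seg y (j+1) (m*l))) := by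
    intro m hm
    obtain ⟨k, hk⟩ : ∃ k, m * l = k + 1 := ⟨m*l - 1, by have := Nat.mul_pos hm hl; omega⟩
    have e : y (j + 1 + k) = y j := by
      have : j + 1 + k = j + m * l := by omega
      rw [this, per_all y l hl hp, per_all y l hl hp j]
      simp
    have := SW_inv (SW_seg hred (j+1) (k+1))
    have e2 : FreeGroup.invRev (seg y (j+1) (k+1)) = linv (y j) :: FreeGroup.invRev (seg y (j+1) k) := by
      rw [seg_succ, FreeGroup.invRev_append, e]; rfl
    rw [hk]
    rw [e2] at this ⊢
    refine ⟨SW_ext hva this, ?_⟩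
    exact ⟨FreeGroup.invRev (seg y (j+1) k), by simp⟩
  obtain ⟨Ma, hMa⟩ := hca
  obtain ⟨Mb, hMb⟩ := hcb
  -- finite exceptions
  have hfin : {t : ℤ | B (h * g ^ t * p) ≠ B (h * g ^ t)}.Finite := by
    have := (hB1 p).preimage (f := fun t : ℤ => h * g ^ t)
      (fun a _ b _ hab => hinj (mul_left_cancel hab))
    exact this
  obtain ⟨K, hK⟩ : ∃ K : ℕ, ∀ t : ℤ, K ≤ t.natAbs → B (h * g ^ t * p) = B (h * g ^ t) := by
    obtain ⟨K, hK⟩ := (hfin.image Int.natAbs).bddAbove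
    refine ⟨K + 1, fun t ht => ?_⟩
    by_contra hne
    have := hK (Set.mem_image_of_mem _ hne)
    omega
  have hval : ∀ m : ℕ, 0 < m → Ma ≤ m → Mb ≤ m → K ≤ m →
      B (h * g ^ (m:ℤ)) = cb ∧ B (h * g ^ (-(m:ℤ))) = ca := by
    intro m hm hma hmb hmk
    have hlen : m ≤ m * l := Nat.le_mul_of_pos_right m hl
    constructor
    · rw [← hK m (by simpa using hmk)]
      have := hMb _ (hfwd m hm).1 (hfwd m hm).2 (by rw [List.length_append, seg_len]; omega)
      rw [← this, ← FreeGroup.mul_mk, hpow, hh, zpow_natCast]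
      congr 1; group
    · rw [← hK (-m) (by simpa using hmk)]
      have := hMa _ (hbwd m hm).1 (hbwd m hm).2 (by
        rw [List.length_append, FreeGroup.invRev_length, seg_len]; omega)
      rw [← this, ← FreeGroup.mul_mk, ← FreeGroup.inv_mk, hpow, hh, zpow_neg, zpow_natCast]
      congr 1; group
  constructor
  · intro hne
    by_contra hnot
    have hconst : ∀ t : ℤ, B (h * g ^ (t+1)) = B (h * g ^ t) := by
      intro t
      have h1 : h * g ^ t ≠ 1 := by
        intro h1
        apply hnot
        rw [mul_eq_one_iff_eq_inv] at h1
        rw [h1]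
        exact Subgroup.inv_mem _ (Subgroup.zpow_mem_zpowers _ _)
      have := (hB2 (h * g ^ t)).2 h1
      rw [zpow_add_one, ← mul_assoc]
      exact this
    obtain ⟨h1, h2⟩ := hval (Ma + Mb + K + 1) (by omega) (by omega) (by omega) (by omega)
    rw [int_const (fun t => B (h * g ^ t)) 0 (fun t _ => hconst t) _ (by positivity)] at h1
    rw [int_const' (fun t => B (h * g ^ t)) 0 (fun t _ => hconst t) _ (by omega)] at h2
    exact hne (h2.symm.trans h1)
  · intro hmem
    obtain ⟨t0, ht0⟩ := hmem
    simp only at ht0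
    have hne1 : ∀ t : ℤ, t ≠ 0 → B (g ^ (t+1)) = B (g ^ t) := by
      intro t ht
      rw [zpow_add_one]
      exact (hB2 _).2 (fun h1 => ht (hinj (by simpa using h1)))
    have h1 : ∀ t : ℤ, 1 ≤ t → B (g ^ t) = B 1 + 1 := by
      intro t ht
      rw [int_const (fun t => B (g ^ t)) 1 (fun t ht => hne1 t (by omega)) t ht]
      have := (hB2 1).1 rfl
      simpa using this
    have h0 : ∀ t : ℤ, t ≤ 0 → B (g ^ t) = B 1 := by
      intro t ht
      rw [int_const' (fun t => B (g ^ t)) 0 (fun t ht => hne1 t (by omega)) t ht]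
      simp
    obtain ⟨e1, e2⟩ := hval (Ma + Mb + K + 1 + t0.natAbs) (by omega) (by omega) (by omega) (by omega)
    rw [← ht0, ← zpow_add, h1 _ (by omega)] at e1
    rw [← ht0, ← zpow_add, h0 _ (by omega)] at e2
    omega

end

theorem norm_mk_red {α : Type} [DecidableEq α] {u : List (α × Bool)} (hu : FreeGroup.IsReduced u) :
    (FreeGroup.mk u).norm = u.length := by
  rw [FreeGroup.norm, FreeGroup.toWord_mk, hu.reduce_eq]

theorem SW_prefix {α : Type} {y : ℕ → α × Bool} {u v : List (α × Bool)} (h : SW y (u ++ v)) :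
    SW y u := by
  refine ⟨?_, fun b hb => h.2 b (by simp [hb])⟩
  have := h.1
  unfold FreeGroup.IsReduced at this ⊢
  exact this.left_of_append

section
variable {α : Type} {y : ℕ → α × Bool} {l : ℕ} {B : FreeGroup α → ℤ}

theorem exists_Q [Finite α] (hB1 : ∀ x : FreeGroup α, {h | B (h * x) ≠ B h}.Finite) :
    ∃ N : ℕ, ∀ w, SW y w → w.length = N → ∃ c, Good y B w c := by
  classical
  have hfin : (⋃ b : α × Bool, {h | B (h * FreeGroup.mk [b]) ≠ B h}).Finite :=
    Set.finite_iUnion (fun b => hB1 _)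
  obtain ⟨K, hK⟩ := (hfin.image FreeGroup.norm).bddAbove
  refine ⟨K + 1, fun w hw hlen => ⟨B (FreeGroup.mk w), 0, ?_⟩⟩
  rintro u hu ⟨t, rfl⟩ -
  induction t using List.reverseRecOn with
  | nil => simp
  | append_singleton t b ih =>
    rw [← List.append_assoc] at hu ⊢
    have hu' := SW_prefix hu
    rw [← ih hu', ← FreeGroup.mul_mk]
    by_contra hne
    have h1 : FreeGroup.mk (w ++ t) ∈ ⋃ b : α × Bool, {h | B (h * FreeGroup.mk [b]) ≠ B h} :=
      Set.mem_iUnion.2 ⟨b, hne⟩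
    have := hK (Set.mem_image_of_mem _ h1)
    rw [norm_mk_red hu'.1] at this
    simp at this
    omega

theorem Good.ext {w w' : List (α × Bool)} {c : ℤ} (h : Good y B w c) (hp : w <+: w') :
    Good y B w' c := by
  obtain ⟨M, hM⟩ := h
  exact ⟨M, fun u hu hw hl => hM u hu (hp.trans hw) hl⟩

theorem SW_one {b : α × Bool} (h : Occ y b) : SW y [b] :=
  ⟨FreeGroup.IsReduced.singleton, by simpa using h⟩

theorem SW_snoc {v : List (α × Bool)} {q b : α × Bool} (h : SW y (v ++ [q])) (hb : Occ y b)
    (hne : b ≠ linv q) : SW y (v ++ [q] ++ [b]) := by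
  have := SW_ext (t := [b]) h ⟨by
    rw [FreeGroup.isReduced_cons_cons]
    exact ⟨(red_iff _ _).2 hne, FreeGroup.IsReduced.singleton⟩, by
    intro c hc
    simp at hc
    rcases hc with rfl | rfl
    · exact h.2 _ (by simp)
    · exact hb⟩
  simpa using this

theorem main_one [Finite α] (hl : 0 < l) (hp : ∀ j, y (j + l) = y j) (hW : WMin y l)
    (hB1 : ∀ x : FreeGroup α, {h | B (h * x) ≠ B h}.Finite)
    (hB2 : ∀ h, (h = 1 → B (h * FreeGroup.mk (seg y 0 l)) = B h + 1) ∧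
      (h ≠ 1 → B (h * FreeGroup.mk (seg y 0 l)) = B h)) : l = 1 := by
  classical
  have hred : ∀ j, y (j+1) ≠ linv (y j) := fun j => hW.red hl hp j
  have hex := exists_Q (y := y) hB1
  have hQ := Nat.find_spec hex
  have hmin := fun m => Nat.find_min hex (m := m)
  set N := Nat.find hex with hN
  clear_value N
  have occ1 : ∀ j, Occ y (y j) := fun j => ⟨j, Or.inl rfl⟩
  have occ2 : ∀ j, Occ y (linv (y j)) := fun j => ⟨j, Or.inr rfl⟩
  have hyl : y l = y 0 := by simpa using hp 0
  have hlast : FreeGroup.mk [] * (FreeGroup.mk (seg y 0 (l - 1 + 1)))⁻¹ ∈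
      Subgroup.zpowers (FreeGroup.mk (seg y 0 l)) := by
    have e : l - 1 + 1 = l := by omega
    rw [e]
    have : (FreeGroup.mk [] : FreeGroup α) = 1 := rfl
    rw [this, one_mul]
    exact Subgroup.inv_mem _ (Subgroup.mem_zpowers _)
  rcases Nat.eq_zero_or_pos N with h0 | hpos
  · exfalso
    obtain ⟨c, hc⟩ := hQ [] ⟨FreeGroup.IsReduced.nil, by simp⟩ h0.symm
    exact (line_lemma hl hp hred hB1 hB2 [] (l-1) c c (SW_one (occ2 _)) (SW_one (occ1 _))
      (hc.ext (by simp)) (hc.ext (by simp))).2 hlast rfl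
  rcases Nat.lt_or_ge 1 N with h2 | h1
  · exfalso
    have hnq := hmin (N-1) (by omega)
    push Not at hnq
    obtain ⟨v, hv, hvl, hbad⟩ := hnq
    obtain ⟨v0, q, rfl⟩ : ∃ v0 q, v = v0 ++ [q] := by
      rcases List.eq_nil_or_concat v with rfl | ⟨a, b, h⟩
      · simp at hvl; omega
      · exact ⟨a, b, by simpa using h⟩
    have hcol : ∀ b, ∃ c, Occ y b → b ≠ linv q → Good y B (v0 ++ [q] ++ [b]) c := by
      intro b
      by_cases hb : Occ y b ∧ b ≠ linv q
      · obtain ⟨c, hc⟩ := hQ (v0 ++ [q] ++ [b]) (SW_snoc hv hb.1 hb.2) (by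
          rw [List.length_append, hvl]; simp; omega)
        exact ⟨c, fun _ _ => hc⟩
      · exact ⟨0, fun h1 h2 => (hb ⟨h1, h2⟩).elim⟩
    choose col hcol using hcol
    have hqocc : Occ y q := hv.2 q (by simp)
    have hpocc : Occ y (linv q) := by
      obtain ⟨j, h | h⟩ := hqocc
      · exact ⟨j, Or.inr (by rw [h])⟩
      · exact ⟨j, Or.inl (by rw [h, linv_linv])⟩
    have hnall : ∃ b, Occ y b ∧ b ≠ linv q ∧ col b ≠ col q := by
      by_contra hall
      push Not at hall
      apply hbad (col q)
      have hM : ∀ b, ∃ M : ℕ, Occ y b → b ≠ linv q → ∀ u, SW y u → (v0 ++ [q] ++ [b]) <+: u →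
          M ≤ u.length → B (FreeGroup.mk u) = col q := by
        intro b
        by_cases hb : Occ y b ∧ b ≠ linv q
        · obtain ⟨M, hM⟩ := hcol b hb.1 hb.2
          refine ⟨M, fun _ _ u h1 h2 h3 => ?_⟩
          rw [hM u h1 h2 h3, hall b hb.1 hb.2]
        · exact ⟨0, fun h1 h2 => (hb ⟨h1, h2⟩).elim⟩
      choose M hM using hM
      obtain ⟨K, hK⟩ := (Set.finite_range M).bddAbove
      refine ⟨K + N + 1, fun u hu hpre hlen => ?_⟩
      obtain ⟨t, rfl⟩ := hpre
      rcases t with _ | ⟨b, t⟩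
      · rw [List.append_nil] at hlen; omega
      · have e : v0 ++ [q] ++ b :: t = (v0 ++ [q] ++ [b]) ++ t := by simp
        have hb1 : Occ y b := hu.2 b (by simp)
        have hb2 : b ≠ linv q := by
          have h3 := hu.1
          have e' : v0 ++ [q] ++ b :: t = v0 ++ ([q, b] ++ t) := by simp
          unfold FreeGroup.IsReduced at h3
          rw [e'] at h3
          have h4 := h3.right_of_append.left_of_append
          exact (red_iff q b).1 (by simpa using h4)
        refine hM b hb1 hb2 _ hu ⟨t, e.symm⟩ ?_
        have := hK (Set.mem_range_self b)
        omega
    obtain ⟨b0, hb0, hb0', hb0c⟩ := hnall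
    have : Fintype α := Fintype.ofFinite α
    refine hW.case_two hl hp (C := Finset.univ.filter (fun b => Occ y b ∧ b ≠ linv q ∧ col b ≠ col q))
      (p := linv q) hpocc ⟨b0, by simp [hb0, hb0', hb0c], hb0⟩ (by simp) (by simp [linv_linv]) ?_
    intro j hj hj1 hj2
    have key := line_lemma hl hp hred hB1 hB2 (v0 ++ [q]) j _ _ (SW_snoc hv (occ2 j) hj1)
      (SW_snoc hv (occ1 (j+1)) hj2) (hcol _ (occ2 j) hj1) (hcol _ (occ1 (j+1)) hj2)
    have hnot : ¬ (FreeGroup.mk (v0 ++ [q]) * (FreeGroup.mk (seg y 0 (j+1)))⁻¹ ∈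
      Subgroup.zpowers (FreeGroup.mk (seg y 0 l))) := by
      rintro ⟨t, ht⟩
      simp only at ht
      rw [eq_mul_inv_iff_mul_eq] at ht
      rcases Int.eq_nat_or_neg t with ⟨m, rfl | rfl⟩
      · rw [zpow_natCast, gpow_seg y l hp, FreeGroup.mul_mk] at ht
        have a2 := seg_add y 0 (m*l) (j+1)
        rw [seg_per y l hp m 0] at a2
        rw [← a2] at ht
        have := eq_of_mk (seg_red y hred _ _) hv.1 ht
        rw [← add_assoc, seg_succ] at this
        have h5 := (List.append_inj' this rfl).2
        simp only [List.cons.injEq, and_true] at h5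
        apply hj1
        rw [← h5, per_all y l hl hp (0 + (m * l + j)), per_all y l hl hp j]
        simp
      · rcases Nat.eq_zero_or_pos m with rfl | hm
        · simp only [Nat.cast_zero, neg_zero, zpow_zero, one_mul] at ht
          have := eq_of_mk (seg_red y hred _ _) hv.1 ht
          rw [seg_succ] at this
          have h5 := (List.append_inj' this rfl).2
          simp only [List.cons.injEq, and_true, zero_add] at h5
          exact hj1 (by rw [h5])
        · have hml : j + 1 ≤ m * l := le_trans hj (Nat.le_mul_of_pos_left l hm)
          obtain ⟨d, hd⟩ := Nat.exists_eq_add_of_le hml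
          rw [zpow_neg, zpow_natCast, gpow_seg y l hp, hd, seg_add, ← FreeGroup.mul_mk,
            mul_inv_rev, inv_mul_cancel_right, FreeGroup.inv_mk] at ht
          have := eq_of_mk (invRev_red (seg_red y hred _ _)) hv.1 ht
          rcases d with _ | d
          · simp [seg] at this
          · rw [zero_add, seg] at this
            have e3 : FreeGroup.invRev (y (j+1) :: seg y (j+1+1) d) =
              FreeGroup.invRev (seg y (j+1+1) d) ++ [linv (y (j+1))] := by
              simp [FreeGroup.invRev, linv]
            rw [e3] at this
            have h5 := (List.append_inj' this rfl).2
            simp only [List.cons.injEq, and_true] at h5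
            exact hj2 (by rw [← h5, linv_linv])
    have heq : col (linv (y j)) = col (y (j+1)) := by
      by_contra hne
      exact hnot (key.1 hne)
    have o1 := occ1 (j+1)
    have o2 := occ2 j
    simp [o1, o2, hj1, hj2, heq]
  · have hN1 : N = 1 := by omega
    have hcol : ∀ b, ∃ c, Occ y b → Good y B [b] c := by
      intro b
      by_cases hb : Occ y b
      · obtain ⟨c, hc⟩ := hQ [b] (SW_one hb) (by simp [hN1])
        exact ⟨c, fun _ => hc⟩
      · exact ⟨0, fun h1 => (hb h1).elim⟩
    choose col hcol using hcol
    have key := fun j => line_lemma hl hp hred hB1 hB2 [] j _ _ (SW_one (occ2 j))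
      (SW_one (occ1 (j+1))) (hcol _ (occ2 j)) (hcol _ (occ1 (j+1)))
    have : Fintype α := Fintype.ofFinite α
    refine hW.case_one hl hp (C := Finset.univ.filter (fun b => col b = col (y 0))) (by simp) ?_ ?_
    · have := (key (l-1)).2 hlast
      have e : l - 1 + 1 = l := by omega
      rw [e, hyl] at this
      simpa using this
    · intro j hj
      have heq : col (linv (y j)) = col (y (j+1)) := by
        by_contra hne
        obtain ⟨t, ht⟩ := (key j).1 hne
        simp only at ht
        have : (FreeGroup.mk [] : FreeGroup α) = 1 := rfl
        rw [this, one_mul] at ht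
        have hn : ∀ m : ℕ, ¬ (FreeGroup.mk (seg y 0 (m*l))).norm = (FreeGroup.mk (seg y 0 (j+1))).norm := by
          intro m
          rw [norm_mk_red (seg_red y hred _ _), norm_mk_red (seg_red y hred _ _), seg_len, seg_len]
          rcases m with _ | m
          · simp
          · rw [add_mul]; omega
        rcases Int.eq_nat_or_neg t with ⟨m, rfl | rfl⟩
        · apply hn m
          rw [← gpow_seg y l hp, ← zpow_natCast, ht, FreeGroup.norm_inv_eq]
        · apply hn m
          rw [zpow_neg, inv_inj] at ht
          rw [← gpow_seg y l hp, ← zpow_natCast, ht]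
      simp [heq]
end

theorem seg_prod {α : Type} (y : ℕ → α × Bool) (l : ℕ) :
    ((List.range l).map (fun j => lt (y j))).prod = FreeGroup.mk (seg y 0 l) := by
  induction l with
  | zero => rfl
  | succ l ih =>
    rw [List.range_succ, List.map_append, List.prod_append, ih, seg_succ, ← FreeGroup.mul_mk]
    simp [lt]

theorem seg_list {Λ : Type} (L : List Λ) (y : ℕ → Λ) (i : ℕ)
    (h : ∀ j (hj : j < L.length), y (i + j) = L[j]) : seg y i L.length = L := by
  induction L generalizing i with
  | nil => rfl
  | cons a L ih =>
    rw [List.length_cons, seg, ih (i+1)]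
    · have := h 0 (by simp)
      simp at this
      rw [this]
    · intro j hj
      have := h (j+1) (by simpa using hj)
      have e : i + 1 + j = i + (j + 1) := by omega
      rw [e, this]
      simp

theorem basis_of_equiv {α : Type} (θ : FreeGroup α ≃* FreeGroup α) (x : α) :
    IsBasisElem (θ (FreeGroup.of x)) := by
  classical
  have hinj : Function.Injective (fun a => θ (FreeGroup.of a)) :=
    θ.injective.comp FreeGroup.of_injective
  refine ⟨Set.range (fun a => θ (FreeGroup.of a)), ⟨x, rfl⟩, ?_⟩
  let e : α ≃ Set.range (fun a => θ (FreeGroup.of a)) := Equiv.ofInjective _ hinj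
  have h : (FreeGroup.lift (Subtype.val : Set.range (fun a => θ (FreeGroup.of a)) → FreeGroup α)) =
      θ.toMonoidHom.comp (FreeGroup.freeGroupCongr e).symm.toMonoidHom := by
    ext a
    obtain ⟨b, rfl⟩ := e.surjective a
    simp [e]
  rw [h]
  exact θ.bijective.comp (FreeGroup.freeGroupCongr e).symm.bijective

/-- inversion of the generators -/
def invGen (α : Type) : FreeGroup α ≃* FreeGroup α :=
  MonoidHom.toMulEquiv (FreeGroup.lift (fun x => (FreeGroup.of x)⁻¹))
    (FreeGroup.lift (fun x => (FreeGroup.of x)⁻¹)) (by ext; simp) (by ext; simp)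

theorem basis_of_P {α : Type} [Finite α] (γ : FreeGroup α) (hγ : γ ≠ 1) (B : FreeGroup α → ℤ)
    (hB1 : ∀ x : FreeGroup α, {h | B (h * x) ≠ B h}.Finite)
    (hB2 : ∀ h, (h = 1 → B (h * γ) = B h + 1) ∧ (h ≠ 1 → B (h * γ) = B h)) : IsBasisElem γ := by
  classical
  have hex : ∃ m, ∃ ψ : FreeGroup α ≃* FreeGroup α, (ψ γ).norm = m := ⟨_, MulEquiv.refl _, rfl⟩
  obtain ⟨ψ, hψ⟩ := Nat.find_spec hex
  have hmin : ∀ φ : FreeGroup α ≃* FreeGroup α, Nat.find hex ≤ (φ γ).norm :=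
    fun φ => Nat.find_min' hex ⟨φ, rfl⟩
  rw [← hψ] at hmin
  set L := (ψ γ).toWord with hL
  have hLpos : 0 < L.length := by
    rw [List.length_pos_iff]
    intro h0
    rw [hL, FreeGroup.toWord_eq_nil_iff] at h0
    exact hγ (by simpa using h0)
  let y : ℕ → α × Bool := fun j => L[j % L.length]'(Nat.mod_lt _ hLpos)
  have hp : ∀ j, y (j + L.length) = y j := by
    intro j
    simp [y]
  have hseg : seg y 0 L.length = L := seg_list L y 0 (fun j hj => by simp [y, Nat.mod_eq_of_lt hj])
  have hmk : FreeGroup.mk (seg y 0 L.length) = ψ γ := by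
    rw [hseg, hL, FreeGroup.mk_toWord]
  have hW : WMin y L.length := by
    apply wmin_of_min y L.length (by simpa using hp 0)
    intro φ
    rw [seg_prod, hmk]
    exact hmin (ψ.trans φ)
  have h1 : L.length = 1 := by
    refine main_one (B := fun h => B (ψ.symm h)) hLpos hp hW ?_ ?_
    · intro x
      have := (hB1 (ψ.symm x)).preimage (f := ψ.symm) ψ.symm.injective.injOn
      refine this.subset ?_
      intro h hh
      simpa using hh
    · intro h
      rw [hmk]
      have := hB2 (ψ.symm h)
      simpa using this
  obtain ⟨⟨x, s⟩, hx⟩ := List.length_eq_one_iff.1 h1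
  have h2 : ψ γ = FreeGroup.mk [(x, s)] := by
    rw [← hx, hL, FreeGroup.mk_toWord]
  have h3 : γ = ψ.symm (FreeGroup.mk [(x, s)]) := by rw [← h2]; simp
  cases s with
  | true =>
    rw [h3]
    exact basis_of_equiv ψ.symm x
  | false =>
    have : FreeGroup.mk [(x, false)] = invGen α (FreeGroup.of x) := by
      simp [invGen]; rfl
    rw [h3, this]
    exact basis_of_equiv ((invGen α).trans ψ.symm) x

/-- pairs (derivation value, group element) -/
@[ext] structure Aff (G : Type) [Group G] where
  /-- module part -/
  m : MonoidAlgebra ℤ G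
  /-- group part -/
  g : G

noncomputable instance affMul (G : Type) [Group G] : Mul (Aff G) :=
  ⟨fun x y => ⟨x.m + MonoidAlgebra.of ℤ G x.g * y.m, x.g * y.g⟩⟩
noncomputable instance affOne (G : Type) [Group G] : One (Aff G) := ⟨⟨0, 1⟩⟩
noncomputable instance affInv (G : Type) [Group G] : Inv (Aff G) :=
  ⟨fun x => ⟨-(MonoidAlgebra.of ℤ G x.g⁻¹ * x.m), x.g⁻¹⟩⟩

theorem aff_mul_m {G : Type} [Group G] (x y : Aff G) :
    (x * y).m = x.m + MonoidAlgebra.of ℤ G x.g * y.m := rfl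
theorem aff_mul_g {G : Type} [Group G] (x y : Aff G) : (x * y).g = x.g * y.g := rfl
theorem aff_one_m {G : Type} [Group G] : (1 : Aff G).m = 0 := rfl
theorem aff_one_g {G : Type} [Group G] : (1 : Aff G).g = 1 := rfl
theorem aff_inv_m {G : Type} [Group G] (x : Aff G) :
    (x⁻¹).m = -(MonoidAlgebra.of ℤ G x.g⁻¹ * x.m) := rfl
theorem aff_inv_g {G : Type} [Group G] (x : Aff G) : (x⁻¹).g = x.g⁻¹ := rfl

noncomputable instance affGroup (G : Type) [Group G] : Group (Aff G) :=
  Group.ofLeftAxioms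
    (by
      intro a b c
      apply Aff.ext
      · simp only [aff_mul_m, aff_mul_g, map_mul, mul_add, mul_assoc, add_assoc]
      · simp only [aff_mul_g, mul_assoc])
    (by
      intro a
      apply Aff.ext
      · simp only [aff_mul_m, aff_one_m, aff_one_g, map_one, one_mul, zero_add]
      · simp only [aff_mul_g, aff_one_g, one_mul])
    (by
      intro a
      apply Aff.ext
      · simp only [aff_mul_m, aff_inv_m, aff_one_m, aff_inv_g, neg_add_cancel]
      · simp only [aff_mul_g, aff_inv_g, aff_one_g, inv_mul_cancel])

/-- group part as a homomorphism -/
noncomputable def affG (G : Type) [Group G] : Aff G →* G where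
  toFun x := x.g
  map_one' := rfl
  map_mul' _ _ := rfl

theorem aff_pow {G : Type} [Group G] (s : G) (k : ℕ) :
    (⟨1, s⟩ : Aff G) ^ k = ⟨∑ i ∈ Finset.range k, (MonoidAlgebra.of ℤ G s) ^ i, s ^ k⟩ := by
  induction k with
  | zero => simp only [pow_zero, Finset.range_zero, Finset.sum_empty]; rfl
  | succ k ih =>
    rw [pow_succ, ih]
    apply Aff.ext
    · rw [aff_mul_m, Finset.sum_range_succ]
      simp
    · rw [aff_mul_g, pow_succ]

theorem cancel_geom {G : Type} [Group G] (s : G) (k : ℕ) (hs : ¬ IsOfFinOrder (s ^ k))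
    (a : MonoidAlgebra ℤ G) (ha : a * ∑ i ∈ Finset.range k, (MonoidAlgebra.of ℤ G s) ^ i = 0) :
    a = 0 := by
  have h1 : a * MonoidAlgebra.of ℤ G (s ^ k) = a := by
    have := geom_sum_mul (MonoidAlgebra.of ℤ G s) k
    have h2 : a * (MonoidAlgebra.of ℤ G s ^ k - 1) = 0 := by
      rw [← this, ← mul_assoc, ha, zero_mul]
    rw [mul_sub, mul_one, sub_eq_zero] at h2
    rw [map_pow, h2]
  have h2 : ∀ g, a.coeff (g * (s ^ k)⁻¹) = a.coeff g := by
    intro g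
    conv_rhs => rw [← h1]
    rw [MonoidAlgebra.of_apply, MonoidAlgebra.coeff_mul_single_apply, mul_one]
  by_contra hne
  have h3 : ∃ g, a.coeff g ≠ 0 := by
    by_contra hall
    push Not at hall
    exact hne (MonoidAlgebra.ext (by ext g; simp [hall g]))
  obtain ⟨g, hg⟩ := h3
  have h4 : ∀ m : ℕ, a.coeff (g * ((s ^ k)⁻¹) ^ m) = a.coeff g := by
    intro m
    induction m with
    | zero => simp
    | succ m ih => rw [pow_succ, ← mul_assoc, h2, ih]
  have hinj : Function.Injective (fun m : ℕ => g * ((s ^ k)⁻¹) ^ m) := by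
    have : Function.Injective (fun m : ℕ => ((s ^ k)⁻¹) ^ m) := by
      rw [injective_pow_iff_not_isOfFinOrder, isOfFinOrder_inv_iff]
      exact hs
    exact fun a b hab => this (mul_left_cancel hab)
  have := Set.infinite_of_injective_forall_mem hinj (s := (a.coeff.support : Set G)) (by
    intro m
    rw [Finset.mem_coe, Finsupp.mem_support_iff, h4 m]
    exact hg)
  exact this a.coeff.support.finite_toSet

section
variable {F : Type} [Group F]

/-- the root map -/
def rF (γ : F) (k : ℕ) (hk : 0 < k) : F × Fin k → F × Fin k := fun x =>
  (γ ^ ((x.2.val + 1) / k) * x.1, ⟨(x.2.val + 1) % k, Nat.mod_lt _ hk⟩)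

theorem rF_iter (γ : F) (k : ℕ) (hk : 0 < k) (t : ℕ) (x : F × Fin k) :
    (rF γ k hk)^[t] x =
      (γ ^ ((x.2.val + t) / k) * x.1, ⟨(x.2.val + t) % k, Nat.mod_lt _ hk⟩) := by
  induction t with
  | zero =>
    have := x.2.isLt
    ext
    · simp [Nat.div_eq_of_lt this]
    · simp [Nat.mod_eq_of_lt this]
  | succ t ih =>
    rw [Function.iterate_succ_apply', ih, rF]
    have e := Nat.div_add_mod (x.2.val + t) k
    have e1 : (x.2.val + (t + 1)) / k = ((x.2.val + t) % k + 1) / k + (x.2.val + t) / k := by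
      have : x.2.val + (t + 1) = ((x.2.val + t) % k + 1) + k * ((x.2.val + t) / k) := by omega
      rw [this, Nat.add_mul_div_left _ _ hk]
    refine Prod.ext ?_ (Fin.ext ?_)
    · simp only
      rw [e1, pow_add, mul_assoc]
    · simp [add_assoc]

theorem rF_k (γ : F) (k : ℕ) (hk : 0 < k) (x : F × Fin k) :
    (rF γ k hk)^[k] x = (γ * x.1, x.2) := by
  rw [rF_iter]
  have := x.2.isLt
  refine Prod.ext ?_ (Fin.ext ?_)
  · simp [Nat.div_eq_of_lt this, Nat.add_div_right, hk]
  · simp [Nat.mod_eq_of_lt this]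

theorem rF_bij (γ : F) (k : ℕ) (hk : 0 < k) : Function.Bijective (rF γ k hk) := by
  have hb : Function.Bijective (rF γ k hk)^[k] := by
    have : (rF γ k hk)^[k] = fun x => (γ * x.1, x.2) := funext (rF_k γ k hk)
    rw [this]
    constructor
    · rintro ⟨a, i⟩ ⟨b, j⟩ h
      simpa using h
    · rintro ⟨a, i⟩
      exact ⟨(γ⁻¹ * a, i), by simp⟩
  obtain ⟨m, rfl⟩ : ∃ m, k = m + 1 := ⟨k - 1, by omega⟩
  constructor
  · have := hb.1
    rw [Function.iterate_succ] at this
    exact this.of_comp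
  · have := hb.2
    rw [Function.iterate_succ'] at this
    exact this.of_comp

/-- the root permutation -/
noncomputable def rE (γ : F) (k : ℕ) (hk : 0 < k) : Equiv.Perm (F × Fin k) :=
  Equiv.ofBijective _ (rF_bij γ k hk)

/-- left translation on the first factor -/
def lE (k : ℕ) : F →* Equiv.Perm (F × Fin k) where
  toFun f := Equiv.prodCongr (Equiv.mulLeft f) (Equiv.refl _)
  map_one' := by ext x <;> simp
  map_mul' a b := by ext x <;> simp [mul_assoc]

/-- the difference of the projections -/
noncomputable def tau (k : ℕ) (x : F × Fin k) : F →₀ ℤ :=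
  (if x.2.val = k - 1 then Finsupp.single x.1 1 else 0) -
    (if x.2.val = 0 then Finsupp.single x.1 1 else 0)

theorem tau_trans (k : ℕ) (f : F) (x : F × Fin k) :
    tau k (f * x.1, x.2) = Finsupp.mapDomain (f * ·) (tau k x) := by
  unfold tau
  rw [Finsupp.mapDomain_sub]
  congr 1
  · split_ifs <;> simp
  · split_ifs <;> simp

theorem tau_sum (γ : F) (k : ℕ) (hk : 0 < k) (x : F × Fin k) :
    ∃ c : F →₀ ℤ, ∑ t ∈ Finset.range k, tau k ((rF γ k hk)^[t] x) =
      c - Finsupp.mapDomain (γ * ·) c := by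
  obtain ⟨h, i, hi⟩ := x
  have e1 : ∑ t ∈ Finset.range k, (if (i + t) % k = k - 1 then
      Finsupp.single (γ ^ ((i + t) / k) * h) (1:ℤ) else 0) = Finsupp.single h 1 := by
    rw [Finset.sum_eq_single (k - 1 - i)]
    · have : i + (k - 1 - i) = k - 1 := by omega
      rw [this, Nat.mod_eq_of_lt (by omega), Nat.div_eq_of_lt (by omega)]
      simp
    · intro t ht hne
      rw [Finset.mem_range] at ht
      rw [if_neg]
      intro h1
      rcases Nat.lt_or_ge (i + t) k with h2 | h2
      · rw [Nat.mod_eq_of_lt h2] at h1; omega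
      · rw [Nat.mod_eq_sub_mod h2, Nat.mod_eq_of_lt (by omega)] at h1; omega
    · intro hn
      simp at hn
      omega
  have e2 : ∑ t ∈ Finset.range k, (if (i + t) % k = 0 then
      Finsupp.single (γ ^ ((i + t) / k) * h) (1:ℤ) else 0) =
      if i = 0 then Finsupp.single h 1 else Finsupp.single (γ * h) 1 := by
    split_ifs with h0
    · subst h0
      rw [Finset.sum_eq_single 0]
      · simp
      · intro t ht hne
        rw [Finset.mem_range] at ht
        rw [if_neg]
        rw [zero_add, Nat.mod_eq_of_lt ht]
        exact hne
      · intro hn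
        simp at hn
        omega
    · rw [Finset.sum_eq_single (k - i)]
      · have : i + (k - i) = k := by omega
        rw [this]
        simp [Nat.div_self hk]
      · intro t ht hne
        rw [Finset.mem_range] at ht
        rw [if_neg]
        intro h1
        rcases Nat.lt_or_ge (i + t) k with h2 | h2
        · rw [Nat.mod_eq_of_lt h2] at h1; omega
        · rw [Nat.mod_eq_sub_mod h2, Nat.mod_eq_of_lt (by omega)] at h1; omega
      · intro hn
        simp at hn
        omega
  have e3 : ∑ t ∈ Finset.range k, tau k ((rF γ k hk)^[t] (h, ⟨i, hi⟩)) =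
      Finsupp.single h 1 - if i = 0 then Finsupp.single h 1 else Finsupp.single (γ * h) 1 := by
    rw [← e2]
    conv_rhs => rw [← e1]
    rw [← Finset.sum_sub_distrib]
    apply Finset.sum_congr rfl
    intro t _
    rw [rF_iter]
    rfl
  rw [e3]
  split_ifs
  · exact ⟨0, by simp⟩
  · exact ⟨Finsupp.single h 1, by simp⟩

end

theorem P_of_deriv {F G : Type} [Group F] [Group G] (ι : F →* G) (s : G) (γ : F) (k : ℕ)
    (hk : 2 ≤ k) (hk0 : 0 < k) (Φ : G →* Equiv.Perm (F × Fin k))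
    (hΦι : ∀ f x, Φ (ι f) x = (f * x.1, x.2)) (hΦs : ∀ x, Φ s x = rF γ k hk0 x)
    (b : F → MonoidAlgebra ℤ G) (β : MonoidAlgebra ℤ G)
    (hb : ∀ f g, b (f * g) = b f + MonoidAlgebra.of ℤ G (ι f) * b g)
    (hbγ : b γ = (∑ i ∈ Finset.range k, (MonoidAlgebra.of ℤ G s) ^ i) * β - 1) :
    ∃ B : F → ℤ, (∀ x : F, {h | B (h * x) ≠ B h}.Finite) ∧
      (∀ h, (h = 1 → B (h * γ) = B h + 1) ∧ (h ≠ 1 → B (h * γ) = B h)) := by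
  classical
  let L : F → (F →₀ ℤ) →+ (F →₀ ℤ) := fun f => Finsupp.mapDomain.addMonoidHom (f * ·)
  have hL : ∀ f a, L f a = Finsupp.mapDomain (f * ·) a := fun f a => rfl
  have hLL : ∀ f g a, L f (L g a) = L (f * g) a := by
    intro f g a
    rw [hL, hL, hL, ← Finsupp.mapDomain_comp]
    congr 1
    ext x
    simp [mul_assoc]
  have hLe : ∀ f a x, L f a x = a (f⁻¹ * x) := by
    intro f a x
    have := Finsupp.mapDomain_apply (mul_right_injective f) a (f⁻¹ * x)
    rw [hL, ← this]
    simp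
  let x0 : F × Fin k := (1, ⟨0, hk0⟩)
  let T : MonoidAlgebra ℤ G →+ (F →₀ ℤ) :=
    (Finsupp.linearCombination ℤ (fun g => tau k (Φ g x0))).toAddMonoidHom.comp
      MonoidAlgebra.coeffAddEquiv.toAddMonoidHom
  have hT : ∀ g r, T (MonoidAlgebra.single g r) = r • tau k (Φ g x0) := by
    intro g r
    simp [T]
  have hT1 : ∀ f a, T (MonoidAlgebra.of ℤ G (ι f) * a) = L f (T a) := by
    intro f a
    induction a using MonoidAlgebra.induction_linear with
    | zero => simp
    | add a b ha hb => rw [mul_add, map_add, ha, hb, map_add, map_add]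
    | single g r =>
      rw [MonoidAlgebra.of_apply, MonoidAlgebra.single_mul_single, hT, hT, map_mul,
        Equiv.Perm.mul_apply, hΦι, tau_trans, one_mul, map_zsmul, hL]
  have hpow : ∀ t x, Φ (s ^ t) x = (rF γ k hk0)^[t] x := by
    intro t x
    induction t with
    | zero => simp
    | succ t ih =>
      rw [pow_succ', map_mul, Equiv.Perm.mul_apply, ih, hΦs, Function.iterate_succ_apply']
  have hT2 : ∀ a, ∃ c, T ((∑ i ∈ Finset.range k, (MonoidAlgebra.of ℤ G s) ^ i) * a) = c - L γ c := by
    intro a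
    induction a using MonoidAlgebra.induction_linear with
    | zero => exact ⟨0, by simp⟩
    | add a b ha hb =>
      obtain ⟨c, hc⟩ := ha
      obtain ⟨d, hd⟩ := hb
      refine ⟨c + d, ?_⟩
      rw [mul_add, map_add, hc, hd, map_add]
      abel
    | single g r =>
      obtain ⟨c, hc⟩ := tau_sum γ k hk0 (Φ g x0)
      refine ⟨r • c, ?_⟩
      rw [map_zsmul, ← smul_sub, hL, ← hc, Finset.sum_mul, map_sum, Finset.smul_sum]
      apply Finset.sum_congr rfl
      intro t _
      rw [← map_pow, MonoidAlgebra.of_apply, MonoidAlgebra.single_mul_single, hT, map_mul,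
        Equiv.Perm.mul_apply, hpow, one_mul]
  have hT3 : T 1 = -Finsupp.single 1 1 := by
    rw [MonoidAlgebra.one_def, hT]
    have : ¬ (0 = k - 1) := by omega
    simp [tau, x0, this]
  obtain ⟨c, hc⟩ := hT2 β
  let e : F → (F →₀ ℤ) := fun f => T (b f) - (c - L f c)
  have he : ∀ f g, e (f * g) = e f + L f (e g) := by
    intro f g
    simp only [e, hb, map_add, hT1, map_sub, hLL]
    abel
  have heγ : e γ = Finsupp.single 1 1 := by
    simp only [e, hbγ, map_sub, hc, hT3]
    abel
  let B : F → ℤ := fun h => - e h⁻¹ h⁻¹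
  have hB : ∀ h x, B (h * x) = B h + e x h⁻¹ := by
    intro h x
    have h1 : e h⁻¹ = e x + L x (e (h * x)⁻¹) := by
      rw [← he]
      congr 1
      group
    have h2 : e h⁻¹ h⁻¹ = e x h⁻¹ + e (h * x)⁻¹ (h * x)⁻¹ := by
      rw [h1, Finsupp.add_apply, hLe]
      congr 2
      group
    simp only [B, h2]
    ring
  refine ⟨B, fun x => ?_, fun h => ⟨?_, ?_⟩⟩
  · have := (e x).support.finite_toSet.preimage (f := fun h : F => h⁻¹) inv_injective.injOn
    refine this.subset ?_
    intro h hh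
    simp only [Set.mem_ofPred_eq, hB] at hh
    simp only [Set.mem_preimage, Finset.mem_coe, Finsupp.mem_support_iff]
    intro h0
    rw [h0] at hh
    simp at hh
  · rintro rfl
    rw [hB, heγ]
    simp
  · intro hne
    rw [hB, heγ, Finsupp.single_apply, if_neg, add_zero]
    intro h1
    exact hne (by simpa using h1.symm)

theorem P_abstract {F H G : Type} [Group F] [Group H] [Group G] (inl : F →* H) (s0 : H)
    (q : H →* G) (hqs : Function.Surjective q) (γ : F) (k : ℕ) (hk : 2 ≤ k)
    (hγ : ¬ IsOfFinOrder γ) [IsFreeGroup G]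
    (hker : q.ker = Subgroup.normalClosure {s0 ^ k * (inl γ)⁻¹})
    (hlift : ∀ (P : Type) [Group P] (f : F →* P) (p : P), ∃ Ψ : H →* P, (∀ x, Ψ (inl x) = f x) ∧ Ψ s0 = p)
    (huniq : ∀ Ψ Ψ' : H →* G, (∀ x, Ψ (inl x) = Ψ' (inl x)) → Ψ s0 = Ψ' s0 → Ψ = Ψ') :
    ∃ B : F → ℤ, (∀ x, {h | B (h * x) ≠ B h}.Finite) ∧
      (∀ h, (h = 1 → B (h * γ) = B h + 1) ∧ (h ≠ 1 → B (h * γ) = B h)) := by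
  classical
  have hk0 : 0 < k := by omega
  obtain ⟨r, hr⟩ : ∃ r, r = s0 ^ k * (inl γ)⁻¹ := ⟨_, rfl⟩
  rw [← hr] at hker
  obtain ⟨ι, hι⟩ : ∃ ι : F →* G, ∀ x, ι x = q (inl x) := ⟨q.comp inl, fun _ => rfl⟩
  obtain ⟨s, hs⟩ : ∃ s, s = q s0 := ⟨_, rfl⟩
  have hqr : q r = 1 := by
    rw [← MonoidHom.mem_ker, hker]
    exact Subgroup.subset_normalClosure rfl
  have hsk : s ^ k = ι γ := by
    have : q r = s ^ k * (ι γ)⁻¹ := by rw [hr, hs, hι, map_mul, map_pow, map_inv]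
    rw [hqr] at this
    exact (mul_inv_eq_one.1 this.symm)
  -- the action
  obtain ⟨Φ0, hΦ0, hΦ0s⟩ := hlift _ (lE (F := F) k) (rE γ k hk0)
  have hrE : (rE γ k hk0) ^ k = lE k γ := by
    ext1 x
    rw [Equiv.Perm.coe_pow]
    exact rF_k γ k hk0 x
  have hΦ0r : Φ0 r = 1 := by
    rw [hr, map_mul, map_pow, map_inv, hΦ0, hΦ0s, hrE, mul_inv_cancel]
  have hle0 : q.ker ≤ Φ0.ker := by
    rw [hker]
    apply Subgroup.normalClosure_le_normal
    rintro _ rfl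
    exact hΦ0r
  let Φ : G →* Equiv.Perm (F × Fin k) := q.liftOfSurjective hqs ⟨Φ0, hle0⟩
  have hΦq : ∀ h, Φ (q h) = Φ0 h := fun h => MonoidHom.liftOfRightInverse_comp_apply q _ _ ⟨Φ0, hle0⟩ h
  have hΦι : ∀ f x, Φ (ι f) x = (f * x.1, x.2) := by
    intro f x
    rw [hι, hΦq, hΦ0]; rfl
  have hΦs : ∀ x, Φ s x = rF γ k hk0 x := by
    intro x
    rw [hs, hΦq, hΦ0s]; rfl
  have hord : ¬ IsOfFinOrder (s ^ k) := by
    rw [hsk, isOfFinOrder_iff_pow_eq_one]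
    rintro ⟨m, hm, h1⟩
    have h2 := hΦι (γ ^ m) (1, ⟨0, hk0⟩)
    rw [map_pow, h1, map_one] at h2
    have h3 : γ ^ m = 1 := by
      have := congrArg Prod.fst h2
      simpa using this.symm
    exact hγ (isOfFinOrder_iff_pow_eq_one.2 ⟨m, hm, h3⟩)
  -- the Fox derivative
  let S := MonoidAlgebra.of ℤ G
  let Nk : MonoidAlgebra ℤ G := ∑ i ∈ Finset.range k, (S s) ^ i
  let jF : F →* Aff G :=
    { toFun := fun f => ⟨0, ι f⟩
      map_one' := by rw [map_one]; rfl
      map_mul' := fun a b => by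
        apply Aff.ext
        · rw [aff_mul_m]; simp
        · rw [aff_mul_g, map_mul] }
  obtain ⟨d, hdi', hds⟩ := hlift _ jF ⟨1, s⟩
  have hdi : ∀ f, d (inl f) = ⟨0, ι f⟩ := hdi'
  have hdg : ∀ h, (d h).g = q h := by
    have : (affG G).comp d = q := by
      apply huniq
      · intro x
        rw [MonoidHom.comp_apply, hdi, ← hι]; rfl
      · rw [MonoidHom.comp_apply, hds, ← hs]; rfl
    intro h
    rw [← this]; rfl
  have hdr : (d r).m = Nk := by
    simp only [hr, map_mul, map_pow, map_inv, hds, hdi, aff_pow, aff_mul_m, aff_inv_m]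
    simp [Nk, S]
  -- values on the kernel
  let K : Subgroup H :=
    { carrier := {h | q h = 1 ∧ ∃ a, (d h).m = a * Nk}
      one_mem' := ⟨map_one q, 0, by rw [map_one, aff_one_m, zero_mul]⟩
      mul_mem' := by
        rintro x y ⟨hx, a, ha⟩ ⟨hy, b, hb⟩
        refine ⟨by rw [map_mul, hx, hy, one_mul], a + b, ?_⟩
        rw [map_mul, aff_mul_m, hdg, hx, map_one, one_mul, ha, hb, add_mul]
      inv_mem' := by
        rintro x ⟨hx, a, ha⟩
        refine ⟨by rw [map_inv, hx, inv_one], -a, ?_⟩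
        rw [map_inv, aff_inv_m, hdg, hx, inv_one, map_one, one_mul, ha, neg_mul] }
  have hKn : K.Normal := by
    constructor
    rintro x ⟨hx, a, ha⟩ g
    refine ⟨by rw [map_mul, map_mul, hx, mul_one, map_inv, mul_inv_cancel], S (q g) * a, ?_⟩
    have e1 : S (q g) * S (q g)⁻¹ = 1 := by rw [← map_mul, mul_inv_cancel, map_one]
    rw [map_mul, map_mul, map_inv, aff_mul_m, aff_mul_m, aff_mul_g, aff_inv_m, hdg, hdg, hx, ha,
      mul_one, mul_neg, ← mul_assoc (MonoidAlgebra.of ℤ G (q g)) (MonoidAlgebra.of ℤ G (q g)⁻¹)]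
    have e2 : MonoidAlgebra.of ℤ G (q g) * MonoidAlgebra.of ℤ G (q g)⁻¹ = 1 := e1
    rw [e2, one_mul, mul_assoc]
    simp only [S]
    abel
  have hK : ∀ x, q x = 1 → ∃ a, (d x).m = a * Nk := by
    intro x hx
    have hle : Subgroup.normalClosure {r} ≤ K := by
      apply Subgroup.normalClosure_le_normal
      rintro _ rfl
      exact ⟨hqr, 1, by rw [hdr, one_mul]⟩
    have : x ∈ Subgroup.normalClosure {r} := by
      rw [← MonoidHom.mem_ker, hker] at hx
      exact hx
    exact (hle this).2
  -- the section
  let σ : G →* H := IsFreeGroup.lift (fun a => Function.surjInv hqs (IsFreeGroup.of a))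
  have hσ : ∀ g, q (σ g) = g := by
    have : q.comp σ = MonoidHom.id G := by
      apply IsFreeGroup.ext_hom
      intro a
      simp only [MonoidHom.comp_apply, σ, IsFreeGroup.lift_of, MonoidHom.id_apply]
      exact Function.surjInv_eq hqs _
    intro g
    exact DFunLike.congr_fun this g
  have hb0 : ∀ h, ∃ a, (d h).m - (d (σ (q h))).m = a * Nk := by
    intro h
    obtain ⟨a, ha⟩ := hK (h * (σ (q h))⁻¹) (by rw [map_mul, map_inv, hσ, mul_inv_cancel])
    refine ⟨a, ?_⟩
    have : h = (h * (σ (q h))⁻¹) * σ (q h) := by group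
    have h2 : (d h).m = (d (h * (σ (q h))⁻¹)).m + (d (σ (q h))).m := by
      conv_lhs => rw [this]
      rw [map_mul d (h * (σ (q h))⁻¹), aff_mul_m, hdg, map_mul q, map_inv q, hσ, mul_inv_cancel,
        map_one, one_mul]
    rw [h2, ha, add_sub_cancel_right]
  choose b hb using hb0
  have hcan : ∀ a a' : MonoidAlgebra ℤ G, a * Nk = a' * Nk → a = a' := by
    intro a a' h
    rw [← sub_eq_zero]
    apply cancel_geom s k hord
    rw [sub_mul]
    exact sub_eq_zero.2 h
  have hbd : ∀ x y, b (x * y) = b x + S (q x) * b y := by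
    intro x y
    apply hcan
    rw [← hb, add_mul, mul_assoc, ← hb, ← hb, map_mul, map_mul, map_mul, map_mul, aff_mul_m,
      aff_mul_m, hdg, hdg, hσ, mul_sub]
    simp only [S]
    abel
  have hb1 : b 1 = 0 := by
    have := hbd 1 1
    rw [mul_one, map_one, map_one, one_mul] at this
    simpa using this
  have hbr : b r = 1 := by
    apply hcan
    rw [← hb, hqr, map_one, map_one, aff_one_m, sub_zero, hdr, one_mul]
  have hbp : ∀ m : ℕ, b (s0 ^ m) = (∑ i ∈ Finset.range m, (S s) ^ i) * b s0 := by
    intro m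
    induction m with
    | zero => simp [hb1]
    | succ m ih =>
      rw [pow_succ, hbd, ih, Finset.sum_range_succ, add_mul, map_pow, map_pow, hs]
  refine P_of_deriv ι s γ k hk hk0 Φ hΦι hΦs (fun f => b (inl f)) (b s0) ?_ ?_
  · intro f g
    simp only [map_mul inl, hbd, hι, S]
  · have h1 : s0 ^ k = r * inl γ := by rw [hr, inv_mul_cancel_right]
    have h2 := hbp k
    rw [h1, hbd, hbr, hqr, map_one, one_mul] at h2
    have h3 : (∑ i ∈ Finset.range k, (MonoidAlgebra.of ℤ G s) ^ i) * b s0 =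
      1 + b (inl γ) := h2.symm
    rw [h3, add_sub_cancel_left]

theorem P_of_free {n : ℕ} (γ : FreeGroup (Fin n)) (k : ℕ) (hk : 2 ≤ k) (hγ : γ ≠ 1)
    (hfree : IsFreeGroup (RootAdj γ k)) :
    ∃ B : FreeGroup (Fin n) → ℤ, (∀ x, {h | B (h * x) ≠ B h}.Finite) ∧
      (∀ h, (h = 1 → B (h * γ) = B h + 1) ∧ (h ≠ 1 → B (h * γ) = B h)) := by
  refine P_abstract (H := Monoid.Coprod (FreeGroup (Fin n)) (FreeGroup Unit)) (G := RootAdj γ k)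
    Monoid.Coprod.inl (Monoid.Coprod.inr (FreeGroup.of ()))
    (QuotientGroup.mk' _) (QuotientGroup.mk'_surjective _) γ k hk
    (not_isOfFinOrder_of_isMulTorsionFree hγ) (QuotientGroup.ker_mk' _) ?_ ?_
  · intro P _ f p
    refine ⟨Monoid.Coprod.lift f (FreeGroup.lift (fun _ => p)), fun x => ?_, ?_⟩
    · exact Monoid.Coprod.lift_apply_inl _ _ _
    · rw [Monoid.Coprod.lift_apply_inr, FreeGroup.lift_apply_of]
  · intro Ψ Ψ' h1 h2
    apply Monoid.Coprod.hom_ext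
    · ext x
      exact h1 _
    · ext x
      exact h2

/-- In a free group `F` with a splitting `F = F₁ * ⟨α⟩`, `α` primitive, an
element `γ` is conjugate into a proper free factor of the splitting iff it is
conjugate to a power of `α` or conjugate into `F₁`.  Consequently, if
`G = ⟨F, s | s^k = γ⟩` with `γ` indivisible (not a proper power), `k ≥ 2`, and
`G` is free, then `γ` is a basis element of `F`. -/
theorem conjugate_into_factor_and_root_free (n : ℕ) :
    (∀ (F₁ : Subgroup (FreeGroup (Fin n))) (α : FreeGroup (Fin n)),
      IsBasisElem α → IsFreeDecomp F₁ α →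
      ∀ γ : FreeGroup (Fin n),
        ((∃ g, g * γ * g⁻¹ ∈ F₁ ∨ g * γ * g⁻¹ ∈ Subgroup.zpowers α) ↔
          ((∃ (g : FreeGroup (Fin n)) (k : ℤ), g * γ * g⁻¹ = α ^ k) ∨
            ∃ g, g * γ * g⁻¹ ∈ F₁))) ∧
    (∀ (γ : FreeGroup (Fin n)) (k : ℕ), 2 ≤ k →
      (∀ (u : FreeGroup (Fin n)) (j : ℕ), 2 ≤ j → u ^ j ≠ γ) →
      IsFreeGroup (RootAdj γ k) → IsBasisElem γ) := by
  refine ⟨?_, ?_⟩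
  · intro F₁ α _ _ γ
    constructor
    · rintro ⟨g, h | h⟩
      · exact Or.inr ⟨g, h⟩
      · obtain ⟨k, hk⟩ := Subgroup.mem_zpowers_iff.1 h
        exact Or.inl ⟨g, k, hk.symm⟩
    · rintro (⟨g, k, h⟩ | ⟨g, h⟩)
      · exact ⟨g, Or.inr (Subgroup.mem_zpowers_iff.2 ⟨k, h.symm⟩)⟩
      · exact ⟨g, Or.inl h⟩
  · intro γ k hk hdiv hfree
    have hγ : γ ≠ 1 := by
      intro h
      exact hdiv 1 2 le_rfl (by rw [h, one_pow])
    obtain ⟨B, hB1, hB2⟩ := P_of_free γ k hk hγ hfree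
    exact basis_of_P γ hγ B hB1 hB2
end
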